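/- arXiv:1608.04183 — 7 statements merged into one kernel-verified Lean document; each statement's English description precedes it below -/
import Mathlib

section
/- Let l be a prime number, G a finite group, A a normal subgroup of G whose order is coprime to l and whose index in G is a power of l, and C a simple F_l[G]-module whose dimension over F_l is finite and strictly greater than 1. Then the first group cohomology H^1(G, C) vanishes. -/
open groupCohomology in
/-- If `l` is prime, `G` a finite group with a normal subgroup `A` of order coprime
to `l` and of index a power of `l`, and `C` is a simple `𝔽_l[G]`-module of finite
`𝔽_l`-dimension strictly greater than `1`, then `H¹(G, C) = 0`. -/
theorem stmt_0 (l : ℕ) [hl : Fact l.Prime] (G : Type) [Group G] [Finite G]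
    (A : Subgroup G) [A.Normal] (hA : Nat.Coprime (Nat.card A) l)
    (hidx : ∃ k : ℕ, A.index = l ^ k)
    (C : Type) [AddCommGroup C] [Module (ZMod l) C]
    [DistribMulAction G C] [SMulCommClass G (ZMod l) C]
    [FiniteDimensional (ZMod l) C]
    (hdim : 1 < Module.finrank (ZMod l) C)
    (hsimple : ∀ W : Submodule (ZMod l) C,
      (∀ (g : G) (x : C), x ∈ W → g • x ∈ W) → W = ⊥ ∨ W = ⊤) :
    Subsingleton
      (groupCohomology (Rep.of (Representation.ofDistribMulAction (ZMod l) G C)) 1) := by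
  haveI : NeZero l := ⟨hl.out.ne_zero⟩
  obtain ⟨k, hk⟩ := hidx
  have hl0 : (Nat.card A : ZMod l) ≠ 0 := by
    intro h
    rw [ZMod.natCast_eq_zero_iff] at h
    exact hl.out.one_lt.ne' (Nat.eq_one_of_dvd_coprimes hA h dvd_rfl)
  -- the invariants of `A`
  let W : Submodule (ZMod l) C :=
    { carrier := {x | ∀ a ∈ A, a • x = x}
      add_mem' := by
        intro x y hx hy a ha
        rw [smul_add, hx a ha, hy a ha]
      zero_mem' := fun a _ => smul_zero a
      smul_mem' := by
        intro c x hx a ha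
        rw [smul_comm, hx a ha] }
  have hWmem : ∀ x, x ∈ W ↔ ∀ a ∈ A, a • x = x := fun x => Iff.rfl
  have hWstable : ∀ (g : G) (x : C), x ∈ W → g • x ∈ W := by
    intro g x hx a ha
    have h := hx (g⁻¹ * a * g) (by
      simpa using ‹A.Normal›.conj_mem a ha g⁻¹)
    calc a • g • x = g • ((g⁻¹ * a * g) • x) := by
          rw [smul_smul, smul_smul]; congr 1; group
      _ = g • x := by rw [h]
  have hW : W = ⊥ := by
    rcases hsimple W hWstable with h | h
    · exact h
    exfalso
    have htriv : ∀ a ∈ A, ∀ x : C, a • x = x := by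
      intro a ha x
      have : x ∈ W := h ▸ Submodule.mem_top
      exact this a ha
    let φ : G ⧸ A →* Equiv.Perm C := QuotientGroup.lift A (MulAction.toPermHom G C) (by
      intro a ha
      ext x
      exact htriv a ha x)
    letI : MulAction (G ⧸ A) C := MulAction.compHom C φ
    have hsm : ∀ (g : G) (x : C), (QuotientGroup.mk g : G ⧸ A) • x = g • x := fun g x => rfl
    have hP : IsPGroup l (G ⧸ A) := IsPGroup.of_card (n := k) (by rw [← hk]; rfl)
    haveI : Finite C := Module.finite_of_finite (ZMod l)
    have hdvd : l ∣ Nat.card C := by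
      rw [Module.natCard_eq_pow_finrank (K := ZMod l), Nat.card_zmod]
      exact dvd_pow_self l (by omega)
    obtain ⟨x, hx, hx0⟩ := hP.exists_fixed_point_of_prime_dvd_card_of_fixed_point C hdvd (a := 0) (by
      intro q
      induction q using QuotientGroup.induction_on with
      | H g => rw [hsm, smul_zero])
    have hxG : ∀ g : G, g • x = x := fun g => by rw [← hsm]; exact hx _
    rcases hsimple (Submodule.span (ZMod l) {x}) (by
      intro g y hy
      rw [Submodule.mem_span_singleton] at hy ⊢
      obtain ⟨c, rfl⟩ := hy
      exact ⟨c, by rw [smul_comm, hxG]⟩) with h1 | h1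
    · rw [Submodule.span_singleton_eq_bot] at h1
      exact hx0 h1.symm
    · have := finrank_span_singleton (K := ZMod l) (Ne.symm hx0)
      rw [h1, finrank_top] at this
      omega
  haveI : Fintype A := Fintype.ofFinite A
  have key : ∀ f : G → C, IsCocycle₁ f → IsCoboundary₁ f := by
    intro f hf
    let S : C := ∑ a : A, f a
    have hS : ∀ b : A, S = (b : G) • S + (Nat.card A : ZMod l) • f b := by
      intro b
      calc S = ∑ a : A, f ((b * a : A) : G) :=
            (Fintype.sum_equiv (Equiv.mulLeft b) _ _ (fun a => rfl)).symm
        _ = ∑ a : A, ((b : G) • f a + f b) :=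
            Finset.sum_congr rfl fun a _ => by rw [Subgroup.coe_mul, hf]
        _ = _ := by
            rw [Finset.sum_add_distrib, Finset.sum_const, ← Finset.smul_sum, Finset.card_univ,
              ← Nat.card_eq_fintype_card, Nat.cast_smul_eq_nsmul]
    let x : C := -((Nat.card A : ZMod l)⁻¹ • S)
    have hx : ∀ b ∈ A, b • x - x = f b := by
      intro b hb
      have h := hS ⟨b, hb⟩
      have h2 : f b = (Nat.card A : ZMod l)⁻¹ • (S - b • S) := by
        rw [eq_inv_smul_iff₀ hl0, eq_sub_iff_add_eq, add_comm]
        exact h.symm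
      rw [h2]
      simp only [x, smul_neg, smul_sub]
      rw [smul_comm b]
      abel
    let f' : G → C := fun g => f g - (g • x - x)
    have hf' : ∀ g h, f' (g * h) = g • f' h + f' g := by
      intro g h
      simp only [f', hf g h, smul_sub, mul_smul]
      abel
    have hf0 : ∀ a ∈ A, f' a = 0 := fun a ha => by simp only [f', hx a ha, sub_self]
    refine ⟨x, fun g => ?_⟩
    have : f' g ∈ W := by
      intro a ha
      have h1 := hf' a g
      have h2 := hf' g (g⁻¹ * a * g)
      rw [hf0 (g⁻¹ * a * g) (by simpa using ‹A.Normal›.conj_mem a ha g⁻¹), smul_zero, zero_add,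
        show g * (g⁻¹ * a * g) = a * g by group] at h2
      rw [hf0 a ha, add_zero] at h1
      rw [← h1, h2]
    rw [hW, Submodule.mem_bot] at this
    exact (sub_eq_zero.1 this).symm
  refine subsingleton_of_forall_eq 0 fun c => ?_
  refine H1_induction_on c fun z => (H1π_eq_zero_iff _).2 ?_
  exact (coboundariesOfIsCoboundary₁ (key _ (isCocycle₁_of_mem_cocycles₁ _ z.2))).2
end

section
/- Let l be a prime number, G a finite group, A a normal subgroup of G whose order is coprime to l and whose index in G is a power of l, and C a simple F_l[G]-module whose dimension over F_l is finite and strictly greater than 1. Then the second group cohomology H^2(G, C) vanishes. -/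
/-- Core computation: a 2-cocycle on `G` with values in a module killed by the norm of a normal
subgroup `A` becomes a coboundary after multiplication by the order of `A`. -/
theorem card_smul_cocycle_eq {G C : Type} [Group G] (A : Subgroup G) [A.Normal] [Fintype A]
    [AddCommGroup C] [DistribMulAction G C]
    (hN : ∀ x : C, ∑ a : A, (a : G) • x = 0) (f : G × G → C)
    (hf : ∀ g h j : G, f (g * h, j) + f (g, h) = g • f (h, j) + f (g, h * j)) (h j : G) :
    Fintype.card A • f (h, j) =
      h • (∑ a : A, f (j, a) - ∑ a : A, f (a, j))
        - (∑ a : A, f (h * j, a) - ∑ a : A, f (a, h * j))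
        + (∑ a : A, f (h, a) - ∑ a : A, f (a, h)) := by
  -- reindexing along conjugation
  have conj : ∀ (g : G) (φ : G → C), ∑ a : A, φ (a * g) = ∑ a : A, φ (g * a) := by
    intro g φ
    refine (Equiv.sum_comp (MulAut.conjNormal g : A ≃* A).toEquiv
      (fun a : A => φ (a * g))).symm.trans ?_
    refine Finset.sum_congr rfl fun a _ => ?_
    simp [MulAut.conjNormal_apply]
  have e1 : ∑ a : A, f (a * h, j) + ∑ a : A, f (a, h) = ∑ a : A, f (a, h * j) := by
    have := Finset.sum_congr (s₁ := (Finset.univ : Finset A)) rfl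
      (fun a _ => hf (a : G) h j)
    rw [Finset.sum_add_distrib, Finset.sum_add_distrib, hN, zero_add] at this
    exact this
  have e2 : ∑ a : A, f (h * a, j) + ∑ a : A, f (h, a)
      = h • ∑ a : A, f (a, j) + ∑ a : A, f (h, a * j) := by
    have := Finset.sum_congr (s₁ := (Finset.univ : Finset A)) rfl
      (fun a _ => hf h (a : G) j)
    rw [Finset.sum_add_distrib, Finset.sum_add_distrib, ← Finset.smul_sum] at this
    exact this
  have e3 : ∑ a : A, f (h * j, a) + Fintype.card A • f (h, j)
      = h • ∑ a : A, f (j, a) + ∑ a : A, f (h, j * a) := by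
    have := Finset.sum_congr (s₁ := (Finset.univ : Finset A)) rfl
      (fun a _ => hf h j (a : G))
    rw [Finset.sum_add_distrib, Finset.sum_add_distrib, ← Finset.smul_sum, Finset.sum_const,
      Finset.card_univ] at this
    exact this
  have c1 := conj h (fun x => f (x, j))
  have c2 := conj j (fun x => f (h, x))
  rw [c1] at e1
  rw [c2] at e2
  rw [smul_sub]
  have e3' := eq_sub_of_add_eq' e3
  have e2' := eq_sub_of_add_eq' e2.symm
  rw [e3', e2', ← e1]
  abel

/-- If `C` is simple of dimension greater than one, then `A` has no nonzero fixed vectors. -/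
theorem fixed_eq_zero (l : ℕ) [hl : Fact l.Prime] (G : Type) [Group G] [Finite G]
    (A : Subgroup G) [A.Normal]
    (hidx : ∃ k : ℕ, A.index = l ^ k)
    (C : Type) [AddCommGroup C] [Module (ZMod l) C]
    [DistribMulAction G C] [SMulCommClass G (ZMod l) C]
    [FiniteDimensional (ZMod l) C]
    (hdim : 1 < Module.finrank (ZMod l) C)
    (hsimple : ∀ W : Submodule (ZMod l) C,
      (∀ (g : G) (x : C), x ∈ W → g • x ∈ W) → W = ⊥ ∨ W = ⊤)
    (x : C) (hx : ∀ a ∈ A, a • x = x) : x = 0 := by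
  let W : Submodule (ZMod l) C :=
    { carrier := {x | ∀ a ∈ A, a • x = x}
      add_mem' := fun {x y} hx hy a ha => by rw [smul_add, hx a ha, hy a ha]
      zero_mem' := fun a _ => smul_zero a
      smul_mem' := fun c x hx a ha => by rw [smul_comm, hx a ha] }
  have hW : ∀ x, x ∈ W ↔ ∀ a ∈ A, a • x = x := fun _ => Iff.rfl
  rcases hsimple W (by
    intro g x hx a ha
    have h1 := hx (g⁻¹ * a * g) (by simpa using ‹A.Normal›.conj_mem a ha g⁻¹)
    have h2 : a • g • x = g • (g⁻¹ * a * g) • x := by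
      simp only [smul_smul]; congr 1; group
    rw [h2, h1]) with h | h
  · exact (Submodule.mem_bot (ZMod l)).1 (h ▸ (hW x).2 hx)
  exfalso
  have : Finite C := Module.finite_of_finite (ZMod l)
  let P : Sylow l G := default
  have hcard : l ∣ Nat.card C := by
    rw [Module.natCard_eq_pow_finrank (K := ZMod l), Nat.card_zmod]
    exact dvd_pow_self _ (by omega)
  obtain ⟨v, hv, hv0⟩ := P.isPGroup'.exists_fixed_point_of_prime_dvd_card_of_fixed_point C hcard
    (a := 0) (fun g => smul_zero g)
  have hst : MulAction.stabilizer G v = ⊤ := by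
    rw [← Subgroup.index_eq_one]
    obtain ⟨k, hk⟩ := hidx
    have h1 : (MulAction.stabilizer G v).index ∣ l ^ k := by
      rw [← hk]
      apply Subgroup.index_dvd_of_le
      intro a ha
      exact (hW v).1 (h ▸ Submodule.mem_top) a ha
    have h2 : (MulAction.stabilizer G v).index ∣ (P : Subgroup G).index := by
      apply Subgroup.index_dvd_of_le
      intro a ha
      exact hv ⟨a, ha⟩
    have h3 : ¬ l ∣ (P : Subgroup G).index := P.not_dvd_index
    have h4 : Nat.Coprime (l ^ k) (P : Subgroup G).index :=
      Nat.Coprime.pow_left _ ((Nat.Prime.coprime_iff_not_dvd hl.out).2 h3)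
    exact Nat.dvd_one.1 (h4 ▸ Nat.dvd_gcd h1 h2)
  have hfix : ∀ g : G, g • v = v := fun g =>
    MulAction.mem_stabilizer_iff.1 (hst ▸ Subgroup.mem_top g)
  rcases hsimple (Submodule.span (ZMod l) {v}) (by
    intro g x hx
    obtain ⟨c, rfl⟩ := Submodule.mem_span_singleton.1 hx
    rw [smul_comm, hfix]; exact hx) with h' | h'
  · exact hv0 (Submodule.span_singleton_eq_bot.1 h').symm
  · have := finrank_span_singleton (K := ZMod l) (Ne.symm hv0)
    rw [h', finrank_top] at this
    omega

/-- If `l` is prime, `G` a finite group with a normal subgroup `A` of order coprime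
to `l` and of index a power of `l`, and `C` is a simple `𝔽_l[G]`-module of finite
`𝔽_l`-dimension strictly greater than `1`, then `H²(G, C) = 0`. -/
theorem stmt_1 (l : ℕ) [hl : Fact l.Prime] (G : Type) [Group G] [Finite G]
    (A : Subgroup G) [A.Normal] (hA : Nat.Coprime (Nat.card A) l)
    (hidx : ∃ k : ℕ, A.index = l ^ k)
    (C : Type) [AddCommGroup C] [Module (ZMod l) C]
    [DistribMulAction G C] [SMulCommClass G (ZMod l) C]
    [FiniteDimensional (ZMod l) C]
    (hdim : 1 < Module.finrank (ZMod l) C)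
    (hsimple : ∀ W : Submodule (ZMod l) C,
      (∀ (g : G) (x : C), x ∈ W → g • x ∈ W) → W = ⊥ ∨ W = ⊤) :
    Subsingleton
      (groupCohomology (Rep.of (Representation.ofDistribMulAction (ZMod l) G C)) 2) := by
  classical
  have : Fintype A := Fintype.ofFinite A
  have hN : ∀ x : C, ∑ a : A, (a : G) • x = 0 := by
    intro x
    apply fixed_eq_zero l G A hidx C hdim hsimple
    intro b hb
    rw [Finset.smul_sum]
    refine (Finset.sum_congr rfl fun a _ => ?_).trans
      (Equiv.sum_comp (Equiv.mulLeft (⟨b, hb⟩ : A)) (fun a : A => (a : G) • x))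
    simp [mul_smul]
  have hunit : ((Fintype.card A : ℕ) : ZMod l) ≠ 0 := by
    rw [Ne, ZMod.natCast_eq_zero_iff, ← Nat.card_eq_fintype_card]
    exact (Nat.Prime.coprime_iff_not_dvd hl.out).1 hA.symm
  refine subsingleton_of_forall_eq 0 fun y => ?_
  induction y using groupCohomology.H2_induction_on with
  | h f =>
    rw [groupCohomology.H2π_eq_zero_iff]
    have hf := (groupCohomology.mem_cocycles₂_iff f).1 f.2
    have key := card_smul_cocycle_eq (C := C) A hN f hf
    let F : G → C := fun g => ∑ a : A, f (g, a) - ∑ a : A, f (a, g)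
    refine ⟨fun g => ((Fintype.card A : ℕ) : ZMod l)⁻¹ • F g, funext fun ⟨h, j⟩ => ?_⟩
    have key' : (f (h, j) : C) =
        ((Fintype.card A : ℕ) : ZMod l)⁻¹ • (h • F j - F (h * j) + F h) := by
      rw [eq_inv_smul_iff₀ hunit, Nat.cast_smul_eq_nsmul]
      exact key h j
    refine Eq.trans ?_ key'.symm
    change h • (((Fintype.card A : ℕ) : ZMod l)⁻¹ • F j)
      - ((Fintype.card A : ℕ) : ZMod l)⁻¹ • F (h * j)
      + ((Fintype.card A : ℕ) : ZMod l)⁻¹ • F h = _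
    rw [smul_comm h, smul_add, smul_sub _ (h • F j)]
end

section
/- Let l be a prime number, G a finite group possessing a normal subgroup A whose order is coprime to l and whose index in G is a power of l. Let Γ be a group and π : Γ → G a surjective group homomorphism whose kernel C is a finite abelian group in which every element satisfies x^l = 1, so that the conjugation action of Γ on C factors through G and makes C an F_l[G]-module; assume this module is simple of F_l-dimension strictly greater than 1. Then π admits a section: there exists a group homomorphism σ : G → Γ with π ∘ σ = id_G. -/
theorem aux_section {X Y : Type*} [Group X] [Group Y] (f : X →* Y) (K : Subgroup X)
    (hs : ∀ y, ∃ k ∈ K, f k = y) (hi : ∀ k ∈ K, f k = 1 → k = 1) :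
    ∃ σ : Y →* X, f.comp σ = MonoidHom.id Y := by
  have hb : Function.Bijective (f.comp K.subtype) := by
    constructor
    · rw [injective_iff_map_eq_one]
      rintro ⟨k, hk⟩ h
      exact Subtype.ext (hi k hk h)
    · intro y
      obtain ⟨k, hk, h⟩ := hs y
      exact ⟨⟨k, hk⟩, h⟩
  let e := MulEquiv.ofBijective _ hb
  refine ⟨K.subtype.comp e.symm.toMonoidHom, ?_⟩
  ext y
  exact e.apply_symm_apply y

theorem aux_sz {X Y : Type*} [Group X] [Group Y] (f : X →* Y)
    (hf : Function.Surjective f) (hc : Nat.Coprime (Nat.card f.ker) (Nat.card Y)) :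
    ∃ σ : Y →* X, f.comp σ = MonoidHom.id Y := by
  have hidx : f.ker.index = Nat.card Y := by
    rw [Subgroup.index_ker, MonoidHom.range_eq_top.2 hf, Subgroup.card_top]
  obtain ⟨K, hK⟩ := Subgroup.exists_right_complement'_of_coprime (N := f.ker) (hidx ▸ hc)
  refine aux_section f K ?_ ?_
  · intro y
    obtain ⟨x, rfl⟩ := hf y
    have hx : x ∈ f.ker ⊔ K := by rw [hK.sup_eq_top]; trivial
    obtain ⟨c, hc, k, hk, rfl⟩ := Subgroup.mem_sup_of_normal_left.1 hx
    exact ⟨k, hk, by rw [map_mul, MonoidHom.mem_ker.1 hc, one_mul]⟩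
  · intro k hk h
    exact (Subgroup.disjoint_def.1 hK.disjoint) h hk

/-- Two lifts of `A` are conjugate under the kernel. -/
theorem aux_conj (l : ℕ) {G Γ : Type*} [Group G] [Finite G] [Group Γ]
    (A : Subgroup G) (hA : Nat.Coprime (Nat.card A) l) (π : Γ →* G)
    (hab : ∀ x y : Γ, x ∈ π.ker → y ∈ π.ker → x * y = y * x)
    (hexp : ∀ x : Γ, x ∈ π.ker → x ^ l = 1)
    (s t : A →* Γ) (hs : ∀ a, π (s a) = a) (ht : ∀ a, π (t a) = a) :
    ∃ c ∈ π.ker, ∀ a, t a = c * s a * c⁻¹ := by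
  classical
  have := Fintype.ofFinite A
  letI : CommGroup π.ker :=
    { (inferInstance : Group π.ker) with
      mul_comm := fun x y => Subtype.ext (hab x y x.2 y.2) }
  let d : A → π.ker := fun a => ⟨t a * (s a)⁻¹, by simp [MonoidHom.mem_ker, hs, ht]⟩
  let φ : A → (π.ker →* π.ker) := fun a => (MulAut.conjNormal (s a)).toMonoidHom
  have hφ : ∀ a x, ((φ a x : π.ker) : Γ) = s a * x * (s a)⁻¹ := fun a x => by
    exact MulAut.conjNormal_apply (s a) x
  have hd : ∀ a b, d (a * b) = d a * φ a (d b) := by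
    intro a b
    apply Subtype.ext
    rw [Subgroup.coe_mul, hφ]
    simp only [d, map_mul]
    group
  let e : π.ker := ∏ b, d b
  have he : ∀ a, e = d a ^ (Nat.card A) * φ a e := by
    intro a
    have h1 : e = ∏ b, d (a * b) := (Equiv.prod_comp (Equiv.mulLeft a) d).symm
    refine h1.trans ?_
    simp only [hd, Finset.prod_mul_distrib, Finset.prod_const, Finset.card_univ,
      Nat.card_eq_fintype_card]
    rw [← map_prod]
  have hpow : ∀ x : π.ker, x ^ l = 1 := fun x => Subtype.ext (by simpa using hexp x x.2)
  have hbez : ∀ x : π.ker, (x ^ (Nat.card A)) ^ (Nat.gcdA (Nat.card A) l) = x := by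
    intro x
    have h := Nat.gcd_eq_gcd_ab (Nat.card A) l
    rw [hA.gcd_eq_one] at h
    rw [← zpow_natCast, ← zpow_mul]
    have h2 : ((Nat.card A : ℤ)) * Nat.gcdA (Nat.card A) l
      = 1 - l * Nat.gcdB (Nat.card A) l := by push_cast at h; linarith
    rw [h2, zpow_sub, zpow_mul, zpow_natCast, hpow]
    simp
  let c := e ^ (Nat.gcdA (Nat.card A) l)
  have hc : ∀ a, c = d a * φ a c := by
    intro a
    change e ^ _ = _ * φ a (e ^ _)
    conv_lhs => rw [he a]
    rw [mul_zpow, hbez, map_zpow]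
  refine ⟨c, c.2, fun a => ?_⟩
  have h := congrArg (Subtype.val) (hc a)
  rw [Subgroup.coe_mul, hφ] at h
  simp only [d] at h
  have h3 : (c : Γ) = t a * c * (s a)⁻¹ := by
    rw [h]; rw [← h]; simpa [mul_assoc] using h
  rw [eq_mul_inv_iff_mul_eq]
  conv_rhs => rw [h3]
  group

/-- Elements of the kernel fixed by the preimage of `A` are trivial. -/
theorem aux_fixed (l : ℕ) [hl : Fact l.Prime] {G : Type*} [Group G] [Finite G]
    (A : Subgroup G) [A.Normal]
    (hidx : ∃ k : ℕ, A.index = l ^ k)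
    {Γ : Type*} [Group Γ] (π : Γ →* G) (hπ : Function.Surjective π)
    [Finite π.ker]
    (hexp : ∀ x : Γ, x ∈ π.ker → x ^ l = 1)
    (hdim : ∃ d : ℕ, Nat.card π.ker = l ^ d ∧ 1 < d)
    (hsimple : ∀ H : Subgroup Γ, H ≤ π.ker →
      (∀ γ : Γ, ∀ x ∈ H, γ * x * γ⁻¹ ∈ H) → H = ⊥ ∨ H = π.ker)
    (x : Γ) (hx : x ∈ π.ker) (hfix : ∀ γ, π γ ∈ A → γ * x = x * γ) : x = 1 := by
  let H : Subgroup Γ := π.ker ⊓ Subgroup.centralizer (A.comap π : Set Γ)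
  have hH := hsimple H inf_le_left (by
    rintro γ y ⟨hy1, hy2⟩
    exact ⟨Subgroup.Normal.conj_mem inferInstance _ hy1 _,
      Subgroup.Normal.conj_mem inferInstance _ hy2 _⟩)
  have hxH : x ∈ H := ⟨hx, by
    refine Subgroup.mem_centralizer_iff.2 ?_
    intro γ hγ
    exact hfix γ hγ⟩
  rcases hH with hH | hH
  · rw [hH] at hxH
    exact hxH
  exfalso
  obtain ⟨k, hk⟩ := hidx
  obtain ⟨d, hcard, hd⟩ := hdim
  let f : (Γ ⧸ A.comap π) →* MulAut π.ker := QuotientGroup.lift _ MulAut.conjNormal (by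
    intro γ hγ
    ext ⟨y, hy⟩
    rw [MulAut.conjNormal_apply]
    have hy' := hy
    rw [← hH] at hy'
    have := (Subgroup.mem_centralizer_iff.1 hy'.2) γ hγ
    simp [this])
  letI : MulAction (Γ ⧸ A.comap π) π.ker := MulAction.compHom _ f
  have hP : IsPGroup l (Γ ⧸ A.comap π) := by
    apply IsPGroup.of_card (n := k)
    rw [← hk, ← Subgroup.index_comap_of_surjective A hπ]
    rfl
  obtain ⟨b, hb, hne⟩ := hP.exists_fixed_point_of_prime_dvd_card_of_fixed_point π.ker
    (by rw [hcard]; exact dvd_pow_self _ (by omega)) (a := 1) (by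
      intro q
      exact map_one (f q))
  have hbγ : ∀ γ : Γ, γ * b * γ⁻¹ = b := by
    intro γ
    have := congrArg Subtype.val (hb (QuotientGroup.mk γ))
    rw [← MulAut.conjNormal_apply γ b]
    exact this
  have hz := hsimple (Subgroup.zpowers (b : Γ)) (by simp) (by
    rintro γ y ⟨n, rfl⟩
    refine ⟨n, ?_⟩
    simp only
    rw [← conj_zpow, hbγ])
  rcases hz with hz | hz
  · rw [Subgroup.zpowers_eq_bot] at hz
    exact hne (Subtype.ext hz.symm)
  · have h1 := Nat.card_zpowers (b : Γ)
    rw [hz, hcard] at h1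
    have h2 := orderOf_dvd_of_pow_eq_one (hexp b b.2)
    rw [← h1] at h2
    have h3 := (Nat.pow_dvd_pow_iff_le_right hl.out.one_lt (k := d) (l := 1)).1 (by simpa using h2)
    omega


/-- If `l` is prime, `G` a finite group with a normal subgroup `A` of order coprime to `l`
and of index a power of `l`, and `π : Γ → G` is a surjective homomorphism whose kernel `C`
is a finite abelian group of exponent dividing `l` which, as an `𝔽_l[G]`-module under
conjugation, is simple of dimension `> 1` (i.e. of cardinality `l ^ d` with `d > 1`,
having no `Γ`-stable proper nontrivial subgroups), then `π` admits a section. -/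
theorem stmt_2 (l : ℕ) [hl : Fact l.Prime] (G : Type) [Group G] [Finite G]
    (A : Subgroup G) [A.Normal] (hA : Nat.Coprime (Nat.card A) l)
    (hidx : ∃ k : ℕ, A.index = l ^ k)
    (Γ : Type) [Group Γ] (π : Γ →* G) (hπ : Function.Surjective π)
    [Finite π.ker]
    (hab : ∀ x y : Γ, x ∈ π.ker → y ∈ π.ker → x * y = y * x)
    (hexp : ∀ x : Γ, x ∈ π.ker → x ^ l = 1)
    (hdim : ∃ d : ℕ, Nat.card π.ker = l ^ d ∧ 1 < d)
    (hsimple : ∀ H : Subgroup Γ, H ≤ π.ker →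
      (∀ γ : Γ, ∀ x ∈ H, γ * x * γ⁻¹ ∈ H) → H = ⊥ ∨ H = π.ker) :
    ∃ σ : G →* Γ, π.comp σ = MonoidHom.id G := by

  have hs : ∃ s : A →* Γ, ∀ a, π (s a) = a := by
    have hsurj : Function.Surjective (π.subgroupComap A) :=
      π.subgroupComap_surjective_of_surjective A hπ
    obtain ⟨d, hd, -⟩ := hdim
    have hker : Nat.card (π.subgroupComap A).ker = Nat.card π.ker := by
      refine Nat.card_congr ⟨fun x => ⟨x.1.1, ?_⟩, fun x => ⟨⟨x.1, ?_⟩, ?_⟩, ?_, ?_⟩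
      · exact congrArg Subtype.val x.2
      · rw [Subgroup.mem_comap, MonoidHom.mem_ker.1 x.2]; exact one_mem _
      · exact Subtype.ext x.2
      · intro x; rfl
      · intro x; rfl
    obtain ⟨σ, hσ⟩ := aux_sz (π.subgroupComap A) hsurj (by
      rw [hker, hd]; exact (hA.pow_right d).symm)
    refine ⟨(A.comap π).subtype.comp σ, fun a => ?_⟩
    exact congrArg Subtype.val (DFunLike.congr_fun hσ a)
  obtain ⟨s, hs⟩ := hs
  let K : Subgroup Γ := s.range
  have hinj : ∀ k ∈ K, π k = 1 → k = 1 := by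
    rintro _ ⟨a, rfl⟩ h
    rw [hs] at h
    rw [show a = 1 from Subtype.ext h, map_one]
  refine aux_section π (Subgroup.normalizer (K : Set Γ)) ?_ ?_
  · intro y
    obtain ⟨g, rfl⟩ := hπ y
    let t : A →* Γ := (MulAut.conj g).toMonoidHom.comp
      (s.comp (MulAut.conjNormal (π g)⁻¹).toMonoidHom)
    have ht' : ∀ a, t a = g * s (MulAut.conjNormal (π g)⁻¹ a) * g⁻¹ := fun a => rfl
    obtain ⟨c, hc, h⟩ := aux_conj l A hA π hab hexp s t hs (by
      intro a
      rw [ht', map_mul, map_mul, hs, MulAut.conjNormal_apply, map_inv]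
      group)
    refine ⟨c⁻¹ * g, ?_, by rw [map_mul, map_inv, MonoidHom.mem_ker.1 hc]; simp⟩
    have key : ∀ a, (c⁻¹ * g) * s (MulAut.conjNormal (π g)⁻¹ a) * (c⁻¹ * g)⁻¹ = s a := by
      intro a
      have := h a
      rw [ht'] at this
      calc _ = c⁻¹ * (g * s (MulAut.conjNormal (π g)⁻¹ a) * g⁻¹) * c := by group
        _ = _ := by rw [this]; group
    rw [Subgroup.mem_normalizer_iff]
    intro x
    constructor
    · rintro ⟨a, rfl⟩
      refine ⟨MulAut.conjNormal (π g) a, ?_⟩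
      rw [← key]
      congr 3
      rw [map_inv, MulAut.inv_apply_self]
    · rintro ⟨a, ha⟩
      refine ⟨MulAut.conjNormal (π g)⁻¹ a, ?_⟩
      have := key a
      rw [ha] at this
      simpa using this
  · intro c hc hc1
    refine aux_fixed l A hidx π hπ hexp hdim hsimple c hc1 ?_
    have hcomm : ∀ a, s a * c = c * s a := by
      intro a
      have h1 : c * s a * c⁻¹ ∈ K := (Subgroup.mem_normalizer_iff.1 hc _).1 ⟨a, rfl⟩
      have h2 := hinj _ (mul_mem h1 (inv_mem (⟨a, rfl⟩ : s a ∈ K))) (by simp [hc1])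
      have h3 := mul_inv_eq_one.1 h2
      exact (mul_inv_eq_iff_eq_mul.1 h3).symm
    intro γ hγ
    have hz : γ * (s ⟨π γ, hγ⟩)⁻¹ ∈ π.ker := by simp [MonoidHom.mem_ker, hs]
    have h4 := hab _ c hz hc1
    have h5 := hcomm ⟨π γ, hγ⟩
    calc γ * c = (γ * (s ⟨π γ, hγ⟩)⁻¹) * (s ⟨π γ, hγ⟩ * c) := by group
      _ = (γ * (s ⟨π γ, hγ⟩)⁻¹ * c) * s ⟨π γ, hγ⟩ := by rw [h5]; group
      _ = c * γ := by rw [h4]; group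
end

section
/- Let l be a prime number, G a finite group possessing a normal subgroup A whose order is coprime to l and whose index in G is a power of l. Let Γ be a group and π : Γ → G a surjective group homomorphism whose kernel C is a finite abelian group in which every element satisfies x^l = 1, and assume that the F_l[G]-module structure on C given by conjugation is simple of F_l-dimension strictly greater than 1. Then any two sections of π are conjugate: if σ, σ' : G → Γ are group homomorphisms with π ∘ σ = id_G and π ∘ σ' = id_G, then there exists γ ∈ Γ such that σ'(g) = γ σ(g) γ⁻¹ for all g ∈ G. -/
/-- Averaging: the two sections are conjugate on the subgroup of order prime to `l`. -/
lemma avg_aux (l : ℕ) [hl : Fact l.Prime] (G : Type) [Group G] [Finite G]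
    (A : Subgroup G) (hA : Nat.Coprime (Nat.card A) l)
    (Γ : Type) [Group Γ] (π : Γ →* G)
    (hab : ∀ x y : Γ, x ∈ π.ker → y ∈ π.ker → x * y = y * x)
    (hexp : ∀ x : Γ, x ∈ π.ker → x ^ l = 1)
    (σ σ' : G →* Γ) (hs : ∀ g, π (σ g) = g) (hs' : ∀ g, π (σ' g) = g) :
    ∃ γ ∈ π.ker, ∀ a ∈ A, σ' a = γ * σ a * γ⁻¹ := by
  classical
  let _ : CommGroup π.ker :=
    { (inferInstance : Group π.ker) with
      mul_comm := fun x y => Subtype.ext (hab x y x.2 y.2) }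
  have : Fintype A := Fintype.ofFinite A
  let f : G → π.ker := fun g => ⟨σ' g * (σ g)⁻¹, by rw [MonoidHom.mem_ker]; simp [hs, hs']⟩
  let ρ : Γ →* MulAut π.ker := MulAut.conjNormal
  have hf : ∀ g h, f (g * h) = f g * ρ (σ g) (f h) := by
    intro g h
    apply Subtype.ext
    simp only [f, ρ, Subgroup.coe_mul, MulAut.conjNormal_apply, map_mul]
    group
  let P : π.ker := ∏ b : A, f b
  have hP : ∀ a : A, P = f a ^ (Nat.card A) * ρ (σ a) P := by
    intro a
    have h1 : P = ∏ b : A, f ((a * b : A) : G) :=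
      (Fintype.prod_equiv (Equiv.mulLeft a) _ _ (fun b => rfl)).symm
    calc P = ∏ b : A, f ((a * b : A) : G) := h1
      _ = ∏ b : A, (f a * ρ (σ a) (f b)) := by
        refine Finset.prod_congr rfl fun b _ => ?_
        rw [Subgroup.coe_mul, hf]
      _ = _ := by
        rw [Finset.prod_mul_distrib, Finset.prod_const, Finset.card_univ, map_prod,
          Nat.card_eq_fintype_card]
  obtain ⟨m, -, hm⟩ := Nat.exists_mul_mod_eq_one_of_coprime hA hl.out.one_lt
  refine ⟨(P ^ m : π.ker), (P ^ m).2, fun a ha => ?_⟩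
  have hfl : f a ^ (Nat.card A * m) = f a := by
    have h1 : f a ^ l = 1 := Subtype.ext (hexp _ (f a).2)
    rw [← Nat.div_add_mod (Nat.card A * m) l, hm, pow_add, pow_mul, h1, one_pow, one_mul, pow_one]
  have h2 : P ^ m = f a * ρ (σ a) (P ^ m) := by
    conv_lhs => rw [hP ⟨a, ha⟩]
    rw [mul_pow, ← pow_mul, hfl, map_pow]
  have h3 := congrArg Subtype.val h2
  generalize P ^ m = Q at h3 ⊢
  have h4 : (Q : Γ) = (σ' a * (σ a)⁻¹) * (σ a * Q * (σ a)⁻¹) := h3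
  have h5 : (Q : Γ) * σ a = σ' a * Q := by
    conv_lhs => rw [h4]
    group
  rw [h5]; group

/-- In the situation of the previous statement (kernel `C = ker π` a finite abelian group of
exponent dividing `l`, simple of `𝔽_l`-dimension `> 1` as `𝔽_l[G]`-module under conjugation),
any two sections of `π` are conjugate by an element of `Γ`. -/
theorem stmt_3 (l : ℕ) [hl : Fact l.Prime] (G : Type) [Group G] [Finite G]
    (A : Subgroup G) [A.Normal] (hA : Nat.Coprime (Nat.card A) l)
    (hidx : ∃ k : ℕ, A.index = l ^ k)
    (Γ : Type) [Group Γ] (π : Γ →* G) (hπ : Function.Surjective π)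
    [Finite π.ker]
    (hab : ∀ x y : Γ, x ∈ π.ker → y ∈ π.ker → x * y = y * x)
    (hexp : ∀ x : Γ, x ∈ π.ker → x ^ l = 1)
    (hdim : ∃ d : ℕ, Nat.card π.ker = l ^ d ∧ 1 < d)
    (hsimple : ∀ H : Subgroup Γ, H ≤ π.ker →
      (∀ γ : Γ, ∀ x ∈ H, γ * x * γ⁻¹ ∈ H) → H = ⊥ ∨ H = π.ker)
    (σ σ' : G →* Γ) (hσ : π.comp σ = MonoidHom.id G) (hσ' : π.comp σ' = MonoidHom.id G) :
    ∃ γ : Γ, ∀ g : G, σ' g = γ * σ g * γ⁻¹ := by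
  have hs : ∀ g, π (σ g) = g := fun g => DFunLike.congr_fun hσ g
  have hs' : ∀ g, π (σ' g) = g := fun g => DFunLike.congr_fun hσ' g
  obtain ⟨γ, hγk, hγ⟩ := avg_aux l G A hA Γ π hab hexp σ σ' hs hs'
  let H : Subgroup Γ := π.ker ⊓ Subgroup.centralizer (A.comap π : Set Γ)
  have hH : H = ⊥ ∨ H = π.ker := by
    apply hsimple H inf_le_left
    intro g x hx
    have hn : H.Normal := inferInstance
    exact hn.conj_mem x hx g
  rcases hH with hH | hH
  · refine ⟨γ, fun g => ?_⟩
    have key : σ' g * (γ * σ g * γ⁻¹)⁻¹ ∈ H := by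
      have hk : σ' g * (γ * σ g * γ⁻¹)⁻¹ ∈ π.ker := by
        rw [MonoidHom.mem_ker] at hγk ⊢
        simp [hs, hs', hγk]
      refine ⟨hk, ?_⟩
      refine Subgroup.mem_centralizer_iff.mpr ?_
      intro y hy
      have hy : π y ∈ A := hy
      have hy2 : y * (σ' (π y))⁻¹ ∈ π.ker := by
        rw [MonoidHom.mem_ker]; simp [hs']
      have h1 := hab _ _ hy2 hk
      have ha' : g⁻¹ * π y * g ∈ A := by
        have := (inferInstance : A.Normal).conj_mem _ hy g⁻¹
        simpa using this
      have e1 := hγ _ hy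
      have e2 := hγ _ ha'
      simp only [map_mul, map_inv] at e2
      set a := σ' (π y)
      set s := σ' g
      set t := σ g
      set b := σ (π y)
      set e := s * (γ * t * γ⁻¹)⁻¹ with he
      have h2 : a * e = e * a := by
        have e3 : a * s = s * (γ * (t⁻¹ * b * t) * γ⁻¹) := by
          rw [← e2]; group
        calc a * e = (a * s) * (γ * t * γ⁻¹)⁻¹ := by rw [he]; group
          _ = e * (γ * b * γ⁻¹) := by rw [e3, he]; group
          _ = e * a := by rw [← e1]
      calc y * e = (y * a⁻¹) * (a * e) := by group
        _ = ((y * a⁻¹) * e) * a := by rw [h2]; group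
        _ = e * y := by rw [h1]; group
    rw [hH, Subgroup.mem_bot] at key
    exact mul_inv_eq_one.mp key
  · exfalso
    obtain ⟨k, hk⟩ := hidx
    obtain ⟨d, hd, hd1⟩ := hdim
    let ρ : Γ →* MulAut π.ker := MulAut.conjNormal
    have hR : IsPGroup l ρ.range := by
      rintro ⟨_, y, rfl⟩
      refine ⟨k, ?_⟩
      have hmem : y ^ (l ^ k) ∈ A.comap π := by
        rw [Subgroup.mem_comap, map_pow, ← hk]
        exact A.pow_index_mem _
      apply Subtype.ext
      simp only [Subgroup.coe_pow, Subgroup.coe_one]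
      rw [← map_pow]
      ext x
      have hx : (x : Γ) ∈ H := by rw [hH]; exact x.2
      have := Subgroup.mem_centralizer_iff.mp hx.2 _ hmem
      simp only [ρ, MulAut.conjNormal_apply, MulAut.one_apply]
      rw [this]; group
    have hdvd : l ∣ Nat.card π.ker := by
      rw [hd]; exact dvd_pow_self l (by omega)
    have h1fix : (1 : π.ker) ∈ MulAction.fixedPoints ρ.range π.ker := by
      intro r; exact smul_one r
    obtain ⟨b, hb, hb1⟩ := hR.exists_fixed_point_of_prime_dvd_card_of_fixed_point _ hdvd h1fix
    have hbc : ∀ y : Γ, y * b * y⁻¹ = b := by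
      intro y
      have := hb ⟨ρ y, y, rfl⟩
      have := congrArg (Subtype.val) this
      exact this
    rcases hsimple (Subgroup.zpowers (b : Γ)) (by simp) (by
      rintro y _ ⟨n, rfl⟩
      refine ⟨n, ?_⟩
      simp only
      rw [← conj_zpow, hbc]) with h | h
    · rw [Subgroup.zpowers_eq_bot] at h
      exact hb1 (Subtype.ext h.symm)
    · have hc : orderOf (b : Γ) = l ^ d := by
        rw [← Nat.card_zpowers, h, hd]
      have hdv : l ^ d ∣ l ^ 1 := by
        rw [← hc, pow_one]; exact orderOf_dvd_of_pow_eq_one (hexp _ b.2)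
      have := (Nat.pow_dvd_pow_iff_le_right hl.out.one_lt).mp hdv
      omega
end

section
/- Fix a prime p and an integer n ≥ 1, and set e_n = p^n − 1. Fix an algebraic closure Ω of the p-adic field ℚ_p, let K_n = ℚ_p(ζ) ⊆ Ω where ζ ∈ Ω is a primitive e_n-th root of unity, and let L_n ⊆ Ω be the field generated over K_n by all x ∈ Ω with x^{e_n} ∈ K_n. Then L_n is a finite Galois extension of ℚ_p and [L_n : ℚ_p] = s_n · (p^n − 1)², where s_n is the multiplicative order of p modulo p^n − 1. -/
open Polynomial

theorem natDegree_minpoly_zmod (p : ℕ) [hp : Fact p.Prime] (k : Type) [Field k]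
    [Algebra (ZMod p) k] (m : ℕ) (hm : m ≠ 0) (w : k) (hw : IsPrimitiveRoot w m) :
    (minpoly (ZMod p) w).natDegree = orderOf (p : ZMod m) := by
  have hintg : IsIntegral (ZMod p) w := by
    refine ⟨X ^ m - C 1, monic_X_pow_sub_C _ hm, ?_⟩
    simp [hw.pow_eq_one]
  have : FiniteDimensional (ZMod p) (IntermediateField.adjoin (ZMod p) {w}) :=
    IntermediateField.adjoin.finiteDimensional hintg
  have : Finite (IntermediateField.adjoin (ZMod p) {w}) := Module.finite_of_finite (ZMod p)
  rw [← IntermediateField.adjoin.finrank hintg, ← FiniteField.orderOf_frobeniusAlgHom]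
  have key : ∀ d : ℕ, (FiniteField.frobeniusAlgHom (ZMod p)
      (IntermediateField.adjoin (ZMod p) {w})) ^ d = 1 ↔ (p : ZMod m) ^ d = 1 := by
    intro d
    have h1 : (p : ZMod m) ^ d = 1 ↔ w ^ (p ^ d) = w := by
      obtain ⟨u, rfl⟩ := hw.isUnit hm
      have : (u : k) ^ (p ^ d) = u ↔ u ^ (p ^ d) = u ^ 1 := by
        rw [pow_one, ← Units.val_inj, Units.val_pow_eq_pow_val]
      rw [this, pow_inj_mod, ← orderOf_units, ← hw.eq_orderOf, ← Nat.cast_one, ← Nat.cast_pow,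
        ZMod.natCast_eq_natCast_iff']
    have h2 : ∀ y : IntermediateField.adjoin (ZMod p) {w}, ((FiniteField.frobeniusAlgHom (ZMod p)
      (IntermediateField.adjoin (ZMod p) {w})) ^ d) y = y ^ (p ^ d) := by
      intro y
      rw [AlgHom.coe_pow, FiniteField.coe_frobeniusAlgHom, pow_iterate]
      simp
    rw [h1]
    constructor
    · intro h
      have := h2 (IntermediateField.AdjoinSimple.gen (ZMod p) w)
      rw [h] at this
      have := congrArg (algebraMap _ k) this
      simpa using this.symm
    · intro h
      apply IntermediateField.algHom_ext_of_eq_adjoin (s := {w}) (ZMod p) rfl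
      intro x hx
      rw [h2]
      obtain rfl : x = w := by simpa using hx
      ext
      simpa using h
  apply Nat.dvd_antisymm
  · rw [orderOf_dvd_iff_pow_eq_one, key, pow_orderOf_eq_one]
  · rw [orderOf_dvd_iff_pow_eq_one, ← key, pow_orderOf_eq_one]


section core

/-- the valuation ring -/
noncomputable abbrev OO (Ω : Type) [NormedField Ω] [IsUltrametricDist Ω] : ValuationSubring Ω :=
  (NormedField.valuation (K := Ω)).valuationSubring

/-- the residue field -/
abbrev kk (Ω : Type) [NormedField Ω] [IsUltrametricDist Ω] : Type :=
  IsLocalRing.ResidueField (OO Ω)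

/-- the residue map -/
noncomputable abbrev rr (Ω : Type) [NormedField Ω] [IsUltrametricDist Ω] : OO Ω →+* kk Ω :=
  IsLocalRing.residue (OO Ω)

theorem mem_OO (Ω : Type) [NormedField Ω] [IsUltrametricDist Ω] {x : Ω} : x ∈ OO Ω ↔ ‖x‖ ≤ 1 := by
  rw [Valuation.mem_valuationSubring_iff, NormedField.valuation_apply]
  rfl

theorem rr_eq_zero (Ω : Type) [NormedField Ω] [IsUltrametricDist Ω] {x : OO Ω} :
    rr Ω x = 0 ↔ ‖(x : Ω)‖ < 1 := by
  rw [IsLocalRing.residue_eq_zero_iff, ValuationSubring.valuation_lt_one_iff,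
    ← (Valuation.isEquiv_valuation_valuationSubring _).lt_one_iff_lt_one,
    NormedField.valuation_apply]
  rfl

variable (p : ℕ) [hp : Fact p.Prime] (Ω : Type) [NormedField Ω] [IsUltrametricDist Ω]
  [NormedAlgebra ℚ_[p] Ω]

/-- the structure map -/
noncomputable def ii : ℤ_[p] →+* OO Ω :=
  ((algebraMap ℚ_[p] Ω).comp PadicInt.Coe.ringHom).codRestrict (OO Ω).toSubring (by
    intro x
    change _ ∈ OO Ω
    rw [mem_OO]
    change ‖algebraMap ℚ_[p] Ω x‖ ≤ 1
    rw [norm_algebraMap']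
    exact x.2)

theorem ii_apply (x : ℤ_[p]) : (ii p Ω x : Ω) = algebraMap ℚ_[p] Ω x := rfl

theorem norm_ii (x : ℤ_[p]) : ‖(ii p Ω x : Ω)‖ = ‖x‖ := by
  rw [ii_apply, norm_algebraMap']; rfl

theorem rr_ii_eq_zero (x : ℤ_[p]) : rr Ω (ii p Ω x) = 0 ↔ ‖x‖ < 1 := by
  rw [rr_eq_zero, norm_ii]

theorem charP_kk : CharP (kk Ω) p := by
  rw [CharP.charP_iff_prime_eq_zero hp.1]
  have := (rr_ii_eq_zero p Ω (p : ℤ_[p])).2 (by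
    rw [PadicInt.norm_p]
    exact inv_lt_one_of_one_lt₀ (by exact_mod_cast hp.1.one_lt))
  simpa using this

/-- residue field as an algebra -/
noncomputable abbrev algkk : Algebra (ZMod p) (kk Ω) :=
  haveI := charP_kk p Ω
  ZMod.algebra _ p

theorem rr_comp_ii : letI := algkk p Ω
    (rr Ω).comp (ii p Ω) = (algebraMap (ZMod p) (kk Ω)).comp PadicInt.toZMod := by
  let := algkk p Ω
  ext x
  have h := PadicInt.sub_zmodRepr_mem x
  rw [IsLocalRing.mem_maximalIdeal, PadicInt.mem_nonunits] at h
  rw [← rr_ii_eq_zero p Ω, map_sub, map_sub, sub_eq_zero] at h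
  have h2 := PadicInt.val_toZMod_eq_zmodRepr x
  rw [RingHom.comp_apply, h, RingHom.comp_apply]
  conv_rhs => rw [← ZMod.natCast_zmod_val (PadicInt.toZMod x), h2]
  simp

theorem rr_eval (G : ℤ_[p][X]) (y : OO Ω) : letI := algkk p Ω
    rr Ω (eval₂ (ii p Ω) y G) = aeval (rr Ω y) (G.map PadicInt.toZMod) := by
  let := algkk p Ω
  rw [hom_eval₂, rr_comp_ii, aeval_def, eval₂_map]

theorem coe_eval (G : ℤ_[p][X]) (y : OO Ω) :
    ((eval₂ (ii p Ω) y G : OO Ω) : Ω) = aeval (y : Ω) (G.map PadicInt.Coe.ringHom) := by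
  rw [aeval_def, eval₂_map]
  change (OO Ω).subtype _ = _
  rw [hom_eval₂]
  rfl

theorem prim_rr (m : ℕ) (hm : m.Coprime p) (w : OO Ω) (hw : IsPrimitiveRoot (w : Ω) m) :
    IsPrimitiveRoot (rr Ω w) m := by
  have := charP_kk p Ω
  have hm0 : m ≠ 0 := by
    rintro rfl
    exact hp.1.one_lt.ne' (by simpa using hm)
  have hmk : NeZero (m : kk Ω) := by
    constructor
    rw [Ne, CharP.cast_eq_zero_iff (kk Ω) p]
    intro h
    exact hp.1.one_lt.ne' (Nat.Coprime.eq_one_of_dvd hm.symm h)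
  have hw' : IsPrimitiveRoot w m :=
    IsPrimitiveRoot.of_map_of_injective (f := (OO Ω).subtype) hw Subtype.val_injective
  have h := hw'.isRoot_cyclotomic (Nat.pos_of_ne_zero hm0)
  rw [← isRoot_cyclotomic_iff, ← map_cyclotomic m (rr Ω)]
  exact h.map

theorem norm_root (Ω : Type) [NormedField Ω] (m : ℕ) (hm : m ≠ 0) (w : Ω) (hw : w ^ m = 1) : ‖w‖ = 1 := by
  have : ‖w‖ ^ m = 1 := by rw [← norm_pow, hw, norm_one]
  exact (pow_eq_one_iff_of_nonneg (norm_nonneg _) hm).1 this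

theorem norm_eval_eq_one (m : ℕ) (hm : m.Coprime p) (hm0 : m ≠ 0) (w : Ω)
    (hw : IsPrimitiveRoot w m)
    (G : ℤ_[p][X]) (hG : G.natDegree < orderOf (p : ZMod m)) (i : ℕ) (hi : ‖G.coeff i‖ = 1) :
    ‖aeval w (G.map PadicInt.Coe.ringHom)‖ = 1 := by
  let := algkk p Ω
  have hwO : w ∈ OO Ω := (mem_OO Ω).2 (norm_root Ω m hm0 w hw.pow_eq_one).le
  have h1 := coe_eval p Ω G ⟨w, hwO⟩
  change _ = aeval w _ at h1
  rw [← h1]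
  apply le_antisymm ((mem_OO Ω).1 (Subtype.mem _))
  by_contra! hlt
  rw [← rr_eq_zero, rr_eval] at hlt
  have hne : G.map PadicInt.toZMod ≠ 0 := by
    intro h0
    have := congrArg (fun q => algebraMap (ZMod p) (kk Ω) (q.coeff i)) h0
    simp only [coeff_map, coeff_zero, map_zero] at this
    rw [← RingHom.comp_apply, ← rr_comp_ii, RingHom.comp_apply, rr_ii_eq_zero] at this
    linarith
  have h2 := natDegree_le_natDegree (minpoly.degree_le_of_ne_zero (ZMod p) _ hne hlt)
  rw [natDegree_minpoly_zmod p _ m hm0 _ (prim_rr p Ω m hm _ hw)] at h2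
  have := natDegree_map_le (f := PadicInt.toZMod) (p := G)
  omega

theorem exists_scale (g : ℚ_[p][X]) (hg : g ≠ 0) : ∃ (c : ℚ_[p]) (G : ℤ_[p][X]) (i : ℕ), c ≠ 0 ∧
    g = C c * G.map PadicInt.Coe.ringHom ∧ ‖G.coeff i‖ = 1 ∧ G.natDegree = g.natDegree := by
  obtain ⟨i, hi, hmax⟩ := Finset.exists_max_image g.support (fun i => ‖g.coeff i‖)
    (by simpa using hg)
  have hc : g.coeff i ≠ 0 := by simpa using hi
  have hle : ∀ j, ‖g.coeff j‖ ≤ ‖g.coeff i‖ := by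
    intro j
    by_cases hj : j ∈ g.support
    · exact hmax j hj
    · have : g.coeff j = 0 := by simpa using hj
      simp [this]
  have hlift : C (g.coeff i)⁻¹ * g ∈ lifts (PadicInt.Coe.ringHom (p := p)) := by
    rw [lifts_iff_coeff_lifts]
    intro j
    rw [coeff_C_mul]
    refine ⟨⟨(g.coeff i)⁻¹ * g.coeff j, ?_⟩, rfl⟩
    rw [norm_mul, norm_inv, inv_mul_le_one₀ (norm_pos_iff.2 hc)]
    exact hle j
  rw [mem_lifts] at hlift
  obtain ⟨G, hG⟩ := hlift
  refine ⟨g.coeff i, G, i, hc, ?_, ?_, ?_⟩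
  · rw [hG, ← mul_assoc, ← C_mul, mul_inv_cancel₀ hc, C_1, one_mul]
  · have := congrArg (fun q => q.coeff i) hG
    simp only [coeff_map, coeff_C_mul, inv_mul_cancel₀ hc] at this
    have h2 : ‖PadicInt.Coe.ringHom (G.coeff i)‖ = ‖G.coeff i‖ := rfl
    rw [← h2, this, norm_one]
  · have := congrArg natDegree hG
    rw [natDegree_map_eq_of_injective (by exact Subtype.val_injective),
      natDegree_C_mul (inv_ne_zero hc)] at this
    exact this

theorem norm_galois (Ω : Type) [NormedField Ω] [NormedAlgebra ℚ_[p] Ω] [IsAlgClosure ℚ_[p] Ω] (σ : Ω ≃ₐ[ℚ_[p]] Ω) (x : Ω) : ‖σ x‖ = ‖x‖ := by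
  have : Algebra.IsAlgebraic ℚ_[p] Ω := IsAlgClosure.isAlgebraic
  rw [NormedAlgebra.norm_eq_spectralNorm ℚ_[p], NormedAlgebra.norm_eq_spectralNorm ℚ_[p],
    ← spectralNorm_eq_of_equiv]

theorem natDegree_minpoly_padic [IsAlgClosure ℚ_[p] Ω] (m : ℕ) (hm : m.Coprime p) (hm0 : m ≠ 0)
    (w : Ω) (hw : IsPrimitiveRoot w m) :
    (minpoly ℚ_[p] w).natDegree = orderOf (p : ZMod m) := by
  let := algkk p Ω
  have : Algebra.IsAlgebraic ℚ_[p] Ω := IsAlgClosure.isAlgebraic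
  have : IsAlgClosed Ω := IsAlgClosure.isAlgClosed ℚ_[p]
  have : Normal ℚ_[p] Ω := IsAlgClosure.normal _ _
  have hintg : IsIntegral ℚ_[p] w := Algebra.IsIntegral.isIntegral w
  have hwO : w ∈ OO Ω := (mem_OO Ω).2 (norm_root Ω m hm0 w hw.pow_eq_one).le
  have hprim := prim_rr p Ω m hm ⟨w, hwO⟩ hw
  have hdeg := natDegree_minpoly_zmod p _ m hm0 _ hprim
  apply le_antisymm
  · rw [← hdeg]
    set h0 := minpoly (ZMod p) (rr Ω ⟨w, hwO⟩) with hh0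
    have hintg0 : IsIntegral (ZMod p) (rr Ω ⟨w, hwO⟩) := by
      refine ⟨X ^ m - C 1, monic_X_pow_sub_C _ hm0, ?_⟩
      simp [hprim.pow_eq_one]
    have h0ne : h0 ≠ 0 := minpoly.ne_zero hintg0
    obtain ⟨H, hH⟩ : ∃ H : ℤ_[p][X], H.map PadicInt.toZMod = h0 :=
      map_surjective _ (ZMod.ringHom_surjective _) h0
    have hroot : ∀ y ∈ (minpoly ℚ_[p] w).rootSet Ω, y ^ m = 1 ∧
        ∀ hy : y ∈ OO Ω, aeval (rr Ω ⟨y, hy⟩) h0 = 0 := by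
      intro y hy
      rw [mem_rootSet] at hy
      obtain ⟨σ, rfl⟩ := minpoly.exists_algEquiv_of_root' hintg.isAlgebraic hy.2
      refine ⟨by rw [← map_pow, hw.pow_eq_one, map_one], fun hy => ?_⟩
      rw [← hH, ← rr_eval, rr_eq_zero, coe_eval]
      change ‖aeval (σ w) _‖ < 1
      rw [aeval_algHom_apply σ, norm_galois]
      have := coe_eval p Ω H ⟨w, hwO⟩
      change _ = aeval w _ at this
      rw [← this, ← rr_eq_zero, rr_eval, hH, minpoly.aeval]
    have hO : ∀ y ∈ (minpoly ℚ_[p] w).rootSet Ω, y ∈ OO Ω := fun y hy =>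
      (mem_OO Ω).2 (norm_root Ω m hm0 y (hroot y hy).1).le
    rw [← card_rootSet_eq_natDegree (K := Ω) (minpoly.irreducible hintg).separable
      (IsAlgClosed.splits _)]
    refine le_trans (Fintype.card_le_of_injective
      (β := h0.rootSet (kk Ω)) (fun y => ⟨rr Ω ⟨y.1, hO y.1 y.2⟩, ?_⟩) ?_) ?_
    · rw [mem_rootSet]
      exact ⟨h0ne, (hroot y.1 y.2).2 _⟩
    · rintro ⟨y, hy⟩ ⟨z, hz⟩ hyz
      have : NeZero m := ⟨hm0⟩
      obtain ⟨a, ha, rfl⟩ := hw.eq_pow_of_pow_eq_one (hroot y hy).1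
      obtain ⟨b, hb, rfl⟩ := hw.eq_pow_of_pow_eq_one (hroot z hz).1
      have h1 : rr Ω ⟨w ^ a, hO _ hy⟩ = rr Ω ⟨w ^ b, hO _ hz⟩ := congrArg Subtype.val hyz
      have h2 : (⟨w ^ a, hO _ hy⟩ : OO Ω) = ⟨w, hwO⟩ ^ a := rfl
      have h3 : (⟨w ^ b, hO _ hz⟩ : OO Ω) = ⟨w, hwO⟩ ^ b := rfl
      rw [h2, h3, map_pow, map_pow] at h1
      have := hprim.pow_inj ha hb h1
      subst this
      rfl
    · classical
      have hcard : Fintype.card (h0.rootSet (kk Ω)) = (h0.aroots (kk Ω)).toFinset.card := by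
        rw [← Set.toFinset_card]
        congr 1
        apply Finset.ext
        intro z
        simp [rootSet_def]
      rw [hcard]
      refine (Multiset.toFinset_card_le _).trans ?_
      refine (card_roots' _).trans natDegree_map_le
  · by_contra! hlt
    obtain ⟨c, G, i, hc, hg, hi, hG⟩ := exists_scale p (minpoly ℚ_[p] w) (minpoly.ne_zero hintg)
    rw [← hG] at hlt
    have h1 := norm_eval_eq_one p Ω m hm hm0 w hw G hlt i hi
    have h2 := minpoly.aeval ℚ_[p] w
    rw [hg, map_mul, aeval_C] at h2
    have h3 := congrArg norm h2
    rw [norm_mul, h1, mul_one, norm_algebraMap', norm_zero, norm_eq_zero] at h3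
    exact hc h3

theorem exists_repr [IsAlgClosure ℚ_[p] Ω] (m : ℕ) (hm : m.Coprime p) (hm0 : m ≠ 0)
    (w : Ω) (hw : IsPrimitiveRoot w m) (x : Ω) (hx : x ∈ IntermediateField.adjoin ℚ_[p] {w})
    (hx0 : x ≠ 0) : ∃ (c : ℚ_[p]) (G : ℤ_[p][X]), c ≠ 0 ∧ ‖x‖ = ‖c‖ ∧
      x = algebraMap ℚ_[p] Ω c * aeval w (G.map PadicInt.Coe.ringHom) := by
  have : Algebra.IsAlgebraic ℚ_[p] Ω := IsAlgClosure.isAlgebraic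
  have hintg : IsIntegral ℚ_[p] w := Algebra.IsIntegral.isIntegral w
  rw [← IntermediateField.mem_toSubalgebra,
    IntermediateField.adjoin_simple_toSubalgebra_of_isAlgebraic hintg.isAlgebraic,
    Algebra.adjoin_singleton_eq_range_aeval] at hx
  obtain ⟨g, rfl⟩ := hx
  change aeval w g ≠ 0 at hx0
  have hmod : aeval w (g %ₘ minpoly ℚ_[p] w) = aeval w g :=
    aeval_modByMonic_eq_self_of_root (minpoly.aeval _ _)
  have hg0 : g %ₘ minpoly ℚ_[p] w ≠ 0 := by
    intro h
    rw [h, map_zero] at hmod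
    exact hx0 hmod.symm
  obtain ⟨c, G, i, hc, hg, hi, hG⟩ := exists_scale p _ hg0
  have hlt : G.natDegree < orderOf (p : ZMod m) := by
    rw [hG, ← natDegree_minpoly_padic p Ω m hm hm0 w hw]
    exact natDegree_modByMonic_lt _ (minpoly.monic hintg) (minpoly.ne_one _ _)
  have h1 := norm_eval_eq_one p Ω m hm hm0 w hw G hlt i hi
  have h3 : aeval w g = algebraMap ℚ_[p] Ω c * aeval w (G.map PadicInt.Coe.ringHom) := by
    rw [← hmod, hg, map_mul, aeval_C]
  refine ⟨c, G, hc, ?_, h3⟩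
  change ‖aeval w g‖ = _
  rw [h3, norm_mul, h1, mul_one, norm_algebraMap']

theorem close_eq_one (m : ℕ) (hm : m.Coprime p) (hm0 : m ≠ 0)
    (w : Ω) (hw : IsPrimitiveRoot w m) (z : Ω) (hz : z ^ m = 1) (hz1 : ‖z - 1‖ < 1) : z = 1 := by
  have hwO : w ∈ OO Ω := (mem_OO Ω).2 (norm_root Ω m hm0 w hw.pow_eq_one).le
  have hprim := prim_rr p Ω m hm ⟨w, hwO⟩ hw
  have : NeZero m := ⟨hm0⟩
  obtain ⟨a, ha, rfl⟩ := hw.eq_pow_of_pow_eq_one hz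
  have h1 : rr Ω (⟨w, hwO⟩ ^ a - 1) = 0 := by
    rw [rr_eq_zero]
    exact hz1
  rw [map_sub, map_pow, map_one, sub_eq_zero] at h1
  have := hprim.pow_inj (j := 0) ha (by omega) (by simpa using h1)
  simp [this]

theorem exists_close (m : ℕ) (hm : m.Coprime p) (hm0 : m ≠ 0)
    (w : Ω) (hw : IsPrimitiveRoot w m) (z : OO Ω) (hz1 : (rr Ω z) ^ m = 1) :
    ∃ j : ℕ, ‖(z : Ω) * w⁻¹ ^ j - 1‖ < 1 := by
  have hw1 := norm_root Ω m hm0 w hw.pow_eq_one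
  have hwO : w ∈ OO Ω := (mem_OO Ω).2 hw1.le
  have hprim := prim_rr p Ω m hm ⟨w, hwO⟩ hw
  have : NeZero m := ⟨hm0⟩
  obtain ⟨a, ha, h⟩ := hprim.eq_pow_of_pow_eq_one hz1
  refine ⟨a, ?_⟩
  rw [← map_pow, eq_comm, ← sub_eq_zero, ← map_sub, rr_eq_zero] at h
  change ‖(z : Ω) - w ^ a‖ < 1 at h
  have hw0 : w ≠ 0 := hw.ne_zero hm0
  have h2 : (z : Ω) * w⁻¹ ^ a - 1 = (z - w ^ a) * w⁻¹ ^ a := by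
    rw [sub_mul, ← mul_pow, mul_inv_cancel₀ hw0, one_pow]
  rw [h2, norm_mul, norm_pow, norm_inv, hw1]
  simpa using h

theorem cop (n : ℕ) (hn : 1 ≤ n) : (p ^ n - 1).Coprime p := by
  have h1 : 1 ≤ p ^ n := Nat.one_le_pow _ _ hp.1.pos
  rw [Nat.coprime_comm, Nat.Prime.coprime_iff_not_dvd hp.1]
  intro h
  have h2 : p ∣ p ^ n := dvd_pow_self p (by omega)
  have h3 : p ∣ 1 := by
    have := Nat.dvd_sub h2 h
    rwa [Nat.sub_sub_self h1] at this
  exact hp.1.one_lt.ne' (Nat.dvd_one.1 h3)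

theorem ne0 (n : ℕ) (hn : 1 ≤ n) : p ^ n - 1 ≠ 0 := by
  have h1 : 1 < p ^ n := Nat.one_lt_pow (by omega) hp.1.one_lt
  omega

theorem exists_decomp [IsAlgClosure ℚ_[p] Ω] (n : ℕ) (hn : 1 ≤ n)
    (w : Ω) (hw : IsPrimitiveRoot w (p ^ n - 1)) (x : Ω)
    (hx : x ∈ IntermediateField.adjoin ℚ_[p] {w})
    (hx0 : x ≠ 0) : ∃ (k : ℤ) (j : ℕ) (u : Ω), u ∈ IntermediateField.adjoin ℚ_[p] {w} ∧
      ‖u - 1‖ < 1 ∧ x = (p : Ω) ^ k * w ^ j * u := by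
  let := algkk p Ω
  have hm := cop p n hn
  have hm0 := ne0 p n hn
  have hw0 : w ≠ 0 := hw.ne_zero hm0
  have hwK : w ∈ IntermediateField.adjoin ℚ_[p] {w} := IntermediateField.mem_adjoin_simple_self _ _
  have hp0 : (p : ℚ_[p]) ≠ 0 := by exact_mod_cast hp.1.ne_zero
  have hp0' : (p : Ω) ≠ 0 := by
    have := (map_ne_zero (algebraMap ℚ_[p] Ω)).2 hp0
    simpa using this
  obtain ⟨c, G, hc, hnorm, hxe⟩ := exists_repr p Ω _ hm hm0 w hw x hx hx0
  obtain ⟨k, hk⟩ : ∃ k : ℤ, ‖c‖ = (p : ℝ) ^ k := ⟨_, Padic.norm_eq_zpow_neg_valuation hc⟩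
  have hwO : w ∈ OO Ω := (mem_OO Ω).2 (norm_root Ω _ hm0 w hw.pow_eq_one).le
  have hc1 : ‖c * (p : ℚ_[p]) ^ k‖ = 1 := by
    rw [norm_mul, hk, norm_zpow, Padic.norm_p]
    have : (p : ℝ) ≠ 0 := by exact_mod_cast hp.1.ne_zero
    rw [inv_zpow]
    exact mul_inv_cancel₀ (zpow_ne_zero _ this)
  set d : ℤ_[p] := ⟨c * (p : ℚ_[p]) ^ k, hc1.le⟩ with hd
  set y : OO Ω := eval₂ (ii p Ω) ⟨w, hwO⟩ (C d * G) with hy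
  have hyx : (y : Ω) = x * (p : Ω) ^ k := by
    rw [hy, coe_eval, hxe, Polynomial.map_mul, map_mul, map_C, aeval_C]
    change algebraMap ℚ_[p] Ω (c * (p : ℚ_[p]) ^ k) * aeval w _ = _
    rw [map_mul, map_zpow₀, map_natCast]
    ring
  have hy1 : ‖(y : Ω)‖ = 1 := by
    have h := norm_algebraMap' Ω (p : ℚ_[p])
    rw [map_natCast] at h
    rw [hyx, norm_mul, hnorm, norm_zpow, h, ← norm_zpow, ← norm_mul, hc1]
  have hprim := prim_rr p Ω _ hm ⟨w, hwO⟩ hw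
  have h1p : 1 ≤ p ^ n := Nat.one_le_pow _ _ hp.1.pos
  have hfrob : ∀ z : kk Ω, ((FiniteField.frobeniusAlgHom (ZMod p) (kk Ω)) ^ n) z = z ^ (p ^ n) := by
    intro z
    rw [AlgHom.coe_pow, FiniteField.coe_frobeniusAlgHom, pow_iterate]
    simp
  have hry : rr Ω y ^ (p ^ n) = rr Ω y := by
    rw [hy, rr_eval, ← hfrob, ← aeval_algHom_apply, hfrob]
    congr 2
    rw [← Nat.sub_add_cancel h1p, pow_succ, hprim.pow_eq_one, one_mul]
  have hry0 : rr Ω y ≠ 0 := by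
    rw [Ne, rr_eq_zero, hy1]
    exact lt_irrefl _
  have hry1 : rr Ω y ^ (p ^ n - 1) = 1 := by
    rw [← Nat.sub_add_cancel h1p, pow_succ] at hry
    exact mul_right_cancel₀ hry0 (by rw [hry, one_mul])
  obtain ⟨j, hj⟩ := exists_close p Ω _ hm hm0 w hw y hry1
  refine ⟨-k, j, y * w⁻¹ ^ j, ?_, hj, ?_⟩
  · rw [hyx]
    refine mul_mem (mul_mem hx (zpow_mem (natCast_mem _ _) _)) (pow_mem (inv_mem hwK) _)
  · have h5 : (p : Ω) ^ (-k) * w ^ j * (x * (p : Ω) ^ k * w⁻¹ ^ j) =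
        ((p : Ω) ^ (-k) * (p : Ω) ^ k) * (w * w⁻¹) ^ j * x := by
      rw [mul_pow]; ring
    rw [hyx, h5, ← zpow_add₀ hp0', mul_inv_cancel₀ hw0]
    simp

theorem exists_root_of_close [IsAlgClosure ℚ_[p] Ω] (m : ℕ) (hm : m.Coprime p) (hm0 : m ≠ 0)
    (w : Ω) (hw : IsPrimitiveRoot w m) (K : IntermediateField ℚ_[p] Ω) (u : Ω) (hu : u ∈ K)
    (hu1 : ‖u - 1‖ < 1) : ∃ v ∈ K, v ^ m = u := by
  have : Algebra.IsAlgebraic ℚ_[p] Ω := IsAlgClosure.isAlgebraic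
  have : IsAlgClosed Ω := IsAlgClosure.isAlgClosed ℚ_[p]
  have : Normal ℚ_[p] Ω := IsAlgClosure.normal _ _
  have : IsGalois ℚ_[p] Ω := ⟨⟩
  have hw0 : w ≠ 0 := hw.ne_zero hm0
  have hunorm : ‖u‖ = 1 := by
    have := IsUltrametricDist.norm_eq_of_add_norm_lt_max (x := u) (y := -1)
      (by rw [← sub_eq_add_neg, norm_neg, norm_one]; exact hu1.trans_le (le_max_right _ _))
    rwa [norm_neg, norm_one] at this
  obtain ⟨v0, hv0⟩ := IsAlgClosed.exists_pow_nat_eq u (Nat.pos_of_ne_zero hm0)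
  have hv0n : ‖v0‖ = 1 := by
    have : ‖v0‖ ^ m = 1 := by rw [← norm_pow, hv0, hunorm]
    exact (pow_eq_one_iff_of_nonneg (norm_nonneg _) hm0).1 this
  have hv0O : v0 ∈ OO Ω := (mem_OO Ω).2 hv0n.le
  have hr : rr Ω ⟨v0, hv0O⟩ ^ m = 1 := by
    rw [← sub_eq_zero, ← map_pow, ← map_one (rr Ω), ← map_sub, rr_eq_zero]
    change ‖v0 ^ m - 1‖ < 1
    rwa [hv0]
  obtain ⟨j, hj⟩ := exists_close p Ω m hm hm0 w hw _ hr
  set v : Ω := v0 * w⁻¹ ^ j with hv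
  change ‖v - 1‖ < 1 at hj
  have hvm : v ^ m = u := by
    rw [hv, mul_pow, hv0, ← pow_mul, mul_comm, mul_comm j, pow_mul, inv_pow, hw.pow_eq_one]
    simp
  have hvn : ‖v‖ = 1 := by
    have : ‖v‖ ^ m = 1 := by rw [← norm_pow, hvm, hunorm]
    exact (pow_eq_one_iff_of_nonneg (norm_nonneg _) hm0).1 this
  have hvne : v ≠ 0 := by
    rw [← norm_pos_iff, hvn]; exact one_pos
  refine ⟨v, ?_, hvm⟩
  have hfix : ∀ σ : Ω ≃ₐ[K] Ω, σ v = v := by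
    intro σ
    have hn1 : ‖σ v - 1‖ < 1 := by
      have := norm_galois p Ω (σ.restrictScalars ℚ_[p]) (v - 1)
      rw [map_sub, map_one] at this
      exact this.trans_lt hj
    have hsu : σ u = u := σ.commutes ⟨u, hu⟩
    have h1 : (σ v / v) ^ m = 1 := by
      rw [div_pow, ← map_pow, hvm, hsu, div_self]
      rw [← norm_pos_iff, hunorm]; exact one_pos
    have h2 : ‖σ v / v - 1‖ < 1 := by
      have : σ v / v - 1 = ((σ v - 1) + -(v - 1)) / v := by field_simp; ring
      rw [this, norm_div, hvn, div_one]
      exact (IsUltrametricDist.norm_add_le_max _ _).trans_lt (max_lt hn1 (by rwa [norm_neg]))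
    have h3 := close_eq_one p Ω m hm hm0 w hw _ h1 h2
    rwa [div_eq_one_iff_eq hvne] at h3
  have := (InfiniteGalois.mem_bot_iff_fixed (k := K) (K := Ω) v).2 hfix
  rw [IntermediateField.mem_bot] at this
  obtain ⟨a, ha⟩ := this
  rw [← ha]
  exact a.2

theorem orderOf_p (n : ℕ) (hn : 1 ≤ n) : orderOf (p : ZMod (p ^ n - 1)) = n := by
  have h1 : 1 ≤ p ^ n := Nat.one_le_pow _ _ hp.1.pos
  have key : ∀ a : ℕ, (p : ZMod (p ^ n - 1)) ^ a = 1 ↔ p ^ n - 1 ∣ p ^ a - 1 := by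
    intro a
    rw [← Nat.cast_pow, ← Nat.cast_one (R := ZMod (p ^ n - 1)), eq_comm, ZMod.natCast_eq_natCast_iff,
      Nat.modEq_iff_dvd' (Nat.one_le_pow _ _ hp.1.pos)]
  rw [orderOf_eq_iff (by omega)]
  refine ⟨(key n).2 dvd_rfl, fun a ha ha0 h => ?_⟩
  rw [key] at h
  have h2 : p ^ a < p ^ n := Nat.pow_lt_pow_right hp.1.one_lt ha
  have h3 : 1 < p ^ a := Nat.one_lt_pow (by omega) hp.1.one_lt
  have := Nat.le_of_dvd (by omega) h
  omega

theorem orderOf_p_sq (n : ℕ) (hn : 1 ≤ n) :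
    orderOf (p : ZMod ((p ^ n - 1) * (p ^ n - 1))) = n * (p ^ n - 1) := by
  have h1 : 1 ≤ p ^ n := Nat.one_le_pow _ _ hp.1.pos
  have he := ne0 p n hn
  set e := p ^ n - 1 with hedef
  have hpe : p ^ n = e + 1 := by omega
  have hn_dvd : ∀ a : ℕ, (p : ZMod (e * e)) ^ a = 1 → n ∣ a := by
    intro a h
    have := congrArg (ZMod.castHom (dvd_mul_right e e) (ZMod e)) h
    rw [map_pow, map_natCast, map_one] at this
    have h3 := orderOf_dvd_of_pow_eq_one this
    rwa [hedef, orderOf_p p n hn] at h3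
  have hsq : ∀ t : ℕ, ((e : ZMod (e * e)) + 1) ^ t = 1 + t * e := by
    intro t
    have hee : (e : ZMod (e * e)) * e = 0 := by
      rw [← Nat.cast_mul, ZMod.natCast_self]
    induction t with
    | zero => simp
    | succ t ih =>
      rw [pow_succ, ih]
      push_cast
      linear_combination (t : ZMod (e * e)) * hee
  have key : ∀ t : ℕ, (p : ZMod (e * e)) ^ (n * t) = 1 ↔ e ∣ t := by
    intro t
    rw [pow_mul, ← Nat.cast_pow, hpe]
    push_cast
    rw [hsq]
    rw [add_eq_left, ← Nat.cast_mul, ZMod.natCast_eq_zero_iff]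
    exact Nat.mul_dvd_mul_iff_right (Nat.pos_of_ne_zero he)
  apply Nat.dvd_antisymm
  · rw [orderOf_dvd_iff_pow_eq_one, key]
  · obtain ⟨t, ht⟩ := hn_dvd _ (pow_orderOf_eq_one (p : ZMod (e * e)))
    rw [ht]
    apply Nat.mul_dvd_mul_left
    rw [← key, ← ht, pow_orderOf_eq_one]

theorem natDegree_pi [IsAlgClosure ℚ_[p] Ω] (m : ℕ) (hm : m.Coprime p) (hm0 : m ≠ 0)
    (w : Ω) (hw : IsPrimitiveRoot w m) (e : ℕ) (he : e ≠ 0) (π : Ω) (hπ : π ^ e = p) :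
    (minpoly (IntermediateField.adjoin ℚ_[p] {w}) π).natDegree = e := by
  have : Algebra.IsAlgebraic ℚ_[p] Ω := IsAlgClosure.isAlgebraic
  have : IsAlgClosed Ω := IsAlgClosure.isAlgClosed ℚ_[p]
  set F := IntermediateField.adjoin ℚ_[p] {w} with hF
  have hintg : IsIntegral F π := Algebra.IsIntegral.isIntegral π
  have hp0 : (p : ℚ_[p]) ≠ 0 := by exact_mod_cast hp.1.ne_zero
  have hp0' : (p : Ω) ≠ 0 := by
    have := (map_ne_zero (algebraMap ℚ_[p] Ω)).2 hp0
    simpa using this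
  have hpn : ‖(p : Ω)‖ = (p : ℝ)⁻¹ := by
    have h := norm_algebraMap' Ω (p : ℚ_[p])
    rwa [map_natCast, Padic.norm_p] at h
  have hπ0 : π ≠ 0 := by
    rintro rfl
    rw [zero_pow he] at hπ
    exact hp0' hπ.symm
  set f := minpoly F π with hf
  have hmonic : f.Monic := minpoly.monic hintg
  have hdvd : f ∣ X ^ e - C (p : F) := minpoly.dvd _ _ (by simp [hπ])
  have hle : f.natDegree ≤ e := by
    have := natDegree_le_of_dvd hdvd (monic_X_pow_sub_C _ he).ne_zero
    rwa [natDegree_X_pow_sub_C] at this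
  have hpos : 0 < f.natDegree := minpoly.natDegree_pos hintg
  have hsplit : (f.map (algebraMap F Ω)).Splits := IsAlgClosed.splits _
  have hprod := hsplit.coeff_zero_eq_prod_roots_of_monic (hmonic.map _)
  have hcard := hsplit.natDegree_eq_card_roots
  rw [natDegree_map] at hprod hcard
  have hroots : ∀ y ∈ (f.map (algebraMap F Ω)).roots, ‖y‖ ^ e = (p : ℝ)⁻¹ := by
    intro y hy
    have h1 := isRoot_of_mem_roots hy
    have h2 := h1.dvd (Polynomial.map_dvd (algebraMap F Ω) hdvd)
    have h3 : y ^ e = p := by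
      simpa [IsRoot, sub_eq_zero] using h2
    rw [← norm_pow, h3, hpn]
  have hnorm : ‖(algebraMap F Ω) (f.coeff 0)‖ ^ e = ((p : ℝ)⁻¹) ^ f.natDegree := by
    rw [← coeff_map, hprod, norm_mul, norm_pow, norm_neg, norm_one, one_pow, one_mul, hcard]
    have : ∀ s : Multiset Ω, (∀ y ∈ s, ‖y‖ ^ e = (p : ℝ)⁻¹) →
        ‖s.prod‖ ^ e = ((p : ℝ)⁻¹) ^ (Multiset.card s) := by
      intro s
      induction s using Multiset.induction_on with
      | empty => simp
      | cons a s ih =>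
        intro h
        rw [Multiset.prod_cons, norm_mul, mul_pow, h a (by simp), ih (fun y hy => h y (by simp [hy])),
          Multiset.card_cons, pow_succ, mul_comm]
    exact this _ hroots
  have hc0 : (algebraMap F Ω) (f.coeff 0) ≠ 0 := by
    rw [_root_.map_ne_zero]
    exact minpoly.coeff_zero_ne_zero hintg hπ0
  obtain ⟨c, G, hc, hn, -⟩ := exists_repr p Ω m hm hm0 w hw _ (f.coeff 0).2 hc0
  change ‖(algebraMap F Ω) (f.coeff 0)‖ = _ at hn
  rw [hn, Padic.norm_eq_zpow_neg_valuation hc, ← zpow_natCast, ← zpow_mul, inv_pow, ← zpow_natCast,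
    ← zpow_neg] at hnorm
  have h1p : (1 : ℝ) < p := by exact_mod_cast hp.1.one_lt
  have h2 := zpow_right_injective₀ (by linarith) h1p.ne' hnorm
  have h3 : (e : ℤ) ∣ f.natDegree := ⟨c.valuation, by linarith⟩
  have h4 := Nat.le_of_dvd hpos (Int.natCast_dvd_natCast.1 h3)
  omega

theorem stmt_core [IsAlgClosure ℚ_[p] Ω] (n : ℕ) (hn : 1 ≤ n)
    (ζ : Ω) (hζ : IsPrimitiveRoot ζ (p ^ n - 1))
    (Kn : IntermediateField ℚ_[p] Ω) (hKn : Kn = IntermediateField.adjoin ℚ_[p] {ζ})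
    (Ln : IntermediateField ℚ_[p] Ω)
    (hLn : Ln = Kn ⊔ IntermediateField.adjoin ℚ_[p] {x : Ω | x ^ (p ^ n - 1) ∈ Kn}) :
    FiniteDimensional ℚ_[p] ↥Ln ∧ IsGalois ℚ_[p] ↥Ln ∧
      Module.finrank ℚ_[p] ↥Ln = orderOf ((p : ZMod (p ^ n - 1))) * (p ^ n - 1) ^ 2 := by
  have : Algebra.IsAlgebraic ℚ_[p] Ω := IsAlgClosure.isAlgebraic
  have : IsAlgClosed Ω := IsAlgClosure.isAlgClosed ℚ_[p]
  have : Normal ℚ_[p] Ω := IsAlgClosure.normal _ _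
  have hm := cop p n hn
  have he := ne0 p n hn
  have hord := orderOf_p p n hn
  have hord2 := orderOf_p_sq p n hn
  have hdec := exists_decomp p Ω n hn ζ hζ
  rw [hord]
  clear hord
  generalize p ^ n - 1 = e at *
  have hepos := Nat.pos_of_ne_zero he
  obtain ⟨ξ, hξ⟩ := IsAlgClosed.exists_pow_nat_eq ζ hepos
  obtain ⟨π, hπ⟩ := IsAlgClosed.exists_pow_nat_eq (p : Ω) hepos
  have hNe : NeZero e := ⟨he⟩
  have hξp : IsPrimitiveRoot ξ (e * e) := by
    rw [IsPrimitiveRoot.iff_orderOf]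
    have h1 : ξ ^ (e * e) = 1 := by rw [pow_mul, hξ, hζ.pow_eq_one]
    have h2 := hζ.eq_orderOf
    have h3 : e ∣ orderOf ξ := by
      rw [← hξ] at h2
      conv_lhs => rw [h2]
      exact orderOf_pow_dvd e
    obtain ⟨t, ht⟩ := h3
    have h4 : ζ ^ t = 1 := by
      rw [← hξ, ← pow_mul, ← ht, pow_orderOf_eq_one]
    have h5 := hζ.dvd_of_pow_eq_one t h4
    apply Nat.dvd_antisymm (orderOf_dvd_of_pow_eq_one h1)
    rw [ht]
    exact Nat.mul_dvd_mul_left e h5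
  have hm2 : (e * e).Coprime p := Nat.Coprime.mul_left hm hm
  have he2 : e * e ≠ 0 := mul_ne_zero he he
  set M := IntermediateField.adjoin ℚ_[p] {ξ, π} with hM
  have hξM : ξ ∈ M := IntermediateField.subset_adjoin _ _ (by simp)
  have hπM : π ∈ M := IntermediateField.subset_adjoin _ _ (by simp)
  have hζK : ζ ∈ Kn := by rw [hKn]; exact IntermediateField.mem_adjoin_simple_self _ _
  have hKM : Kn ≤ M := by
    rw [hKn, IntermediateField.adjoin_simple_le_iff, ← hξ]
    exact pow_mem hξM _
  have hLM : Ln = M := by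
    apply le_antisymm
    · rw [hLn]
      apply sup_le hKM
      rw [IntermediateField.adjoin_le_iff]
      intro x hx
      change x ^ e ∈ Kn at hx
      change x ∈ M
      by_cases hx0 : x = 0
      · rw [hx0]; exact zero_mem _
      obtain ⟨k, j, u, hu, hu1, hxe⟩ := hdec (x ^ e) (by rwa [← hKn]) (pow_ne_zero _ hx0)
      rw [← hKn] at hu
      obtain ⟨v, hvK, hv⟩ := exists_root_of_close p Ω e hm he ζ hζ Kn u hu hu1
      have h1 : x ^ e = (π ^ k * ξ ^ j * v) ^ e := by
        have h6 : (π ^ e) ^ k = (π ^ k) ^ e := by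
          rw [← zpow_natCast, ← zpow_natCast, ← zpow_mul, ← zpow_mul, mul_comm]
        rw [hxe, ← hv, ← hξ, ← hπ, mul_pow, mul_pow, ← pow_mul, ← pow_mul, mul_comm e j, h6]
      have h0 : π ^ k * ξ ^ j * v ≠ 0 := by
        intro h0
        rw [h0, zero_pow he] at h1
        exact pow_ne_zero _ hx0 h1
      have h2 : (x / (π ^ k * ξ ^ j * v)) ^ e = 1 := by
        rw [div_pow, h1, div_self (pow_ne_zero _ h0)]
      obtain ⟨i, -, hi⟩ := hζ.eq_pow_of_pow_eq_one h2
      rw [eq_div_iff h0] at hi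
      rw [← hi]
      exact mul_mem (pow_mem (hKM hζK) _)
        (mul_mem (mul_mem (zpow_mem hπM _) (pow_mem hξM _)) (hKM hvK))
    · rw [hM, IntermediateField.adjoin_le_iff, hLn]
      refine subset_trans ?_ (SetLike.coe_subset_coe.2 le_sup_right)
      refine subset_trans ?_ (IntermediateField.subset_adjoin _ _)
      rintro x (rfl | hx)
      · change x ^ e ∈ Kn
        rw [hξ]; exact hζK
      · obtain rfl : x = π := hx
        change x ^ e ∈ Kn
        rw [hπ]; exact natCast_mem _ _
  rw [hLM]
  have hζM := hKM hζK
  have hfd : FiniteDimensional ℚ_[p] M := by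
    apply IntermediateField.finiteDimensional_adjoin
    intro x _
    exact Algebra.IsIntegral.isIntegral x
  have hπ0 : π ≠ 0 := by
    rintro rfl
    rw [zero_pow he] at hπ
    have hp0 : (p : ℚ_[p]) ≠ 0 := by exact_mod_cast hp.1.ne_zero
    have := (map_ne_zero (algebraMap ℚ_[p] Ω)).2 hp0
    rw [map_natCast] at this
    exact this hπ.symm
  refine ⟨hfd, ?_, ?_⟩
  · have : Normal ℚ_[p] M := by
      rw [IntermediateField.normal_iff_forall_map_le']
      intro σ
      rw [hM, IntermediateField.adjoin_map, IntermediateField.adjoin_le_iff]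
      rintro _ ⟨x, hx, rfl⟩
      change σ x ∈ M
      rcases hx with rfl | hx
      · have : NeZero (e * e) := ⟨he2⟩
        obtain ⟨i, -, hi⟩ := hξp.eq_pow_of_pow_eq_one (ξ := σ x)
          (by rw [← map_pow, hξp.pow_eq_one, map_one])
        rw [← hi]
        exact pow_mem hξM _
      · obtain rfl : x = π := hx
        obtain ⟨i, -, hi⟩ := hζ.eq_pow_of_pow_eq_one (ξ := σ x / x)
          (by rw [div_pow, ← map_pow, hπ, map_natCast, ← hπ, div_self (pow_ne_zero _ hπ0)])
        rw [eq_div_iff hπ0] at hi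
        rw [← hi]
        exact mul_mem (pow_mem hζM _) hπM
    exact ⟨⟩
  · have h1 : Module.finrank ℚ_[p] (IntermediateField.adjoin ℚ_[p] {ξ}) = n * e := by
      rw [IntermediateField.adjoin.finrank (Algebra.IsIntegral.isIntegral ξ),
        natDegree_minpoly_padic p Ω _ hm2 he2 ξ hξp, hord2]
    have h2 : Module.finrank (IntermediateField.adjoin ℚ_[p] {ξ})
        (IntermediateField.adjoin (IntermediateField.adjoin ℚ_[p] {ξ}) {π}) = e := by
      rw [IntermediateField.adjoin.finrank (Algebra.IsIntegral.isIntegral π),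
        natDegree_pi p Ω _ hm2 he2 ξ hξp e he π hπ]
    have h3 := Module.finrank_mul_finrank ℚ_[p] (IntermediateField.adjoin ℚ_[p] {ξ})
        (IntermediateField.adjoin (IntermediateField.adjoin ℚ_[p] {ξ}) {π})
    have h4 := IntermediateField.adjoin_simple_adjoin_simple ℚ_[p] ξ π
    rw [hM, ← h4]
    change Module.finrank ℚ_[p]
      (IntermediateField.adjoin (IntermediateField.adjoin ℚ_[p] {ξ}) {π}) = _
    rw [← h3, h1, h2]
    ring

end core


/-- For a prime `p` and `n ≥ 1`, with `e_n = p ^ n - 1`, `K_n = ℚ_p(ζ)` for a primitive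
`e_n`-th root of unity `ζ` in a fixed algebraic closure `Ω` of `ℚ_p`, and `L_n` the field
generated over `K_n` by all `x ∈ Ω` with `x ^ e_n ∈ K_n`: the extension `L_n / ℚ_p` is
finite Galois of degree `s_n • (p ^ n - 1) ^ 2`, where `s_n` is the multiplicative order
of `p` modulo `p ^ n - 1`. -/
theorem stmt_9 (p : ℕ) [hp : Fact p.Prime] (n : ℕ) (hn : 1 ≤ n)
    (Ω : Type) [Field Ω] [Algebra ℚ_[p] Ω] [IsAlgClosure ℚ_[p] Ω]
    (ζ : Ω) (hζ : IsPrimitiveRoot ζ (p ^ n - 1))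
    (Kn : IntermediateField ℚ_[p] Ω) (hKn : Kn = IntermediateField.adjoin ℚ_[p] {ζ})
    (Ln : IntermediateField ℚ_[p] Ω)
    (hLn : Ln = Kn ⊔ IntermediateField.adjoin ℚ_[p] {x : Ω | x ^ (p ^ n - 1) ∈ Kn}) :
    FiniteDimensional ℚ_[p] ↥Ln ∧ IsGalois ℚ_[p] ↥Ln ∧
      Module.finrank ℚ_[p] ↥Ln = orderOf ((p : ZMod (p ^ n - 1))) * (p ^ n - 1) ^ 2 := by
  have : Algebra.IsAlgebraic ℚ_[p] Ω := IsAlgClosure.isAlgebraic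
  let : NormedField Ω := spectralNorm.normedField ℚ_[p] Ω
  let : NormedAlgebra ℚ_[p] Ω := spectralNorm.normedAlgebra ℚ_[p] Ω
  have : IsUltrametricDist Ω :=
    IsUltrametricDist.isUltrametricDist_of_forall_norm_add_le_max_norm
      (isNonarchimedean_spectralNorm (K := ℚ_[p]) (L := Ω))
  exact stmt_core p Ω n hn ζ hζ Kn hKn Ln hLn
end

section
/- Fix a prime p and an integer n ≥ 1, set e_n = p^n − 1, and fix an algebraic closure Ω of ℚ_p. Let K ⊆ Ω be a finite extension of ℚ_p, let K_n = K(ζ) where ζ ∈ Ω is a primitive e_n-th root of unity, and let L_n ⊆ Ω be the field generated over K_n by all x ∈ Ω with x^{e_n} ∈ K_n. Let E ⊆ Ω be a primitive extension of K with [E : K] = p^n. Then the compositum E·L_n is a Galois extension of K, the degree [E·L_n : L_n] equals p^n, and the Galois group Gal(E·L_n / L_n) is abelian with every element of order dividing p. -/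
section Aux

open Pointwise

theorem aux_simple_pow {R W : Type} [CommRing R] [AddCommGroup W] [Module R W]
    [IsSimpleModule R W] [Finite W] (r : R) (hr : ∃ w : W, r • w ≠ 0) (w : W) :
    r ^ (Nat.card W - 1) • w = w := by
  obtain ⟨I, hI, ⟨e⟩⟩ := isSimpleModule_iff_quot_maximal.mp (inferInstance : IsSimpleModule R W)
  let _ : Field (R ⧸ I) := Ideal.Quotient.field I
  have _ : Finite (R ⧸ I) := Finite.of_equiv W e.toEquiv
  let _ := Fintype.ofFinite (R ⧸ I)
  have hc : Nat.card W = Fintype.card (R ⧸ I) := by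
    rw [Nat.card_congr e.toEquiv, Nat.card_eq_fintype_card]
  have h0 : (Ideal.Quotient.mk I r) ≠ 0 := by
    intro h
    obtain ⟨w, hw⟩ := hr
    apply hw
    apply e.injective
    rw [map_smul, map_zero, Algebra.smul_def]
    erw [h]
    rw [zero_mul]
  apply e.injective
  rw [map_smul, hc, Algebra.smul_def, map_pow]
  erw [FiniteField.pow_card_sub_one_eq_one _ h0]
  rw [one_mul]

theorem aux_SP {W : Type} [AddCommGroup W] [Finite W] [Nontrivial W]
    (S : Set (AddMonoid.End W)) (comm : ∀ a ∈ S, ∀ b ∈ S, a * b = b * a)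
    (hinj : ∀ a ∈ S, Function.Injective a)
    (irr : ∀ W' : AddSubgroup W, (∀ a ∈ S, ∀ w ∈ W', a w ∈ W') → W' = ⊥ ∨ W' = ⊤)
    (a : AddMonoid.End W) (ha : a ∈ S) (w : W) : (a ^ (Nat.card W - 1)) w = w := by
  let _ : CommRing (Subring.closure S) := Subring.closureCommRingOfComm comm
  have _ : IsSimpleModule (Subring.closure S) W := by
    rw [isSimpleModule_iff]
    refine { eq_bot_or_eq_top := ?_ }
    intro N
    have := irr N.toAddSubgroup (fun b hb w hw => 
      N.smul_mem (⟨b, Subring.subset_closure hb⟩ : Subring.closure S) hw)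
    rcases this with h | h
    · left
      rw [eq_bot_iff]
      intro x hx
      have : x ∈ N.toAddSubgroup := hx
      rw [h] at this
      simpa using this
    · right
      rw [eq_top_iff]
      intro x _
      have : x ∈ N.toAddSubgroup := by rw [h]; trivial
      exact this
  have := aux_simple_pow (R := Subring.closure S) (W := W) ⟨a, Subring.subset_closure ha⟩ ?_ w
  · exact this
  · obtain ⟨w, hw⟩ := exists_ne (0 : W)
    refine ⟨w, fun h => hw ?_⟩
    apply hinj a ha
    rw [map_zero]
    exact h

theorem aux_SPgrp {G : Type} [Group G] [Finite G] (A W : Subgroup G)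
    (hWcomm : ∀ x ∈ W, ∀ y ∈ W, x * y = y * x)
    (hAW : ∀ a ∈ A, ∀ w ∈ W, a * w * a⁻¹ ∈ W) (hW : W ≠ ⊥)
    (hAc : ∀ a ∈ A, ∀ b ∈ A, ∀ w ∈ W, a * (b * w * b⁻¹) * a⁻¹ = b * (a * w * a⁻¹) * b⁻¹)
    (irr : ∀ W' : Subgroup G, W' ≤ W → (∀ a ∈ A, ∀ w ∈ W', a * w * a⁻¹ ∈ W') → W' = ⊥ ∨ W' = W)
    (a : G) (ha : a ∈ A) (w : G) (hw : w ∈ W) :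
    a ^ (Nat.card W - 1) * w * (a ^ (Nat.card W - 1))⁻¹ = w := by
  let _ : CommGroup W := { (inferInstance : Group W) with
    mul_comm := fun x y => Subtype.ext (hWcomm x x.2 y y.2) }
  let c : A → AddMonoid.End (Additive W) := fun a =>
    AddMonoidHom.mk' (fun w => Additive.ofMul ⟨a * (w.toMul : W) * (a : G)⁻¹, hAW a a.2 _ w.toMul.2⟩)
      (by
        intro x y
        apply Additive.toMul.injective
        apply Subtype.ext
        simp)
  have hc : ∀ (a : A) (w : Additive W), (((c a w).toMul : W) : G) = a * (w.toMul : W) * (a : G)⁻¹ :=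
    fun _ _ => rfl
  have hpow : ∀ (a : A) (k : ℕ) (w : Additive W), ((((c a) ^ k) w).toMul : G) =
      (a : G) ^ k * (w.toMul : W) * ((a : G) ^ k)⁻¹ := by
    intro a k
    induction k with
    | zero => intro w; simp
    | succ k ih =>
      intro w
      rw [pow_succ]
      change ((((c a) ^ k) (c a w)).toMul : G) = _
      rw [ih, hc]
      group
  have _ : Nontrivial (Additive W) := by
    have : Nontrivial W := (Subgroup.nontrivial_iff_ne_bot W).2 hW
    exact inferInstanceAs (Nontrivial W)
  have _ : Finite (Additive W) := inferInstanceAs (Finite W)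
  have := aux_SP (W := Additive W) (Set.range c) ?_ ?_ ?_ (c ⟨a, ha⟩) ⟨_, rfl⟩ (Additive.ofMul ⟨w, hw⟩)
  · have h2 := congrArg (fun z : Additive W => ((z.toMul : W) : G)) this
    simp only [hpow] at h2
    exact h2
  · rintro _ ⟨a, rfl⟩ _ ⟨b, rfl⟩
    ext w
    exact hAc a a.2 b b.2 _ w.toMul.2
  · rintro _ ⟨a, rfl⟩ x y hxy
    have := congrArg (fun z : Additive W => ((z.toMul : W) : G)) hxy
    simp only [hc] at this
    apply Additive.toMul.injective
    apply Subtype.ext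
    simpa using this
  · intro W' hW'
    have key := irr (W'.toSubgroup'.map W.subtype) (by
      rintro _ ⟨x, hx, rfl⟩
      exact x.2) (by
      rintro a ha _ ⟨x, hx, rfl⟩
      exact ⟨_, hW' _ ⟨⟨a, ha⟩, rfl⟩ x hx, rfl⟩)
    rcases key with h | h
    · left
      rw [eq_bot_iff]
      intro x hx
      have : ((x.toMul : W) : G) ∈ (W'.toSubgroup'.map W.subtype) := ⟨x, hx, rfl⟩
      rw [h] at this
      have h3 := Subgroup.mem_bot.mp this
      rw [AddSubgroup.mem_bot]
      apply Additive.toMul.injective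
      apply Subtype.ext
      exact h3
    · right
      rw [eq_top_iff]
      intro x _
      have : ((x.toMul : W) : G) ∈ (W'.toSubgroup'.map W.subtype) := by rw [h]; exact x.toMul.2
      obtain ⟨y, hy, hxy⟩ := this
      have : y = x.toMul := Subtype.ext hxy
      rw [this] at hy
      exact hy

theorem aux_clifford {G : Type} [Group G] [Finite G] (A V : Subgroup G) [hA : A.Normal] [V.Normal]
    (hVcomm : ∀ x ∈ V, ∀ y ∈ V, x * y = y * x) (hV : V ≠ ⊥)
    (hmin : ∀ W : Subgroup G, W.Normal → W ≤ V → W = ⊥ ∨ W = V)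
    (hcent : ∀ g : G, (∀ v ∈ V, g * v * g⁻¹ = v) → g ∈ V)
    (hAA : ∀ a ∈ A, ∀ b ∈ A, a * b * a⁻¹ * b⁻¹ ∈ V) (a : G) (ha : a ∈ A) :
    a ^ (Nat.card V - 1) ∈ V := by
  have hVn : V.Normal := inferInstance
  have hAc : ∀ a ∈ A, ∀ b ∈ A, ∀ w ∈ V, a * (b * w * b⁻¹) * a⁻¹ = b * (a * w * a⁻¹) * b⁻¹ := by
    intro a ha b hb w hw
    have h1 := hVcomm _ (hAA _ (A.inv_mem hb) _ (A.inv_mem ha)) w hw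
    have h1 : b⁻¹ * a⁻¹ * b * a * w = w * (b⁻¹ * a⁻¹ * b * a) := by simpa using h1
    have : a * b * (b⁻¹ * a⁻¹ * b * a * w) * a⁻¹ * b⁻¹ = a * b * (w * (b⁻¹ * a⁻¹ * b * a)) * a⁻¹ * b⁻¹ := by
      rw [h1]
    simp only [mul_assoc] at this ⊢
    simpa using this.symm
  -- minimal stable subgroup
  obtain ⟨W, hWmin⟩ := Set.Finite.exists_minimal (s := {W : Subgroup G | W ≤ V ∧ W ≠ ⊥ ∧
    ∀ a ∈ A, ∀ w ∈ W, a * w * a⁻¹ ∈ W}) (Set.toFinite _) ⟨V, le_rfl, hV, fun a _ w hw => hVn.conj_mem w hw a⟩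
  obtain ⟨⟨hWV, hW0, hWA⟩, hWm⟩ := hWmin
  have irr : ∀ W' : Subgroup G, W' ≤ W → (∀ a ∈ A, ∀ w ∈ W', a * w * a⁻¹ ∈ W') → W' = ⊥ ∨ W' = W := by
    intro W' h1 h2
    by_cases h : W' = ⊥
    · exact Or.inl h
    · exact Or.inr (le_antisymm h1 (hWm ⟨h1.trans hWV, h, h2⟩ h1))
  have hpow := aux_SPgrp A W (fun x hx y hy => hVcomm x (hWV hx) y (hWV hy)) hWA hW0
    (fun a ha b hb w hw => hAc a ha b hb w (hWV hw)) irr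
  -- the sum of conjugates
  let T : Subgroup G := ⨆ g : G, MulAut.conj g • W
  have hmemc : ∀ (g : G) (H : Subgroup G) (x : G), x ∈ MulAut.conj g • H ↔ g⁻¹ * x * g ∈ H := by
    intro g H x
    rw [Subgroup.mem_pointwise_smul_iff_inv_smul_mem, ← map_inv]
    simp [MulAut.conj_apply]
  have hTn : T.Normal := by
    refine ⟨fun t ht g => ?_⟩
    have : T ≤ MulAut.conj g⁻¹ • T := by
      refine iSup_le fun h x hx => ?_
      rw [hmemc] at hx ⊢
      apply le_iSup (fun g : G => MulAut.conj g • W) (g * h)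
      rw [hmemc]
      simpa [mul_assoc] using hx
    have := (hmemc _ _ _).1 (this ht)
    simpa [mul_assoc] using this
  have hcV : ∀ g : G, MulAut.conj g • W ≤ V := by
    intro g x hx
    rw [hmemc] at hx
    have := hVn.conj_mem _ (hWV hx) g
    simpa [mul_assoc] using this
  have hTV : T = V := by
    rcases hmin T hTn (iSup_le hcV) with h | h
    · exfalso
      apply hW0
      rw [eq_bot_iff, ← h]
      have := le_iSup (fun g : G => MulAut.conj g • W) 1
      simpa using this
    · exact h
  have hcA : ∀ g : G, ∀ a ∈ A, ∀ w ∈ MulAut.conj g • W, a * w * a⁻¹ ∈ MulAut.conj g • W := by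
    intro g a ha w hw
    rw [hmemc] at hw ⊢
    have := hWA _ (hA.conj_mem a ha g⁻¹) _ hw
    simpa [mul_assoc] using this
  have hcm : ∀ g : G, ∀ S : Subgroup G, (∀ a ∈ A, ∀ w ∈ S, a * w * a⁻¹ ∈ S) → 
      ¬ (MulAut.conj g • W ≤ S) → S ⊓ MulAut.conj g • W = ⊥ := by
    intro g S hS hnot
    have := irr (MulAut.conj g⁻¹ • (S ⊓ MulAut.conj g • W)) (by
      intro x hx
      rw [hmemc] at hx
      have := (hmemc _ _ _).1 hx.2
      simpa [mul_assoc] using this) (by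
      intro a ha w hw
      rw [hmemc] at hw ⊢
      have h1 := hS _ (hA.conj_mem a ha g) _ hw.1
      have h2 := hcA g _ (hA.conj_mem a ha g) _ hw.2
      refine ⟨?_, ?_⟩
      · simpa [mul_assoc] using h1
      · change _ ∈ MulAut.conj g • W
        simpa [mul_assoc] using h2)
    rcases this with h | h
    · rw [map_inv, inv_smul_eq_iff] at h
      rw [h]; simp
    · exfalso; apply hnot
      rw [map_inv, inv_smul_eq_iff] at h
      rw [← h]; exact inf_le_left
  have hdvd : ∃ j, Nat.card V = Nat.card W ^ j := by
    obtain ⟨S, hS⟩ := Set.Finite.exists_maximal (s := {S : Subgroup G | S ≤ V ∧ 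
      (∀ a ∈ A, ∀ w ∈ S, a * w * a⁻¹ ∈ S) ∧ ∃ j, Nat.card S = Nat.card W ^ j}) (Set.toFinite _)
      ⟨⊥, bot_le, by simp, 0, by simp⟩
    obtain ⟨⟨hSV, hSA, j, hj⟩, hSm⟩ := hS
    by_cases hall : ∀ g : G, MulAut.conj g • W ≤ S
    · have : V ≤ S := by rw [← hTV]; exact iSup_le hall
      exact ⟨j, by rw [← hj, le_antisymm this hSV]⟩
    · exfalso
      push Not at hall
      obtain ⟨g, hg⟩ := hall
      have hd := hcm g S hSA hg
      have hmem : ∀ x, x ∈ S ⊔ MulAut.conj g • W ↔ ∃ y ∈ S, ∃ z ∈ MulAut.conj g • W, y * z = x := by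
        intro x
        have hn : S ⊔ MulAut.conj g • W = S ⊔ MulAut.conj g • W := rfl
        have hle : S ≤ Subgroup.normalizer ((MulAut.conj g • W : Subgroup G) : Set G) := by
          intro s hs
          rw [Subgroup.mem_normalizer_iff]
          intro h
          constructor
          · intro hh
            rw [hVcomm s (hSV hs) h (hcV g hh)]; simpa using hh
          · intro hh
            have h3 : s⁻¹ * (s * h * s⁻¹) = (s * h * s⁻¹) * s⁻¹ :=
              hVcomm _ (V.inv_mem (hSV hs)) _ (hcV g hh)
            have : h = s * h * s⁻¹ := by
              have : s⁻¹ * (s * h * s⁻¹) * s = (s * h * s⁻¹) * s⁻¹ * s := by rw [h3]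
              simpa [mul_assoc] using this
            rw [this]; exact hh
        rw [← SetLike.mem_coe, Subgroup.coe_mul_of_left_le_normalizer_right _ _ hle, Set.mem_mul]
        rfl
      have hcard : Nat.card (S ⊔ MulAut.conj g • W : Subgroup G) = Nat.card S * Nat.card W := by
        have hcw : Nat.card (MulAut.conj g • W : Subgroup G) = Nat.card W :=
          (Nat.card_congr (Subgroup.equivSMul (MulAut.conj g) W).toEquiv).symm
        rw [← hcw, ← Nat.card_prod]
        symm
        refine Nat.card_congr (Equiv.ofBijective (fun x => ⟨x.1 * x.2, (hmem _).2 ⟨_, x.1.2, _, x.2.2, rfl⟩⟩) ⟨?_, ?_⟩)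
        · intro x y hxy
          exact Subgroup.mul_injective_of_disjoint (disjoint_iff.2 hd) (congrArg Subtype.val hxy)
        · rintro ⟨x, hx⟩
          obtain ⟨y, hy, z, hz, rfl⟩ := (hmem _).1 hx
          exact ⟨(⟨y, hy⟩, ⟨z, hz⟩), rfl⟩
      have := hSm (y := S ⊔ MulAut.conj g • W) ⟨sup_le hSV (hcV g), ?_, j + 1, by rw [hcard, hj, pow_succ]⟩ le_sup_left
      · exact hg (le_sup_right.trans this)
      · intro a ha w hw
        obtain ⟨y, hy, z, hz, rfl⟩ := (hmem _).1 hw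
        rw [hmem]
        exact ⟨_, hSA a ha y hy, _, hcA g a ha z hz, by simp [mul_assoc]⟩
  obtain ⟨j, hj⟩ := hdvd
  have hd : Nat.card W - 1 ∣ Nat.card V - 1 := by
    rw [hj]
    simpa using Nat.sub_dvd_pow_sub_pow (Nat.card W) 1 j
  have hfin : a ^ (Nat.card W - 1) ∈ V := by
    apply hcent
    have hle : T ≤ Subgroup.centralizer {a ^ (Nat.card W - 1)} := by
      refine iSup_le fun g x hx => ?_
      rw [hmemc] at hx
      have := hpow (g⁻¹ * a * g) (by simpa using hA.conj_mem a ha g⁻¹) _ hx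
      have h4 : (g⁻¹ * a * g) ^ (Nat.card W - 1) = g⁻¹ * a ^ (Nat.card W - 1) * g := by
        simpa using conj_pow (i := Nat.card W - 1) (a := g⁻¹) (b := a)
      rw [h4] at this
      rw [Subgroup.mem_centralizer_singleton_iff]
      generalize a ^ (Nat.card W - 1) = c at *
      have h5 : c * x * c⁻¹ = x := by
        have := congrArg (fun z => g * z * g⁻¹) this
        simpa [mul_assoc] using this
      calc x * c = c * x * c⁻¹ * c := by rw [h5]
        _ = c * x := by simp
    intro v hv
    have := hle (hTV ▸ hv)
    rw [Subgroup.mem_centralizer_singleton_iff] at this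
    rw [← this]; simp
  obtain ⟨k, hk⟩ := hd
  rw [hk, pow_mul]
  exact V.pow_mem hfin k

theorem aux_group {G C : Type} [Group G] [Finite G] [Group C] [IsCyclic C] (p n : ℕ)
    [hp : Fact p.Prime] (hn : 1 ≤ n) (U P I A : Subgroup G)
    (hU : IsCoatom U) (hcore : ∀ N : Subgroup G, N.Normal → N ≤ U → N = ⊥)
    (hidx : U.index = p ^ n) [hPn : P.Normal] [hIn : I.Normal] [hAn : A.Normal]
    (hPp : IsPGroup p P)
    (hII : ∀ a ∈ I, ∀ b ∈ I, a * b * a⁻¹ * b⁻¹ ∈ P)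
    (hIp : ∀ a ∈ I, a ^ p ∈ P → a ∈ P)
    (f : G →* C) (hf : ∀ g, f g = 1 → g ∈ I)
    (hAI : ∀ s ∈ I, s ^ (p ^ n - 1) ∈ P → ∀ a ∈ A, a * s * a⁻¹ * s⁻¹ ∈ P) :
    ∃ V : Subgroup G, V.Normal ∧ (∀ x ∈ V, ∀ y ∈ V, x * y = y * x) ∧ (∀ x ∈ V, x ^ p = 1) ∧
      V ⊓ U = ⊥ ∧ (∀ a ∈ A, ∀ b ∈ A, a * b * a⁻¹ * b⁻¹ ∈ V) ∧ (∀ a ∈ A, a ^ (p ^ n - 1) ∈ V) ∧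
      (A ≠ ⊥ → ∃ x ∈ A, x ∈ V ∧ x ≠ 1) := by
  have hpn : 1 < p ^ n := Nat.one_lt_pow (by omega) hp.out.one_lt
  -- normal nontrivial subgroups supplement U
  have hsup : ∀ N : Subgroup G, N.Normal → N ≠ ⊥ → N ⊔ U = ⊤ := by
    intro N hN h0
    by_contra h
    have hle : U ≤ N ⊔ U := le_sup_right
    have : N ⊔ U = U := by
      by_contra h2
      exact h (hU.2 _ (lt_of_le_of_ne hle (Ne.symm h2)))
    exact h0 (hcore N hN (by rw [← this]; exact le_sup_left))
  have hmulsup : ∀ N : Subgroup G, N.Normal → N ≠ ⊥ → ∀ g : G, ∃ x ∈ N, ∃ u ∈ U, x * u = g := by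
    intro N hN h0 g
    have : g ∈ N ⊔ U := by rw [hsup N hN h0]; trivial
    exact Subgroup.mem_sup_of_normal_left.1 this
  -- abelian normal subgroup meets U trivially
  have hab : ∀ N : Subgroup G, N.Normal → N ≠ ⊥ → (∀ x ∈ N, ∀ y ∈ N, x * y = y * x) → N ⊓ U = ⊥ := by
    intro N hN h0 hc
    refine hcore _ ⟨?_⟩ inf_le_right
    intro x hx g
    obtain ⟨y, hy, u, hu, rfl⟩ := hmulsup N hN h0 g
    have h1 : u * x * u⁻¹ ∈ N ⊓ U := ⟨hN.conj_mem _ hx.1 u, U.mul_mem (U.mul_mem hu hx.2) (U.inv_mem hu)⟩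
    have h2 : y * u * x * (y * u)⁻¹ = u * x * u⁻¹ := by
      have := hc y hy _ h1.1
      calc y * u * x * (y * u)⁻¹ = y * (u * x * u⁻¹) * y⁻¹ := by group
        _ = _ := by rw [this]; group
    rw [h2]; exact h1
  have hcard : ∀ N : Subgroup G, N.Normal → N ≠ ⊥ → (∀ x ∈ N, ∀ y ∈ N, x * y = y * x) → Nat.card N = p ^ n := by
    intro N hN h0 hc
    have hcompl : Subgroup.IsComplement' N U := by
      refine Subgroup.isComplement'_of_disjoint_and_mul_eq_univ (disjoint_iff.2 (hab N hN h0 hc)) ?_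
      ext g
      simp only [Set.mem_univ, iff_true]
      exact hmulsup N hN h0 g
    rw [← hidx, hcompl.index_eq_card]
  have hext : ∀ V : Subgroup G, (∀ a ∈ A, ∀ b ∈ A, a * b * a⁻¹ * b⁻¹ ∈ V) →
      (∀ a ∈ A, a ^ (p ^ n - 1) ∈ V) → A ≠ ⊥ → ∃ x ∈ A, x ∈ V ∧ x ≠ 1 := by
    intro V h1 h2 hA0
    by_contra! hno
    have hAc : ∀ x ∈ A, ∀ y ∈ A, x * y = y * x := by
      intro x hx y hy
      have := hno _ (A.mul_mem (hAn.conj_mem y hy x) (A.inv_mem hy)) (h1 x hx y hy)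
      rw [mul_inv_eq_one, mul_inv_eq_iff_eq_mul] at this
      exact this
    have hc := hcard A hAn hA0 hAc
    obtain ⟨x, hx⟩ := exists_prime_orderOf_dvd_card' (G := A) p
      (by rw [hc]; exact dvd_pow_self p (by omega))
    have h3 := hno _ (A.pow_mem x.2 _) (h2 x.1 x.2)
    have h4 : x ^ (p ^ n - 1) = 1 := Subtype.ext (by simpa using h3)
    have h5 := orderOf_dvd_of_pow_eq_one h4
    rw [hx] at h5
    have h6 : p ∣ p ^ n := dvd_pow_self p (by omega)
    have h7 := (Nat.dvd_sub h6 h5)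
    rw [Nat.sub_sub_self hpn.le] at h7
    exact hp.out.one_lt.ne' (Nat.dvd_one.1 h7)
  by_cases hP : P = ⊥
  · have hI : I = ⊥ := by
      by_contra hI
      have hIc : ∀ x ∈ I, ∀ y ∈ I, x * y = y * x := by
        intro x hx y hy
        have := hII x hx y hy
        rw [hP, Subgroup.mem_bot] at this
        rw [mul_inv_eq_one, mul_inv_eq_iff_eq_mul] at this
        exact this
      have hc := hcard I hIn hI hIc
      obtain ⟨x, hx⟩ := exists_prime_orderOf_dvd_card' (G := I) p (by rw [hc]; exact dvd_pow_self p (by omega))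
      have h1 : (x : G) ∈ P := by
        apply hIp _ x.2
        have := pow_orderOf_eq_one x
        rw [hx] at this
        have := congrArg Subtype.val this
        rw [Subgroup.coe_pow] at this
        rw [this]; exact P.one_mem
      rw [hP, Subgroup.mem_bot] at h1
      have : x = 1 := Subtype.ext h1
      rw [this, orderOf_one] at hx
      exact hp.out.one_lt.ne hx
    have hinj : Function.Injective f := by
      rw [injective_iff_map_eq_one]
      intro g hg
      have := hf g hg
      rwa [hI, Subgroup.mem_bot] at this
    have hGc : ∀ x y : G, x * y = y * x := by
      intro x y
      apply hinj
      let _ : CommGroup C := IsCyclic.commGroup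
      rw [map_mul, map_mul, mul_comm]
    let V : Subgroup G := 
      { carrier := {x | x ^ p = 1}
        mul_mem' := by
          intro a b ha hb
          have : Commute a b := hGc a b
          simp only [Set.mem_ofPred_eq] at *
          rw [this.mul_pow, ha, hb, one_mul]
        one_mem' := one_pow p
        inv_mem' := by
          intro a ha
          simp only [Set.mem_ofPred_eq] at *
          rw [inv_pow, ha, inv_one] }
    have hVn : V.Normal := ⟨fun x hx g => by rw [hGc g x]; simpa using hx⟩
    have hU0 : U = ⊥ := hcore U ⟨fun x hx g => by rw [hGc g x]; simpa using hx⟩ le_rfl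
    have hV0 : V ≠ ⊥ := by
      intro h
      have hG : Nat.card G = p ^ n := by rw [← hidx, hU0, Subgroup.index_bot]
      obtain ⟨x, hx⟩ := exists_prime_orderOf_dvd_card' (G := G) p (by rw [hG]; exact dvd_pow_self p (by omega))
      have : x ∈ V := by change x ^ p = 1; rw [← hx]; exact pow_orderOf_eq_one x
      rw [h, Subgroup.mem_bot] at this
      rw [this, orderOf_one] at hx
      exact hp.out.one_lt.ne hx
    have hVt : V = ⊤ := by
      have := hsup V hVn hV0
      rwa [hU0, sup_bot_eq] at this
    have hA1 : ∀ a ∈ A, ∀ b ∈ A, a * b * a⁻¹ * b⁻¹ ∈ V := by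
      intro a _ b _; rw [hVt]; trivial
    have hA2 : ∀ a ∈ A, a ^ (p ^ n - 1) ∈ V := by
      intro a _; rw [hVt]; trivial
    exact ⟨V, hVn, fun x _ y _ => hGc x y, fun x hx => hx, by rw [hU0, inf_bot_eq], hA1, hA2,
      hext V hA1 hA2⟩
  · -- V = elements of the centre of P killed by p
    let V : Subgroup G := 
      { carrier := {x | x ∈ P ∧ (∀ y ∈ P, y * x * y⁻¹ = x) ∧ x ^ p = 1}
        mul_mem' := by
          rintro a b ⟨ha, ha1, ha2⟩ ⟨hb, hb1, hb2⟩
          have : Commute a b := by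
            have := hb1 a ha
            rwa [mul_inv_eq_iff_eq_mul] at this
          refine ⟨P.mul_mem ha hb, ?_, ?_⟩
          · intro y hy
            calc y * (a * b) * y⁻¹ = (y * a * y⁻¹) * (y * b * y⁻¹) := by group
              _ = a * b := by rw [ha1 y hy, hb1 y hy]
          · rw [this.mul_pow, ha2, hb2, one_mul]
        one_mem' := ⟨P.one_mem, by simp, one_pow p⟩
        inv_mem' := by
          rintro a ⟨ha, ha1, ha2⟩
          refine ⟨P.inv_mem ha, ?_, by rw [inv_pow, ha2, inv_one]⟩
          intro y hy
          calc y * a⁻¹ * y⁻¹ = (y * a * y⁻¹)⁻¹ := by group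
            _ = _ := by rw [ha1 y hy] }
    have hVmem : ∀ x, x ∈ V ↔ x ∈ P ∧ (∀ y ∈ P, y * x * y⁻¹ = x) ∧ x ^ p = 1 := fun _ => Iff.rfl
    have hVn : V.Normal := by
      refine ⟨?_⟩
      rintro x ⟨hx, hx1, hx2⟩ g
      refine ⟨hPn.conj_mem _ hx g, ?_, by rw [conj_pow, hx2]; simp⟩
      intro y hy
      have := hx1 (g⁻¹ * y * g) (by simpa using hPn.conj_mem y hy g⁻¹)
      calc y * (g * x * g⁻¹) * y⁻¹ = g * ((g⁻¹ * y * g) * x * (g⁻¹ * y * g)⁻¹) * g⁻¹ := by group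
        _ = _ := by rw [this]
    have hVc : ∀ x ∈ V, ∀ y ∈ V, x * y = y * x := by
      intro x hx y hy
      have := hy.2.1 x hx.1
      rwa [mul_inv_eq_iff_eq_mul] at this
    have hV0 : V ≠ ⊥ := by
      intro h
      have _ : Nontrivial P := (Subgroup.nontrivial_iff_ne_bot P).2 hP
      have _ := hPp.center_nontrivial
      have hZ : IsPGroup p (Subgroup.center P) := hPp.to_subgroup _
      obtain ⟨k, hk0, hk⟩ := hZ.nontrivial_iff_card.1 inferInstance
      obtain ⟨x, hx⟩ := exists_prime_orderOf_dvd_card' (G := Subgroup.center P) p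
        (by rw [hk]; exact dvd_pow_self p (by omega))
      have hxV : ((x : P) : G) ∈ V := by
        refine ⟨x.1.2, ?_, ?_⟩
        · intro y hy
          have := Subgroup.mem_center_iff.1 x.2 ⟨y, hy⟩
          have := congrArg Subtype.val this
          rw [mul_inv_eq_iff_eq_mul]
          exact this
        · have := pow_orderOf_eq_one x
          rw [hx] at this
          have := congrArg (fun z : Subgroup.center P => ((z : P) : G)) this
          simpa using this
      rw [h, Subgroup.mem_bot] at hxV
      have : x = 1 := Subtype.ext (Subtype.ext hxV)
      rw [this, orderOf_one] at hx
      exact hp.out.one_lt.ne hx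
    have hVU := hab V hVn hV0 hVc
    have hVcard := hcard V hVn hV0 hVc
    have hmin : ∀ W : Subgroup G, W.Normal → W ≤ V → W = ⊥ ∨ W = V := by
      intro W hWn hWV
      by_cases h : W = ⊥
      · exact Or.inl h
      · right
        refine Subgroup.eq_of_le_of_card_ge hWV ?_
        rw [hVcard, hcard W hWn h (fun x hx y hy => hVc x (hWV hx) y (hWV hy))]
    have hcent : ∀ g : G, (∀ v ∈ V, g * v * g⁻¹ = v) → g ∈ V := by
      let Z : Subgroup G := Subgroup.centralizer (V : Set G)
      have hZ : ∀ g, g ∈ Z ↔ ∀ v ∈ V, g * v * g⁻¹ = v := by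
        intro g
        rw [Subgroup.mem_centralizer_iff]
        refine forall₂_congr fun v _ => ?_
        rw [mul_inv_eq_iff_eq_mul]
        exact eq_comm
      have hZU : Z ⊓ U = ⊥ := by
        refine hcore _ ⟨?_⟩ inf_le_right
        intro x hx g
        obtain ⟨y, hy, u, hu, rfl⟩ := hmulsup V hVn hV0 g
        have hux : u * x * u⁻¹ ∈ Z ⊓ U := by
          refine ⟨?_, U.mul_mem (U.mul_mem hu hx.2) (U.inv_mem hu)⟩
          refine (hZ _).2 ?_
          intro v hv
          have h1 := (hZ x).1 hx.1 (u⁻¹ * v * u) (by simpa using hVn.conj_mem v hv u⁻¹)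
          calc u * x * u⁻¹ * v * (u * x * u⁻¹)⁻¹ = u * (x * (u⁻¹ * v * u) * x⁻¹) * u⁻¹ := by group
            _ = _ := by rw [h1]; group
        have h2 : y * u * x * (y * u)⁻¹ = u * x * u⁻¹ := by
          have := (hZ _).1 hux.1 y hy
          rw [mul_inv_eq_iff_eq_mul] at this
          calc y * u * x * (y * u)⁻¹ = y * (u * x * u⁻¹) * y⁻¹ := by group
            _ = _ := by rw [← this]; group
        rw [h2]; exact hux
      intro g hg
      obtain ⟨y, hy, u, hu, rfl⟩ := hmulsup V hVn hV0 g
      have hyZ : y ∈ Z := (hZ y).2 (fun v hv => by rw [hVc y hy v hv]; group)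
      have huZ : u ∈ Z := by
        have := Z.mul_mem (Z.inv_mem hyZ) ((hZ _).2 hg)
        simpa using this
      have : u ∈ Z ⊓ U := ⟨huZ, hu⟩
      rw [hZU, Subgroup.mem_bot] at this
      rw [this, mul_one]; exact hy
    have hPV : P = V := by
      refine le_antisymm ?_ (fun x hx => hx.1)
      intro x hx
      exact hcent x (fun v hv => hv.2.1 x hx)
    have hIpow : ∀ s ∈ I, s ^ (p ^ n - 1) ∈ V := by
      intro s hs
      have := aux_clifford I V hVc hV0 hmin hcent (fun a ha b hb => hPV ▸ hII a ha b hb) s hs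
      rwa [hVcard] at this
    have hcommI : ∀ s ∈ I, ∀ a ∈ A, a * s * a⁻¹ * s⁻¹ ∈ V := by
      intro s hs
      have := hAI s hs (hPV ▸ hIpow s hs)
      rwa [hPV] at this
    have hAA : ∀ a ∈ A, ∀ b ∈ A, a * b * a⁻¹ * b⁻¹ ∈ V := by
      let q : G →* G ⧸ V := QuotientGroup.mk' V
      have hq : ∀ a b : G, Commute (q a) (q b) ↔ a * b * a⁻¹ * b⁻¹ ∈ V := by
        intro a b
        rw [← QuotientGroup.eq_one_iff (N := V)]
        change _ ↔ q (a * b * a⁻¹ * b⁻¹) = 1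
        rw [map_mul, map_mul, map_mul, map_inv, map_inv, mul_inv_eq_one, mul_inv_eq_iff_eq_mul]
        exact Iff.rfl
      obtain ⟨⟨_, x, hx, rfl⟩, hgen⟩ := IsCyclic.exists_generator (α := A.map f)
      have hdec : ∀ a ∈ A, ∃ (i : ℤ), ∃ s ∈ I, a = x ^ i * s := by
        intro a ha
        obtain ⟨i, hi⟩ := Subgroup.mem_zpowers_iff.1 (hgen ⟨f a, a, ha, rfl⟩)
        have hi := congrArg Subtype.val hi
        simp only [Subgroup.coe_zpow] at hi
        refine ⟨i, (x ^ i)⁻¹ * a, hf _ ?_, by group⟩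
        rw [map_mul, map_inv, map_zpow, hi]
        simp
      intro a ha b hb
      rw [← hq]
      obtain ⟨i, s, hs, rfl⟩ := hdec a ha
      obtain ⟨j, t, ht, rfl⟩ := hdec b hb
      rw [map_mul, map_mul, map_zpow, map_zpow]
      have hst : Commute (q s) (q t) := (hq _ _).2 (hPV ▸ hII s hs t ht)
      have hxs : Commute (q x) (q s) := (hq _ _).2 (hcommI s hs x hx)
      have hxt : Commute (q x) (q t) := (hq _ _).2 (hcommI t ht x hx)
      refine Commute.mul_left (Commute.mul_right ?_ ?_) (Commute.mul_right ?_ ?_)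
      · exact (Commute.refl (q x)).zpow_zpow i j
      · exact hxt.zpow_left i
      · exact (hxs.zpow_left j).symm
      · exact hst
    have hA2 : ∀ a ∈ A, a ^ (p ^ n - 1) ∈ V := by
      intro a ha
      have := aux_clifford A V hVc hV0 hmin hcent hAA a ha
      rwa [hVcard] at this
    exact ⟨V, hVn, hVc, fun x hx => hx.2.2, hVU, hAA, hA2, hext V hAA hA2⟩

end Aux

section Aux2

open NNReal

theorem aux_cyclic_aut (k : Type) [Field k] [Finite k] (p : ℕ) [Fact p.Prime] [CharP k p] :
    IsCyclic (RingAut k) := by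
  let _ : Algebra (ZMod p) k := ZMod.algebra k p
  let F : RingAut k →* (k ≃ₐ[ZMod p] k) :=
    { toFun := fun f => AlgEquiv.ofRingEquiv (f := f) (fun x => by
        have : ((f : k →+* k).comp (algebraMap (ZMod p) k)) = algebraMap (ZMod p) k :=
          Subsingleton.elim _ _
        exact RingHom.congr_fun this x)
      map_one' := rfl
      map_mul' := fun _ _ => rfl }
  refine isCyclic_of_injective F ?_
  intro f g h
  ext x
  exact AlgEquiv.congr_fun h x

theorem aux_ram {M G : Type} [Field M] [Group G] [Finite G] [MulSemiringAction G M]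
    [FaithfulSMul G M] (p : ℕ) [hp : Fact p.Prime] (v : Valuation M ℝ≥0)
    (hv : ∀ (g : G) (x : M), v (g • x) = v x) (hvp : v (p : M) < 1)
    (hvm : ∀ m : ℕ, Nat.Coprime p m → v (m : M) = 1)
    [Finite (IsLocalRing.ResidueField v.valuationSubring)] :
    ∃ P I : Subgroup G, P.Normal ∧ I.Normal ∧ IsPGroup p P ∧
      (∀ a ∈ I, ∀ b ∈ I, a * b * a⁻¹ * b⁻¹ ∈ P) ∧
      (∀ a ∈ I, a ^ p ∈ P → a ∈ P) ∧
      (∃ f : G →* RingAut (IsLocalRing.ResidueField v.valuationSubring), ∀ g, f g = 1 → g ∈ I) ∧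
      IsCyclic (RingAut (IsLocalRing.ResidueField v.valuationSubring)) ∧
      (∀ (a : G) (e : ℕ), (∀ u : M, v (u ^ e - 1) < 1 → v (a • u - u) < 1) →
        ∀ s ∈ I, s ^ e ∈ P → a * s * a⁻¹ * s⁻¹ ∈ P) := by
  let O := v.valuationSubring
  let k := IsLocalRing.ResidueField O
  let res : O →+* k := IsLocalRing.residue O
  have hres : ∀ (x y : M) (hx : v x ≤ 1) (hy : v y ≤ 1),
      res ⟨x, hx⟩ = res ⟨y, hy⟩ ↔ v (x - y) < 1 := by
    intro x y hx hy
    rw [← sub_eq_zero, ← map_sub]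
    exact (IsLocalRing.residue_eq_zero_iff _).trans (Valuation.mem_maximalIdeal_iff M v)
  have hchar : CharP k p := by
    refine (CharP.charP_iff_prime_eq_zero hp.out).2 ?_
    have : v (p : M) ≤ 1 := hvp.le
    have h1 : res ⟨(p : M), this⟩ = res ⟨0, by simp⟩ := (hres _ _ _ (by simp)).2 (by simpa using hvp)
    have h2 : (⟨(p : M), this⟩ : O) = (p : O) := Subtype.ext (by simp)
    rw [h2, map_natCast] at h1
    rw [h1]
    exact map_zero res
  have hΦ0 : ∀ (g : G) (x : M), v (g • x / x) ≤ 1 := by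
    intro g x
    by_cases hx : x = 0
    · simp [hx]
    · rw [map_div₀, hv, div_self (by simpa using hx)]
  let Φ : G → M → k := fun g x => res ⟨g • x / x, hΦ0 g x⟩
  let act : MulSemiringAction G O :=
    { smul := fun g x => ⟨g • (x : M), by have := x.2; rw [Valuation.mem_valuationSubring_iff] at *; rwa [hv]⟩
      one_smul := fun x => Subtype.ext (one_smul G (x : M))
      mul_smul := fun g h x => Subtype.ext (mul_smul g h (x : M))
      smul_zero := fun g => Subtype.ext (smul_zero g)
      smul_add := fun g x y => Subtype.ext (smul_add g (x : M) y)
      smul_one := fun g => Subtype.ext (smul_one g)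
      smul_mul := fun g x y => Subtype.ext (smul_mul' g (x : M) y) }
  have hΦ1 : ∀ (g : G) (x : M), x ≠ 0 → (Φ g x = 1 ↔ v (g • x - x) < v x) := by
    intro g x hx
    have h1 : (1 : k) = res ⟨1, by simp⟩ := (map_one res).symm
    have hvx : 0 < v x := by simpa [zero_lt_iff] using hx
    rw [h1]
    refine (hres _ _ _ _).trans ?_
    rw [← div_self hx, ← _root_.sub_div, map_div₀, div_lt_one₀ hvx]
  have hΦne : ∀ (g : G) (x : M), x ≠ 0 → Φ g x ≠ 0 := by
    intro g x hx h
    have h1 : (0 : k) = res ⟨0, by simp⟩ := (map_zero res).symm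
    rw [h1] at h
    have h := (hres _ _ _ _).1 h
    rw [sub_zero, map_div₀, hv, div_self (by simpa using hx)] at h
    exact lt_irrefl _ h
  let I : Subgroup G :=
    { carrier := {g | ∀ x, v x ≤ 1 → v (g • x - x) < 1}
      mul_mem' := by
        intro a b ha hb x hx
        have h1 := ha x hx
        have h2 : v (a • (b • x - x)) < 1 := by rw [hv]; exact hb x hx
        have : (a * b) • x - x = a • (b • x - x) + (a • x - x) := by
          rw [smul_sub, mul_smul]; ring
        rw [this]
        exact v.map_add_lt h2 h1
      one_mem' := by intro x hx; simp
      inv_mem' := by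
        intro a ha x hx
        have := ha x hx
        rw [← hv a⁻¹, smul_sub, inv_smul_smul, ← neg_sub, Valuation.map_neg] at this
        exact this }
  have hI : ∀ g, g ∈ I ↔ ∀ x, v x ≤ 1 → v (g • x - x) < 1 := fun _ => Iff.rfl
  have hΦmul : ∀ s ∈ I, ∀ (t : G) (x : M), x ≠ 0 → Φ (s * t) x = Φ s x * Φ t x := by
    intro s hs t x hx
    have h1 : Φ t x = res ⟨s • (t • x / x), (hv s (t • x / x)).le.trans (hΦ0 t x)⟩ := by
      change res _ = _
      rw [hres, ← neg_sub, Valuation.map_neg]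
      exact hs _ (hΦ0 t x)
    rw [h1]
    change res _ = res _ * res _
    rw [← map_mul]
    congr 1
    apply Subtype.ext
    change (s * t) • x / x = s • x / x * s • (t • x / x)
    have hsx : s • x ≠ 0 := by rwa [Ne, smul_eq_zero_iff_eq]
    rw [smul_div₀', mul_smul]
    field_simp
  have hPI : ∀ g : G, (∀ x, x ≠ 0 → Φ g x = 1) → g ∈ I := by
    intro g hg x hx
    by_cases h0 : x = 0
    · simp [h0]
    · exact ((hΦ1 g x h0).1 (hg x h0)).trans_le hx
  have hΦone : ∀ x : M, x ≠ 0 → Φ 1 x = 1 := by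
    intro x hx
    rw [hΦ1 _ _ hx]
    simpa [zero_lt_iff] using hx
  let P : Subgroup G :=
    { carrier := {g | ∀ x, x ≠ 0 → Φ g x = 1}
      mul_mem' := by
        intro a b ha hb x hx
        rw [hΦmul a (hPI a ha) b x hx, ha x hx, hb x hx, one_mul]
      one_mem' := hΦone
      inv_mem' := by
        intro a ha x hx
        have := hΦmul a (hPI a ha) a⁻¹ x hx
        rw [mul_inv_cancel, hΦone x hx, ha x hx, one_mul] at this
        exact this.symm }
  have hP : ∀ g, g ∈ P ↔ ∀ x, x ≠ 0 → Φ g x = 1 := fun _ => Iff.rfl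
  have hPI : P ≤ I := hPI
  have hPn : P.Normal := by
    refine ⟨fun a ha g => ?_⟩
    rw [hP] at *
    intro x hx
    have hx' : g⁻¹ • x ≠ 0 := by rwa [Ne, smul_eq_zero_iff_eq]
    have := (hΦ1 _ _ hx').1 (ha _ hx')
    rw [hΦ1 _ _ hx]
    rw [hv, ← hv g, smul_sub, smul_inv_smul] at this
    rwa [mul_smul, mul_smul]
  have hIn : I.Normal := by
    refine ⟨fun a ha g => ?_⟩
    rw [hI] at *
    intro x hx
    have := ha (g⁻¹ • x) (by rwa [hv])
    rw [← hv g, smul_sub, smul_inv_smul] at this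
    rwa [mul_smul, mul_smul]
  have hΦpow : ∀ s ∈ I, ∀ (j : ℕ) (x : M), x ≠ 0 → Φ (s ^ j) x = Φ s x ^ j := by
    intro s hs j x hx
    induction j with
    | zero => rw [pow_zero, pow_zero, hΦone x hx]
    | succ j ih => rw [pow_succ, pow_succ, hΦmul _ (I.pow_mem hs j) _ _ hx, ih]
  have hcommP : ∀ a b : G, a ∈ I → b ∈ I → (∀ x, x ≠ 0 → Φ a x = Φ b x) → a * b⁻¹ ∈ P := by
    intro a b ha hb h
    rw [hP]
    intro x hx
    have h1 := hΦmul (a * b⁻¹) (I.mul_mem ha (I.inv_mem hb)) b x hx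
    rw [inv_mul_cancel_right, h x hx] at h1
    exact (mul_eq_right₀ (hΦne b x hx)).1 h1.symm
  refine ⟨P, I, hPn, hIn, ?_, ?_, ?_, ⟨MulSemiringAction.toRingAut G k, ?_⟩, aux_cyclic_aut k p, ?_⟩
  · -- P is a p-group
    have hkey : ∀ h ∈ P, ∀ m : ℕ, Nat.Coprime p m → h ^ m = 1 → h = 1 := by
      intro h hh m hm hpow
      apply FaithfulSMul.eq_of_smul_eq_smul (α := M)
      intro x
      rw [one_smul, ← sub_eq_zero]
      by_contra hy
      set y := h • x - x with hydef
      have hsum : ∑ j ∈ Finset.range m, h ^ j • y = 0 := by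
        have : ∀ j, h ^ j • y = h ^ (j + 1) • x - h ^ j • x := by
          intro j; rw [hydef, smul_sub, pow_succ, mul_smul]
        simp only [this]
        rw [Finset.sum_range_sub (fun j => h ^ j • x), hpow, pow_zero, sub_self]
      have h2 : v (∑ j ∈ Finset.range m, (h ^ j • y - y)) < v y := by
        apply Valuation.map_sum_lt
        · simpa using hy
        · intro j _
          exact (hΦ1 _ _ hy).1 (P.pow_mem hh j y hy)
      rw [Finset.sum_sub_distrib, hsum, zero_sub, Valuation.map_neg, Finset.sum_const,
        Finset.card_range, nsmul_eq_mul, map_mul, hvm m hm, one_mul] at h2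
      exact lt_irrefl _ h2
    intro g
    obtain ⟨j, m, hm, hjm⟩ := Nat.exists_eq_pow_mul_and_not_dvd (n := orderOf g)
      (orderOf_pos_iff.2 (isOfFinOrder_of_finite g)).ne' p hp.out.ne_one
    refine ⟨j, ?_⟩
    have := hkey ((g : G) ^ p ^ j) (P.pow_mem g.2 _) m ((Nat.Prime.coprime_iff_not_dvd hp.out).2 hm) (by
      rw [← pow_mul, ← hjm]
      have := pow_orderOf_eq_one g
      exact congrArg Subtype.val this)
    exact Subtype.ext this
  · intro a ha b hb
    have := hcommP (a * b) (b * a) (I.mul_mem ha hb) (I.mul_mem hb ha) (fun x hx => by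
      rw [hΦmul a ha _ _ hx, hΦmul b hb _ _ hx, mul_comm])
    simpa [mul_assoc] using this
  · intro a ha hap x hx
    have h1 := hap x hx
    rw [hΦpow a ha p x hx] at h1
    have h2 : (Φ a x - 1) ^ p = 0 := by rw [sub_pow_char, h1, one_pow, sub_self]
    exact sub_eq_zero.1 (pow_eq_zero_iff hp.out.ne_zero |>.1 h2)
  · intro g hg x hx
    have h1 := RingEquiv.congr_fun hg (res ⟨x, hx⟩)
    change g • (res ⟨x, hx⟩) = res ⟨x, hx⟩ at h1
    have h2 := IsLocalRing.ResidueField.residue_smul G g (⟨x, hx⟩ : O)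
    rw [show g • (res ⟨x, hx⟩) = res (g • (⟨x, hx⟩ : O)) from h2.symm] at h1
    exact (hres (g • x) x (by rwa [hv]) hx).1 h1
  · intro a e hae s hs hse
    have has : a * s * a⁻¹ ∈ I := hIn.conj_mem s hs a
    refine hcommP _ _ has hs ?_
    intro x hx
    have hy : a⁻¹ • x ≠ 0 := by rwa [Ne, smul_eq_zero_iff_eq]
    have h1 : Φ (a * s * a⁻¹) x = Φ s (a⁻¹ • x) := by
      have h2 := hse _ hy
      rw [hΦpow s hs e _ hy] at h2
      have h3 : v ((s • (a⁻¹ • x) / (a⁻¹ • x)) ^ e - 1) < 1 := by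
        rw [← hres _ _ (by rw [map_pow]; exact pow_le_one₀ zero_le (hΦ0 _ _)) (by simp)]
        rw [show res ⟨1, _⟩ = 1 from map_one res, ← h2]
        exact map_pow res (⟨_, hΦ0 s (a⁻¹ • x)⟩ : O) e
      have h4 := hae _ h3
      rw [← hres _ _ (by rw [hv]; exact hΦ0 _ _) (hΦ0 _ _)] at h4
      rw [show Φ s (a⁻¹ • x) = res ⟨_, hΦ0 s (a⁻¹ • x)⟩ from rfl, ← h4]
      change res _ = res _
      congr 2
      rw [smul_div₀', smul_inv_smul, mul_smul, mul_smul]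
    rw [h1]
    -- Φ s is trivial on units
    have hu : v (a⁻¹ • x / x) = 1 := by
      rw [map_div₀, hv, div_self (by simpa using hx)]
    have hu0 : a⁻¹ • x / x ≠ 0 := div_ne_zero hy hx
    have h5 : Φ s (a⁻¹ • x / x) = 1 := by
      rw [hΦ1 _ _ hu0, hu]
      exact hs _ hu.le
    have h6 : Φ s (a⁻¹ • x) = Φ s (a⁻¹ • x / x) * Φ s x := by
      change res _ = res _ * res _
      rw [← map_mul]
      congr 1
      apply Subtype.ext
      change s • (a⁻¹ • x) / (a⁻¹ • x) = s • (a⁻¹ • x / x) / (a⁻¹ • x / x) * (s • x / x)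
      have hsx : s • x ≠ 0 := by rwa [Ne, smul_eq_zero_iff_eq]
      rw [smul_div₀']
      field_simp
    rw [h6, h5, one_mul]

theorem aux_val (p : ℕ) [hp : Fact p.Prime] (M : Type) [Field M] [Algebra ℚ_[p] M]
    [Algebra.IsAlgebraic ℚ_[p] M] :
    ∃ v : Valuation M ℝ≥0, ∀ x, (v x : ℝ) = spectralNorm ℚ_[p] M x := by
  let _ : NormedField M := spectralNorm.normedField ℚ_[p] M
  have _ : IsUltrametricDist M :=
    IsUltrametricDist.isUltrametricDist_of_forall_norm_add_le_max_norm
      (fun x y => isNonarchimedean_spectralNorm x y)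
  exact ⟨NormedField.valuation, fun x => rfl⟩

theorem aux_fin (p : ℕ) [hp : Fact p.Prime] (M : Type) [Field M] [Algebra ℚ_[p] M]
    [FiniteDimensional ℚ_[p] M] (v : Valuation M ℝ≥0)
    (hv : ∀ x, (v x : ℝ) = spectralNorm ℚ_[p] M x) :
    Finite (IsLocalRing.ResidueField v.valuationSubring) := by
  let _ : NormedField M := spectralNorm.normedField ℚ_[p] M
  let _ : NormedAlgebra ℚ_[p] M := spectralNorm.normedAlgebra ℚ_[p] M
  have hn : ∀ x : M, ‖x‖ = v x := fun x => (hv x).symm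
  have _ : ProperSpace M := FiniteDimensional.proper ℚ_[p] M
  obtain ⟨t, hfin, hcov⟩ := Metric.totallyBounded_iff.1
    (isCompact_closedBall (0 : M) 1).totallyBounded 1 one_pos
  let O := v.valuationSubring
  let res : O →+* IsLocalRing.ResidueField O := IsLocalRing.residue O
  have hres : ∀ (x y : O), v ((x : M) - y) < 1 → res x = res y := by
    intro x y h
    rw [← sub_eq_zero, ← map_sub]
    exact (IsLocalRing.residue_eq_zero_iff _).2 ((Valuation.mem_maximalIdeal_iff M v).2 h)
  have _ : Finite t := hfin
  have hex : ∀ z : IsLocalRing.ResidueField O, ∃ y : t, ∃ x : O, res x = z ∧ v ((x : M) - y) < 1 := by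
    intro z
    obtain ⟨x, rfl⟩ := IsLocalRing.residue_surjective z
    have hx : (x : M) ∈ Metric.closedBall (0 : M) 1 := by
      rw [mem_closedBall_zero_iff, hn]
      exact_mod_cast x.2
    obtain ⟨y, hy, hxy⟩ := Set.mem_iUnion₂.1 (hcov hx)
    rw [Metric.mem_ball, dist_eq_norm, hn] at hxy
    exact ⟨⟨y, hy⟩, x, rfl, by exact_mod_cast hxy⟩
  choose F X hX1 hX2 using hex
  refine Finite.of_injective F ?_
  intro a b hab
  rw [← hX1 a, ← hX1 b]
  apply hres
  have h1 := hX2 a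
  have h2 := hX2 b
  rw [← hab] at h2
  have : (X a : M) - X b = (X a - F a) - (X b - F a) := by ring
  rw [this]
  exact Valuation.map_sub_lt v h1 h2

theorem aux_root {Ω : Type} [Field Ω] (e : ℕ) (he : 0 < e)
    (N : Valuation Ω ℝ≥0) (ζ : Ω) (hζ : IsPrimitiveRoot ζ e) (a : Ω ≃+* Ω)
    (ha : a ζ = ζ) (hN : ∀ x, N (a x) = N x) (u : Ω) (hu : N (u ^ e - 1) < 1) :
    N (a u - u) < 1 := by
  have h1 : u ^ e - 1 = ∏ w ∈ Polynomial.nthRootsFinset e (1 : Ω), (u - w) := by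
    have := congrArg (Polynomial.eval u) (Polynomial.X_pow_sub_one_eq_prod he hζ)
    simpa [Polynomial.eval_prod] using this
  have h2 : ∃ w ∈ Polynomial.nthRootsFinset e (1 : Ω), N (u - w) < 1 := by
    by_contra! h
    rw [h1, map_prod] at hu
    exact absurd (Finset.one_le_prod' h) (not_le.2 hu)
  obtain ⟨w, hw, hlt⟩ := h2
  have : NeZero e := ⟨he.ne'⟩
  obtain ⟨i, _, rfl⟩ := hζ.eq_pow_of_pow_eq_one ((Polynomial.mem_nthRootsFinset he 1).1 hw)
  have h3 := hN (u - ζ ^ i)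
  rw [map_sub, map_pow, ha] at h3
  have : a u - u = (a u - ζ ^ i) - (u - ζ ^ i) := by ring
  rw [this]
  exact Valuation.map_sub_lt N (h3 ▸ hlt) hlt

theorem aux_V (p : ℕ) [hp : Fact p.Prime] (n : ℕ) (hn : 1 ≤ n)
    (K Ω : Type) [Field K] [Field Ω] [Algebra ℚ_[p] K] [Algebra ℚ_[p] Ω] [Algebra K Ω]
    [IsScalarTower ℚ_[p] K Ω] [FiniteDimensional ℚ_[p] K] [Algebra.IsAlgebraic ℚ_[p] Ω]
    [IsGalois K Ω]
    (ζ : Ω) (hζ : IsPrimitiveRoot ζ (p ^ n - 1))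
    (E : IntermediateField K Ω) (hE : Module.finrank K E = p ^ n)
    (hprim : ∀ F : IntermediateField K Ω, F ≤ E → F = ⊥ ∨ F = E) :
    ∃ (M : IntermediateField K Ω) (V : Subgroup (Ω ≃ₐ[K] Ω)), Normal K M ∧ FiniteDimensional K M ∧
      E ≤ M ∧ V.Normal ∧ (∀ σ ∈ V, ∀ τ ∈ V, ∀ x ∈ M, σ (τ x) = τ (σ x)) ∧
      (∀ σ ∈ V, ∀ x ∈ M, (σ ^ p) x = x) ∧
      (∀ σ ∈ V, (∀ x ∈ E, σ x = x) → ∀ x ∈ M, σ x = x) ∧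
      (∀ a b : Ω ≃ₐ[K] Ω, a ζ = ζ → b ζ = ζ → a * b * a⁻¹ * b⁻¹ ∈ V) ∧
      (∀ a : Ω ≃ₐ[K] Ω, a ζ = ζ → a ^ (p ^ n - 1) ∈ V) ∧
      (∀ σ : Ω ≃ₐ[K] Ω, (∀ x ∈ M, (∀ τ ∈ V, τ x = x) → σ x = x) → σ ∈ V) ∧
      ((∃ a : Ω ≃ₐ[K] Ω, a ζ = ζ ∧ ∃ x ∈ M, a x ≠ x) → ∃ σ ∈ V, σ ζ = ζ ∧ ∃ x ∈ M, σ x ≠ x) ∧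
      (∀ N : Subgroup (Ω ≃ₐ[K] Ω), N.Normal → (∃ σ ∈ N, ∃ x ∈ E, σ x ≠ x) →
        ∀ γ, ∃ σ ∈ N, ∃ τ : Ω ≃ₐ[K] Ω, (∀ x ∈ E, τ x = x) ∧ γ = σ * τ) := by
  have hpn : 1 < p ^ n := Nat.one_lt_pow (by omega) hp.out.one_lt
  have he0 : 0 < p ^ n - 1 := by omega
  have _ : FiniteDimensional K E := FiniteDimensional.of_finrank_pos (by rw [hE]; omega)
  let M : IntermediateField K Ω := IntermediateField.normalClosure K E Ω
  have hEM : E ≤ M := IntermediateField.le_normalClosure E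
  have hMn : Normal K M := normalClosure.normal K E Ω
  have hMf : FiniteDimensional K M := by infer_instance
  have hMg : IsGalois K M := by
    have : Algebra.IsSeparable K M := inferInstance
    exact ⟨⟩
  have _ : IsScalarTower ℚ_[p] M Ω := IsScalarTower.of_algebraMap_eq' (by
    rw [IsScalarTower.algebraMap_eq ℚ_[p] K Ω, IsScalarTower.algebraMap_eq ℚ_[p] K M, ← RingHom.comp_assoc]
    rfl)
  have hMQ : FiniteDimensional ℚ_[p] M := FiniteDimensional.trans ℚ_[p] K M
  let G := M ≃ₐ[K] M
  let res : (Ω ≃ₐ[K] Ω) →* G := AlgEquiv.restrictNormalHom M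
  have hres : ∀ (σ : Ω ≃ₐ[K] Ω) (x : M), ((res σ x : M) : Ω) = σ x :=
    fun σ x => AlgEquiv.restrictNormalHom_apply M σ x
  have hsurj : Function.Surjective res := AlgEquiv.restrictNormalHom_surjective Ω
  have hres1 : ∀ σ : Ω ≃ₐ[K] Ω, res σ = 1 ↔ ∀ x ∈ M, σ x = x := by
    intro σ
    constructor
    · intro h x hx
      rw [← hres σ ⟨x, hx⟩, h]; rfl
    · intro h
      ext x
      rw [hres, h x x.2]; rfl
  let EM : IntermediateField K M := IntermediateField.restrict hEM
  let U : Subgroup G := EM.fixingSubgroup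
  have hUres : ∀ σ : Ω ≃ₐ[K] Ω, res σ ∈ U ↔ ∀ x ∈ E, σ x = x := by
    intro σ
    rw [IntermediateField.mem_fixingSubgroup_iff]
    constructor
    · intro h x hx
      have := h ⟨x, hEM hx⟩ ((IntermediateField.mem_restrict hEM _).2 hx)
      rw [← hres σ ⟨x, hEM hx⟩, this]
    · intro h x hx
      apply Subtype.ext
      rw [hres]
      exact h x ((IntermediateField.mem_restrict hEM _).1 hx)
  have hidx : U.index = p ^ n := by
    rw [← hE, ← IntermediateField.finrank_eq_fixingSubgroup_index]
    exact (IntermediateField.restrictAlgEquiv hEM).toLinearEquiv.finrank_eq.symm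
  have hU : IsCoatom U := by
    refine ⟨?_, ?_⟩
    · intro h
      rw [h, Subgroup.index_top] at hidx
      omega
    · intro H hH
      let F := IntermediateField.fixedField H
      have hFH : F.fixingSubgroup = H := IntermediateField.fixingSubgroup_fixedField H
      have hF : F ≤ EM := by
        rw [← IsGalois.fixedField_fixingSubgroup EM]
        intro x hx
        rw [IntermediateField.mem_fixedField_iff] at hx ⊢
        exact fun f hf => hx f (hH.le hf)
      have hlE : IntermediateField.lift F ≤ E := by
        intro x hx
        have hxM : x ∈ M := IntermediateField.lift_le F hx
        exact (IntermediateField.mem_restrict hEM ⟨x, hxM⟩).1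
          (hF ((IntermediateField.mem_lift ⟨x, hxM⟩).1 hx))
      rcases hprim _ hlE with h | h
      · rw [← hFH]
        rw [Subgroup.eq_top_iff']
        intro σ
        rw [IntermediateField.mem_fixingSubgroup_iff]
        intro x hx
        have h1 := (IntermediateField.mem_lift x).2 hx
        rw [h, IntermediateField.mem_bot] at h1
        obtain ⟨k, hk⟩ := h1
        have : x = algebraMap K M k := Subtype.ext hk.symm
        rw [this, AlgEquiv.commutes]
      · exfalso
        apply hH.ne
        have : F = EM := by
          ext x
          rw [← IntermediateField.mem_lift x, h, IntermediateField.mem_restrict]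
        rw [← hFH, this]
  have hcore : ∀ N : Subgroup G, N.Normal → N ≤ U → N = ⊥ := by
    intro N hN hNU
    let F := IntermediateField.fixedField N
    have hFN : F.fixingSubgroup = N := IntermediateField.fixingSubgroup_fixedField N
    have hFn : IsGalois K F := IsGalois.of_fixedField_normal_subgroup N
    have hFl : Normal K (IntermediateField.lift F) :=
      Normal.of_algEquiv (IntermediateField.liftAlgEquiv F)
    have hEF : E ≤ IntermediateField.lift F := by
      intro x hx
      refine (IntermediateField.mem_lift ⟨x, hEM hx⟩).2 ?_
      rw [IntermediateField.mem_fixedField_iff]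
      intro f hf
      exact (IntermediateField.mem_fixingSubgroup_iff _ _).1 (hNU hf) _ ((IntermediateField.mem_restrict hEM _).2 hx)
    have hMF : M ≤ IntermediateField.lift F := IntermediateField.normalClosure_le_iff_of_normal.2 hEF
    rw [← hFN, Subgroup.eq_bot_iff_forall]
    intro σ hσ
    ext x
    have := (IntermediateField.mem_fixingSubgroup_iff _ _).1 hσ x ((IntermediateField.mem_lift x).1 (hMF x.2))
    rw [this]; rfl
  let Δ : Subgroup (Ω ≃ₐ[K] Ω) :=
    { carrier := {a | a ζ = ζ}
      mul_mem' := fun {a b} ha hb => by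
        have ha : a ζ = ζ := ha
        have hb : b ζ = ζ := hb
        change a (b ζ) = ζ; rw [hb, ha]
      one_mem' := rfl
      inv_mem' := fun {a} ha => by
        have ha : a ζ = ζ := ha
        change a.symm ζ = ζ
        rw [AlgEquiv.symm_apply_eq, ha] }
  have hΔ : ∀ a, a ∈ Δ ↔ a ζ = ζ := fun _ => Iff.rfl
  have _ : NeZero (p ^ n - 1) := ⟨he0.ne'⟩
  have hΔn : Δ.Normal := by
    refine ⟨fun a ha g => ?_⟩
    rw [hΔ] at *
    have h1 : (g⁻¹ ζ) ^ (p ^ n - 1) = 1 := by rw [← map_pow, hζ.pow_eq_one, map_one]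
    obtain ⟨i, _, hi⟩ := hζ.eq_pow_of_pow_eq_one h1
    change g (a (g⁻¹ ζ)) = ζ
    rw [← hi, map_pow, ha, hi]
    exact AlgEquiv.apply_symm_apply g ζ
  let A : Subgroup G := Δ.map res
  have hAn : A.Normal := hΔn.map res hsurj
  -- valuations
  obtain ⟨N, hN⟩ := aux_val p Ω
  have hNinv : ∀ (σ : Ω ≃ₐ[K] Ω) (x : Ω), N (σ x) = N x := by
    intro σ x
    apply NNReal.coe_injective
    rw [hN, hN]
    exact (spectralNorm_eq_of_equiv (σ.restrictScalars ℚ_[p]) x).symm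
  let v : Valuation M ℝ≥0 := N.comap (algebraMap M Ω)
  have hv0 : ∀ x : M, v x = N (x : Ω) := fun x => rfl
  have hvs : ∀ x, (v x : ℝ) = spectralNorm ℚ_[p] M x := by
    intro x
    rw [hv0, hN]
    exact (spectralNorm.eq_of_tower x).symm
  have hvinv : ∀ (g : G) (x : M), v (g • x) = v x := by
    intro g x
    obtain ⟨σ, rfl⟩ := hsurj g
    rw [hv0, hv0, ← hNinv σ x, ← hres]
    rfl
  have hvnat : ∀ m : ℕ, (v (m : M) : ℝ) = ‖(m : ℚ_[p])‖ := by
    intro m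
    rw [hvs, ← spectralNorm_extends (L := M), map_natCast]
  have hvp : v (p : M) < 1 := by
    have := hvnat p
    rw [Padic.norm_p] at this
    have h2 : ((v (p : M) : ℝ≥0) : ℝ) < 1 := by
      rw [this]
      exact inv_lt_one_of_one_lt₀ (by exact_mod_cast hp.out.one_lt)
    exact_mod_cast h2
  have hvm : ∀ m : ℕ, Nat.Coprime p m → v (m : M) = 1 := by
    intro m hm
    have := hvnat m
    rw [Padic.norm_natCast_eq_one_iff.2 hm] at this
    exact_mod_cast this
  have _ : Finite (IsLocalRing.ResidueField v.valuationSubring) := aux_fin p M v hvs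
  obtain ⟨P, I, hPn, hIn, hPp, hII, hIp, ⟨f, hf⟩, hcyc, hlast⟩ :=
    aux_ram (G := G) p v hvinv hvp hvm
  have hAI : ∀ s ∈ I, s ^ (p ^ n - 1) ∈ P → ∀ a ∈ A, a * s * a⁻¹ * s⁻¹ ∈ P := by
    intro s hs hsP a ha
    refine hlast a _ ?_ s hs hsP
    obtain ⟨a, ha, rfl⟩ := ha
    intro u hu
    have := aux_root _ he0 N ζ hζ a.toRingEquiv ha (hNinv a) u (by
      have := hv0 (u ^ (p ^ n - 1) - 1)
      rw [this] at hu
      simpa using hu)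
    rw [hv0]
    refine lt_of_eq_of_lt ?_ this
    congr 1
    have h3 := hres a u
    change ((res a u : M) : Ω) - u = _
    rw [h3]; rfl
  obtain ⟨V, hVn, hVc, hVp, hVU, hAA, hApow, hAne⟩ :=
    aux_group p n hn U P I A hU hcore hidx hPp hII hIp f hf hAI
  refine ⟨M, V.comap res, hMn, hMf, hEM, hVn.comap res, ?_, ?_, ?_, ?_, ?_, ?_, ?_, ?_⟩
  · intro σ hσ τ hτ x hx
    have := hVc _ hσ _ hτ
    rw [← map_mul, ← map_mul] at this
    have := AlgEquiv.congr_fun this ⟨x, hx⟩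
    have := congrArg Subtype.val this
    rw [hres, hres] at this
    exact this
  · intro σ hσ
    have := hVp _ hσ
    rw [← map_pow] at this
    exact (hres1 _).1 this
  · intro σ hσ h
    have : res σ ∈ V ⊓ U := ⟨hσ, (hUres σ).2 h⟩
    rw [hVU, Subgroup.mem_bot] at this
    exact (hres1 _).1 this
  · intro a b ha hb
    have := hAA (res a) ⟨a, ha, rfl⟩ (res b) ⟨b, hb, rfl⟩
    rw [Subgroup.mem_comap]
    simpa using this
  · intro a ha
    have := hApow (res a) ⟨a, ha, rfl⟩
    rw [Subgroup.mem_comap]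
    simpa using this
  · intro σ h
    rw [Subgroup.mem_comap, ← IntermediateField.fixingSubgroup_fixedField V,
      IntermediateField.mem_fixingSubgroup_iff]
    intro x hx
    rw [IntermediateField.mem_fixedField_iff] at hx
    apply Subtype.ext
    rw [hres]
    refine h x x.2 ?_
    intro τ hτ
    rw [← hres, hx _ hτ]
  · rintro ⟨a, ha, x, hx, hax⟩
    have hA0 : A ≠ ⊥ := by
      intro h
      have : res a ∈ A := ⟨a, ha, rfl⟩
      rw [h, Subgroup.mem_bot, hres1] at this
      exact hax (this x hx)
    obtain ⟨_, ⟨σ, hσ, rfl⟩, hσV, hσ1⟩ := hAne hA0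
    refine ⟨σ, hσV, hσ, ?_⟩
    by_contra! h
    exact hσ1 ((hres1 _).2 h)
  · rintro N hN ⟨σ, hσ, x, hx, hσx⟩ γ
    have hNn : (N.map res).Normal := hN.map res hsurj
    have hnot : ¬ N.map res ≤ U := by
      intro h
      exact hσx ((hUres σ).1 (h ⟨σ, hσ, rfl⟩) x hx)
    have htop : N.map res ⊔ U = ⊤ := by
      refine hU.2 _ (lt_of_le_of_ne le_sup_right ?_)
      intro h
      exact hnot (h ▸ le_sup_left)
    have : res γ ∈ N.map res ⊔ U := by rw [htop]; trivial
    obtain ⟨_, ⟨σ, hσ, rfl⟩, u, hu, h⟩ := Subgroup.mem_sup_of_normal_left.1 this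
    refine ⟨σ, hσ, σ⁻¹ * γ, ?_, by group⟩
    rw [← hUres, map_mul, map_inv, ← h]
    simpa using hu

theorem aux_kummer {K Ω : Type} [Field K] [Field Ω] [Algebra K Ω] [CharZero Ω] (e : ℕ) (he : 0 < e)
    (ζ : Ω) (hζ : IsPrimitiveRoot ζ e) (L : AddSubgroup Ω)
    (hL : ∀ x : Ω, (∀ a : Ω ≃ₐ[K] Ω, a ζ = ζ → a (x ^ e) = x ^ e) → x ∈ L)
    (F : IntermediateField K Ω) [Normal K F] [FiniteDimensional K F] (hζF : ζ ∈ F)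
    (Z : Subgroup (Ω ≃ₐ[K] Ω)) [hZn : Z.Normal] (hZζ : ∀ σ ∈ Z, σ ζ = ζ)
    (hc : ∀ a b : Ω ≃ₐ[K] Ω, a ζ = ζ → b ζ = ζ → a * b * a⁻¹ * b⁻¹ ∈ Z)
    (hpow : ∀ a : Ω ≃ₐ[K] Ω, a ζ = ζ → a ^ e ∈ Z)
    (y : Ω) (hyF : y ∈ F) (hyZ : ∀ σ ∈ Z, σ y = y) : y ∈ L := by
  have _ : NeZero e := ⟨he.ne'⟩
  have hζ0 : ζ ≠ 0 := hζ.ne_zero he.ne'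
  have hFst : ∀ (a : Ω ≃ₐ[K] Ω), ∀ x ∈ F, a x ∈ F := by
    intro a x hx
    have := AlgEquiv.restrictNormalHom_apply F a ⟨x, hx⟩
    change _ = a x at this
    rw [← this]
    exact Subtype.mem _
  have hZst : ∀ (a : Ω ≃ₐ[K] Ω) (x : Ω), (∀ σ ∈ Z, σ x = x) → ∀ σ ∈ Z, σ (a x) = a x := by
    intro a x hx σ hσ
    have h1 := hx _ (hZn.conj_mem σ hσ a⁻¹)
    have h2 : σ * a = a * (a⁻¹ * σ * a⁻¹⁻¹) := by group
    calc σ (a x) = (σ * a) x := rfl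
      _ = a ((a⁻¹ * σ * a⁻¹⁻¹) x) := by rw [h2]; rfl
      _ = a x := by rw [h1]
  have hcomm : ∀ (a b : Ω ≃ₐ[K] Ω) (x : Ω), a ζ = ζ → b ζ = ζ → (∀ σ ∈ Z, σ x = x) → a (b x) = b (a x) := by
    intro a b x ha hb hx
    have h1 := hZst b _ (hZst a x hx) _ (hc a b ha hb)
    have h2 : a * b = (a * b * a⁻¹ * b⁻¹) * (b * a) := by group
    calc a (b x) = (a * b) x := rfl
      _ = (a * b * a⁻¹ * b⁻¹) (b (a x)) := by conv_lhs => rw [h2]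
                                              rfl
      _ = _ := h1
  let W : Set Ω := {z | z ∈ F ∧ ∀ σ ∈ Z, σ z = z}
  have key : ∀ s : Finset (Ω ≃ₐ[K] Ω), (∀ a ∈ s, a ζ = ζ) →
      ∀ z ∈ W, z ∈ AddSubgroup.closure {w | w ∈ W ∧ ∀ a ∈ s, ∃ i : ℕ, a w = ζ ^ i * w} := by
    classical
    intro s
    induction s using Finset.induction_on with
    | empty =>
      intro _ z hz
      exact AddSubgroup.subset_closure ⟨hz, by simp⟩
    | insert a s has ih =>
      intro hs z hz
      have ha : a ζ = ζ := hs a (by simp)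
      have hs' : ∀ b ∈ s, b ζ = ζ := fun b hb => hs b (by simp [hb])
      refine (AddSubgroup.closure_le _).2 ?_ (ih hs' z hz)
      rintro w ⟨⟨hwF, hwZ⟩, hw⟩
      have hapowζ : ∀ j : ℕ, (a ^ j) ζ = ζ := by
        intro j
        induction j with
        | zero => rfl
        | succ j ihj => rw [pow_succ, AlgEquiv.mul_apply, ha, ihj]
      let t : ℕ → ℕ → Ω := fun i j => (ζ⁻¹) ^ (i * j) * (a ^ j) w
      let c : ℕ → Ω := fun i => (e : Ω)⁻¹ * ∑ j ∈ Finset.range e, t i j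
      have hsum : w = ∑ i ∈ Finset.range e, c i := by
        have h1 : ∀ j ∈ Finset.range e, ∑ i ∈ Finset.range e, t i j = if j = 0 then (e : Ω) * w else 0 := by
          intro j hj
          rw [Finset.mem_range] at hj
          by_cases hj0 : j = 0
          · subst hj0
            simp [t]
          · rw [if_neg hj0]
            simp only [t]
            rw [← Finset.sum_mul]
            have hne : (ζ⁻¹) ^ j ≠ 1 := hζ.inv.pow_ne_one_of_pos_of_lt hj0 hj
            have : ∑ i ∈ Finset.range e, (ζ⁻¹) ^ (i * j) = 0 := by
              have h2 := mul_geom_sum ((ζ⁻¹) ^ j) e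
              rw [← pow_mul, mul_comm j e, pow_mul, hζ.inv.pow_eq_one, one_pow, sub_self] at h2
              rcases mul_eq_zero.1 h2 with h | h
              · exact absurd (sub_eq_zero.1 h) hne
              · rw [← h]
                refine Finset.sum_congr rfl fun i _ => ?_
                rw [← pow_mul, mul_comm]
            rw [this, zero_mul]
        simp only [c]
        rw [← Finset.mul_sum, Finset.sum_comm, Finset.sum_congr rfl h1, Finset.sum_ite_eq']
        have he' : (e : Ω) ≠ 0 := Nat.cast_ne_zero.2 he.ne'
        simp [he, he']
      rw [hsum]
      refine AddSubgroup.sum_mem _ fun i _ => AddSubgroup.subset_closure ⟨⟨?_, ?_⟩, ?_⟩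
      · refine F.mul_mem (F.inv_mem (natCast_mem F e)) (F.sum_mem fun j _ => ?_)
        exact F.mul_mem (pow_mem (F.inv_mem hζF) _) (hFst _ _ hwF)
      · intro σ hσ
        simp only [c, t]
        rw [map_mul, map_inv₀, map_natCast, map_sum]
        congr 1
        refine Finset.sum_congr rfl fun j _ => ?_
        rw [map_mul, map_pow, map_inv₀, hZζ σ hσ, hZst _ _ hwZ σ hσ]
      · intro b hb
        rcases Finset.mem_insert.1 hb with rfl | hb
        · refine ⟨i, ?_⟩
          simp only [c]
          rw [map_mul, map_inv₀, map_natCast, map_sum, mul_left_comm]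
          congr 1
          have h1 : ∀ j, b (t i j) = ζ ^ i * t i (j + 1) := by
            intro j
            simp only [t]
            rw [map_mul, map_pow, map_inv₀, ha, pow_succ' b, AlgEquiv.mul_apply, mul_add, pow_add,
              mul_one, ← mul_assoc, mul_left_comm, ← mul_pow, mul_inv_cancel₀ hζ0, one_pow, mul_one]
          have h2 : t i e = t i 0 := by
            simp only [t]
            rw [mul_comm i e, pow_mul, hζ.inv.pow_eq_one, one_pow, hwZ _ (hpow b ha)]
            simp
          rw [Finset.sum_congr rfl (fun j _ => h1 j), ← Finset.mul_sum]
          congr 1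
          have h3 := Finset.sum_range_succ (t i) e
          rw [Finset.sum_range_succ', h2] at h3
          exact add_right_cancel h3
        · obtain ⟨k, hk⟩ := hw b hb
          have hbζ := hs' b hb
          refine ⟨k, ?_⟩
          simp only [c]
          rw [map_mul, map_inv₀, map_natCast, map_sum, mul_left_comm]
          congr 1
          rw [Finset.mul_sum]
          refine Finset.sum_congr rfl fun j _ => ?_
          simp only [t]
          rw [map_mul, map_pow, map_inv₀, hbζ, hcomm b (a ^ j) w hbζ (hapowζ j) hwZ, hk, map_mul,
            map_pow, hapowζ]
          ring
  -- finite set of representatives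
  classical
  let D : Set (F ≃ₐ[K] F) := {g | ∃ a : Ω ≃ₐ[K] Ω, a ζ = ζ ∧ AlgEquiv.restrictNormalHom F a = g}
  have hDfin : D.Finite := Set.toFinite D
  have hch : ∀ g : F ≃ₐ[K] F, ∃ a : Ω ≃ₐ[K] Ω, g ∈ D → a ζ = ζ ∧ AlgEquiv.restrictNormalHom F a = g := by
    intro g
    by_cases h : g ∈ D
    · obtain ⟨a, ha⟩ := h
      exact ⟨a, fun _ => ha⟩
    · exact ⟨1, fun h' => absurd h' h⟩
  choose r hr using hch
  have hy := key (hDfin.toFinset.image r) (by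
    intro a ha
    obtain ⟨g, hg, rfl⟩ := Finset.mem_image.1 ha
    exact (hr g (hDfin.mem_toFinset.1 hg)).1) y ⟨hyF, hyZ⟩
  refine (AddSubgroup.closure_le _).2 ?_ hy
  rintro w ⟨⟨hwF, hwZ⟩, hw⟩
  refine hL w ?_
  intro a ha
  have hg : AlgEquiv.restrictNormalHom F a ∈ D := ⟨a, ha, rfl⟩
  obtain ⟨i, hi⟩ := hw (r (AlgEquiv.restrictNormalHom F a))
    (Finset.mem_image.2 ⟨_, hDfin.mem_toFinset.2 hg, rfl⟩)
  have h1 : a w = ζ ^ i * w := by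
    rw [← hi]
    have h2 := AlgEquiv.restrictNormalHom_apply F a ⟨w, hwF⟩
    have h3 := AlgEquiv.restrictNormalHom_apply F (r (AlgEquiv.restrictNormalHom F a)) ⟨w, hwF⟩
    rw [(hr _ hg).2] at h3
    exact h2.symm.trans h3
  rw [map_pow, h1, mul_pow, ← pow_mul, mul_comm i e, pow_mul, hζ.pow_eq_one, one_pow, one_mul]

theorem aux_relIndex {G : Type} [Group G] (H N : Subgroup G)
    (h : ∀ g : G, ∃ σ ∈ N, ∃ τ ∈ H, g = σ * τ) : H.relIndex N = H.index := by
  let F : N ⧸ H.subgroupOf N → G ⧸ H :=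
    Quotient.map' (Subtype.val) (by
      intro a b hab
      rw [QuotientGroup.leftRel_apply] at hab ⊢
      exact hab)
  refine Nat.card_congr (Equiv.ofBijective F ⟨?_, ?_⟩)
  · rintro ⟨a⟩ ⟨b⟩ hab
    have hab : ((a : G) : G ⧸ H) = ((b : G) : G ⧸ H) := hab
    rw [QuotientGroup.eq] at hab
    exact QuotientGroup.eq.2 hab
  · rintro ⟨g⟩
    obtain ⟨σ, hσ, τ, hτ, rfl⟩ := h g
    refine ⟨((⟨σ, hσ⟩ : N) : N ⧸ H.subgroupOf N), ?_⟩
    change ((σ : G) : G ⧸ H) = ((σ * τ : G) : G ⧸ H)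
    rw [QuotientGroup.eq]
    simpa using hτ

theorem aux_equal {K Ω : Type} [Field K] [Field Ω] [Algebra K Ω] (a : Ω ≃ₐ[K] Ω) :
    ∃ F : IntermediateField K Ω, ∀ x, x ∈ F ↔ a x = x := by
  refine ⟨IntermediateField.fixedField (Subgroup.zpowers a), fun x => ?_⟩
  rw [IntermediateField.mem_fixedField_iff]
  constructor
  · intro h
    exact h a (Subgroup.mem_zpowers a)
  · intro h f hf
    have hle : Subgroup.zpowers a ≤ MulAction.stabilizer (Ω ≃ₐ[K] Ω) x := by
      rw [Subgroup.zpowers_le]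
      exact h
    exact hle hf

theorem aux_final (p : ℕ) [hp : Fact p.Prime] (n : ℕ) (hn : 1 ≤ n)
    (K Ω : Type) [Field K] [Field Ω] [Algebra ℚ_[p] K] [Algebra ℚ_[p] Ω] [Algebra K Ω]
    [IsScalarTower ℚ_[p] K Ω] [FiniteDimensional ℚ_[p] K] [Algebra.IsAlgebraic ℚ_[p] Ω]
    [IsGalois K Ω]
    (ζ : Ω) (hζ : IsPrimitiveRoot ζ (p ^ n - 1))
    (Kn : IntermediateField K Ω) (hKn : Kn = IntermediateField.adjoin K {ζ})
    (Ln : IntermediateField K Ω)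
    (hLn : Ln = Kn ⊔ IntermediateField.adjoin K {x : Ω | x ^ (p ^ n - 1) ∈ Kn})
    (E : IntermediateField K Ω) (hE : Module.finrank K E = p ^ n)
    (hprim : ∀ F : IntermediateField K Ω, F ≤ E → F = ⊥ ∨ F = E)
    (S : Subgroup (↥(E ⊔ Ln) ≃ₐ[K] ↥(E ⊔ Ln)))
    (hS : S = fixingSubgroup (↥(E ⊔ Ln) ≃ₐ[K] ↥(E ⊔ Ln)) {x : ↥(E ⊔ Ln) | (x : Ω) ∈ Ln}) :
    IsGalois K ↥(E ⊔ Ln) ∧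
      Module.finrank ↥Ln ↥(IntermediateField.extendScalars (le_sup_right : Ln ≤ E ⊔ Ln))
        = p ^ n ∧
      (∀ σ ∈ S, ∀ τ ∈ S, σ * τ = τ * σ) ∧ (∀ σ ∈ S, σ ^ p = 1) := by
  have hpn : 1 < p ^ n := Nat.one_lt_pow (by omega) hp.out.one_lt
  have he0 : 0 < p ^ n - 1 := by omega
  have _ : NeZero (p ^ n - 1) := ⟨he0.ne'⟩
  have hζi : IsIntegral K ζ := Algebra.IsIntegral.isIntegral ζ
  have _ : CharZero Ω := charZero_of_injective_algebraMap (algebraMap ℚ_[p] Ω).injective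
  obtain ⟨M, V, hMn, hMf, hEM, hVn, hVc, hVp, hVU, hAA, hApow, hfix, hex, hsup⟩ :=
    aux_V p n hn K Ω ζ hζ E hE hprim
  have hgal : ∀ (F : IntermediateField K Ω) (x : Ω),
      (∀ σ : Ω ≃ₐ[K] Ω, (∀ y ∈ F, σ y = y) → σ x = x) → x ∈ F := by
    intro F x h
    rw [← InfiniteGalois.fixedField_fixingSubgroup F, IntermediateField.mem_fixedField_iff]
    intro σ hσ
    exact h σ ((IntermediateField.mem_fixingSubgroup_iff _ _).1 hσ)
  have hζKn : ζ ∈ Kn := by rw [hKn]; exact IntermediateField.mem_adjoin_simple_self K ζ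
  have hKnfix : ∀ a : Ω ≃ₐ[K] Ω, a ζ = ζ → ∀ x ∈ Kn, a x = x := by
    intro a ha x hx
    obtain ⟨F, hF⟩ := aux_equal a
    rw [← hF]
    have : Kn ≤ F := by
      rw [hKn, IntermediateField.adjoin_le_iff]
      simpa using (hF ζ).2 ha
    exact this hx
  have hKnmem : ∀ x : Ω, (∀ a : Ω ≃ₐ[K] Ω, a ζ = ζ → a x = x) → x ∈ Kn := by
    intro x hx
    exact hgal Kn x fun σ hσ => hx σ (hσ ζ hζKn)
  have hσζ : ∀ σ : Ω ≃ₐ[K] Ω, ∃ i : ℕ, σ ζ = ζ ^ i := by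
    intro σ
    have h1 : (σ ζ) ^ (p ^ n - 1) = 1 := by rw [← map_pow, hζ.pow_eq_one, map_one]
    obtain ⟨i, _, hi⟩ := hζ.eq_pow_of_pow_eq_one h1
    exact ⟨i, hi.symm⟩
  have hKnst : ∀ σ : Ω ≃ₐ[K] Ω, ∀ x ∈ Kn, σ x ∈ Kn := by
    intro σ
    have : Kn ≤ Kn.comap (σ : Ω →ₐ[K] Ω) := by
      conv_lhs => rw [hKn]
      rw [IntermediateField.adjoin_le_iff]
      obtain ⟨i, hi⟩ := hσζ σ
      have : σ ζ ∈ Kn := by rw [hi]; exact pow_mem hζKn i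
      exact Set.singleton_subset_iff.2 this
    exact fun x hx => this hx
  have hKnL : Kn ≤ Ln := by rw [hLn]; exact le_sup_left
  have hgenL : ∀ x : Ω, x ^ (p ^ n - 1) ∈ Kn → x ∈ Ln := by
    intro x hx
    have : IntermediateField.adjoin K {x : Ω | x ^ (p ^ n - 1) ∈ Kn} ≤ Ln := by
      rw [hLn]; exact le_sup_right
    exact this (IntermediateField.subset_adjoin _ _ hx)
  have hLle : ∀ F : IntermediateField K Ω, Kn ≤ F → (∀ x : Ω, x ^ (p ^ n - 1) ∈ Kn → x ∈ F) →
      Ln ≤ F := by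
    intro F h1 h2
    rw [hLn]
    exact sup_le h1 ((IntermediateField.adjoin_le_iff).2 h2)
  have hLst : ∀ σ : Ω ≃ₐ[K] Ω, ∀ x ∈ Ln, σ x ∈ Ln := by
    intro σ
    have : Ln ≤ Ln.comap (σ : Ω →ₐ[K] Ω) := by
      refine hLle _ ?_ ?_
      · intro x hx
        exact hKnL (hKnst σ x hx)
      · intro x hx
        refine hgenL (σ x) ?_
        rw [← map_pow]
        exact hKnst σ _ hx
    exact fun x hx => this hx
  have hnormal : ∀ F : IntermediateField K Ω, (∀ σ : Ω ≃ₐ[K] Ω, ∀ x ∈ F, σ x ∈ F) → Normal K F := by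
    intro F h
    rw [IntermediateField.normal_iff_forall_map_le']
    rintro σ _ ⟨x, hx, rfl⟩
    exact h σ x hx
  have hKnn : Normal K Kn := hnormal Kn hKnst
  have hLnn : Normal K Ln := hnormal Ln hLst
  have hKnf : FiniteDimensional K Kn := by
    rw [hKn]; exact IntermediateField.adjoin.finiteDimensional hζi
  -- elements fixing `Ln` lie in `V`
  have hLV : ∀ σ : Ω ≃ₐ[K] Ω, (∀ x ∈ Ln, σ x = x) → σ ∈ V := by
    intro σ hσ
    refine hfix σ ?_
    intro x hxM hxV
    apply hσ
    let Z : Subgroup (Ω ≃ₐ[K] Ω) := V ⊓ Kn.fixingSubgroup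
    have hZn : Z.Normal := by
      have h1 : Kn.fixingSubgroup.Normal := by
        refine ⟨fun a ha g => ?_⟩
        rw [IntermediateField.mem_fixingSubgroup_iff] at *
        intro x hx
        change g (a (g⁻¹ x)) = x
        rw [ha _ (hKnst g⁻¹ x hx)]
        exact AlgEquiv.apply_symm_apply g x
      exact inferInstanceAs (V ⊓ Kn.fixingSubgroup).Normal
    have hFn : Normal K ↥(M ⊔ Kn) := IntermediateField.normal_sup K Ω M Kn
    have hFf : FiniteDimensional K ↥(M ⊔ Kn) := inferInstance
    have hζinv : ∀ a : Ω ≃ₐ[K] Ω, a ζ = ζ → a⁻¹ ζ = ζ := by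
      intro a ha
      change a.symm ζ = ζ
      rw [AlgEquiv.symm_apply_eq, ha]
    have hmemfix : ∀ a : Ω ≃ₐ[K] Ω, a ζ = ζ → a ∈ Kn.fixingSubgroup := by
      intro a ha
      rw [IntermediateField.mem_fixingSubgroup_iff]
      exact hKnfix a ha
    refine aux_kummer (K := K) (p ^ n - 1) he0 ζ hζ Ln.toSubfield.toSubring.toAddSubgroup ?_ (M ⊔ Kn)
      ((le_sup_right : Kn ≤ M ⊔ Kn) hζKn) Z ?_ ?_ ?_ x ((le_sup_left : M ≤ M ⊔ Kn) hxM) ?_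
    · intro x hx
      exact hgenL x (hKnmem _ hx)
    · intro σ hσ
      exact (IntermediateField.mem_fixingSubgroup_iff _ _).1 hσ.2 ζ hζKn
    · intro a b ha hb
      have h1 := hmemfix a ha
      have h2 := hmemfix b hb
      have h3 : a * b * a⁻¹ * b⁻¹ ∈ Kn.fixingSubgroup :=
        mul_mem (mul_mem (mul_mem h1 h2) (inv_mem h1)) (inv_mem h2)
      exact ⟨hAA a b ha hb, h3⟩
    · intro a ha
      exact ⟨hApow a ha, pow_mem (hmemfix a ha) _⟩
    · intro σ hσ
      exact hxV σ hσ.1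
  have hsupfix : ∀ σ : Ω ≃ₐ[K] Ω, (∀ x ∈ E, σ x = x) → (∀ x ∈ Ln, σ x = x) → ∀ x ∈ E ⊔ Ln, σ x = x := by
    intro σ h1 h2 x hx
    obtain ⟨F, hF⟩ := aux_equal σ
    rw [← hF]
    exact (sup_le (fun y hy => (hF y).2 (h1 y hy)) (fun y hy => (hF y).2 (h2 y hy)) : E ⊔ Ln ≤ F) hx
  have hME : M ≤ E ⊔ Ln := by
    intro x hx
    refine hgal _ x fun σ hσ => ?_
    exact hVU σ (hLV σ fun y hy => hσ y ((le_sup_right : Ln ≤ E ⊔ Ln) hy))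
      (fun y hy => hσ y ((le_sup_left : E ≤ E ⊔ Ln) hy)) x hx
  have hEL : E ⊔ Ln = M ⊔ Ln :=
    le_antisymm (sup_le_sup_right hEM _) (sup_le hME le_sup_right)
  have hELn : Normal K ↥(E ⊔ Ln) := by
    rw [hEL]; exact IntermediateField.normal_sup K Ω M Ln
  have hELg : IsGalois K ↥(E ⊔ Ln) := by
    have : Algebra.IsSeparable K ↥(E ⊔ Ln) := inferInstance
    exact ⟨⟩
  refine ⟨hELg, ?_, ?_⟩
  · -- degree
    -- powers of elements fixing `ζ` fix `Ln`
    have hpowL : ∀ a : Ω ≃ₐ[K] Ω, a ζ = ζ → ∀ x ∈ Ln, (a ^ (p ^ n - 1)) x = x := by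
      intro a ha
      obtain ⟨F, hF⟩ := aux_equal (a ^ (p ^ n - 1))
      have hle : Ln ≤ F := by
        refine hLle F ?_ ?_
        · intro x hx
          rw [hF]
          have h1 : a ∈ Kn.fixingSubgroup := by
            rw [IntermediateField.mem_fixingSubgroup_iff]
            exact hKnfix a ha
          exact (IntermediateField.mem_fixingSubgroup_iff _ _).1 (pow_mem h1 _) x hx
        · intro x hx
          rw [hF]
          by_cases hx0 : x = 0
          · rw [hx0, map_zero]
          have h1 : (a x / x) ^ (p ^ n - 1) = 1 := by
            rw [div_pow, ← map_pow, hKnfix a ha _ hx, div_self (pow_ne_zero _ hx0)]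
          obtain ⟨i, _, hi⟩ := hζ.eq_pow_of_pow_eq_one h1
          have hax : a x = ζ ^ i * x := by rw [hi, div_mul_cancel₀ _ hx0]
          have hj : ∀ j : ℕ, (a ^ j) x = ζ ^ (i * j) * x := by
            intro j
            induction j with
            | zero => simp
            | succ j ih =>
              rw [pow_succ', AlgEquiv.mul_apply, ih, map_mul, map_pow, ha, hax]
              ring
          rw [hj, mul_comm i, pow_mul, hζ.pow_eq_one, one_pow, one_mul]
      exact fun x hx => (hF x).1 (hle hx)
    have hEKn : ¬ E ≤ Kn := by
      intro h
      have h1 := IntermediateField.finrank_le_of_le_right h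
      rw [hE, hKn, IntermediateField.adjoin.finrank hζi] at h1
      have h2 : (minpoly K ζ).degree ≤ (Polynomial.X ^ (p ^ n - 1) - Polynomial.C (1 : K)).degree := by
        refine minpoly.min K ζ (Polynomial.monic_X_pow_sub_C 1 he0.ne') ?_
        simp [hζ.pow_eq_one]
      have h3 := Polynomial.natDegree_le_natDegree h2
      rw [Polynomial.natDegree_X_pow_sub_C] at h3
      omega
    obtain ⟨y, hyE, hyK⟩ := Set.not_subset.1 hEKn
    have hexa : ∃ a : Ω ≃ₐ[K] Ω, a ζ = ζ ∧ ∃ x ∈ M, a x ≠ x := by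
      by_contra! h
      exact hyK (hKnmem y fun a ha => h a ha y (hEM hyE))
    obtain ⟨σ, hσV, hσ, x, hxM, hσx⟩ := hex hexa
    have hN : Ln.fixingSubgroup.Normal := by
      refine ⟨fun a ha g => ?_⟩
      rw [IntermediateField.mem_fixingSubgroup_iff] at *
      intro x hx
      change g (a (g⁻¹ x)) = x
      rw [ha _ (hLst g⁻¹ x hx)]
      exact AlgEquiv.apply_symm_apply g x
    have hnot : ∃ τ ∈ Ln.fixingSubgroup, ∃ x ∈ E, τ x ≠ x := by
      by_contra! h
      have h1 : σ ^ (p ^ n - 1) ∈ Ln.fixingSubgroup := by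
        rw [IntermediateField.mem_fixingSubgroup_iff]
        exact hpowL σ hσ
      have h2 := hVU _ (pow_mem hσV (p ^ n - 1)) (h _ h1) x hxM
      have h3 : (σ ^ (p ^ n)) x = x := by
        have h4 : (σ ^ p) ∈ MulAction.stabilizer (Ω ≃ₐ[K] Ω) x := hVp σ hσV x hxM
        have h5 := pow_mem h4 (p ^ (n - 1))
        rw [← pow_mul, ← pow_succ', Nat.sub_add_cancel hn] at h5
        exact h5
      have h6 : p ^ n = (p ^ n - 1) + 1 := by omega
      rw [h6, pow_succ', AlgEquiv.mul_apply, h2] at h3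
      exact hσx h3
    have hrel : E.fixingSubgroup.relIndex Ln.fixingSubgroup = p ^ n := by
      rw [aux_relIndex, ← IntermediateField.finrank_eq_fixingSubgroup_index, hE]
      intro g
      obtain ⟨σ, hσ, τ, hτ, h⟩ := hsup _ hN hnot g
      exact ⟨σ, hσ, τ, (IntermediateField.mem_fixingSubgroup_iff _ _).2 hτ, h⟩
    have _ : IsGalois Ln Ω := IsGalois.tower_top_intermediateField Ln
    rw [IntermediateField.finrank_eq_fixingSubgroup_index, ← hrel]
    let φ : (Ω ≃ₐ[Ln] Ω) →* (Ω ≃ₐ[K] Ω) := AlgEquiv.restrictScalarsHom K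
    have hφ : ∀ a x, φ a x = a x := fun _ _ => rfl
    have hrange : φ.range = Ln.fixingSubgroup := by
      ext σ
      rw [IntermediateField.mem_fixingSubgroup_iff]
      constructor
      · rintro ⟨a, rfl⟩ x hx
        exact a.commutes ⟨x, hx⟩
      · intro h
        refine ⟨AlgEquiv.ofRingEquiv (f := σ.toRingEquiv) (fun x => h x x.2), ?_⟩
        ext x
        rfl
    have hcomap : (IntermediateField.extendScalars (le_sup_right : Ln ≤ E ⊔ Ln)).fixingSubgroup =
        E.fixingSubgroup.comap φ := by
      ext a
      rw [Subgroup.mem_comap, IntermediateField.mem_fixingSubgroup_iff,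
        IntermediateField.mem_fixingSubgroup_iff]
      constructor
      · intro h x hx
        exact h x ((IntermediateField.mem_extendScalars _).2 ((le_sup_left : E ≤ E ⊔ Ln) hx))
      · intro h x hx
        exact hsupfix (φ a) h (fun y hy => a.commutes ⟨y, hy⟩) x
          ((IntermediateField.mem_extendScalars _).1 hx)
    rw [hcomap, Subgroup.index_comap, hrange]
  · let res : (Ω ≃ₐ[K] Ω) →* (↥(E ⊔ Ln) ≃ₐ[K] ↥(E ⊔ Ln)) := AlgEquiv.restrictNormalHom ↥(E ⊔ Ln)
    have hres : ∀ (σ : Ω ≃ₐ[K] Ω) (x : ↥(E ⊔ Ln)), ((res σ x : ↥(E ⊔ Ln)) : Ω) = σ x :=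
      fun σ x => AlgEquiv.restrictNormalHom_apply (E ⊔ Ln) σ x
    have hsurj : Function.Surjective res := AlgEquiv.restrictNormalHom_surjective Ω
    have hres1 : ∀ σ : Ω ≃ₐ[K] Ω, (∀ x ∈ E, σ x = x) → (∀ x ∈ Ln, σ x = x) → res σ = 1 := by
      intro σ h1 h2
      ext x
      rw [hres, hsupfix σ h1 h2 x x.2]; rfl
    have hSL : ∀ σ : Ω ≃ₐ[K] Ω, res σ ∈ S → σ ∈ Ln.fixingSubgroup := by
      intro σ h
      rw [IntermediateField.mem_fixingSubgroup_iff]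
      intro x hx
      rw [hS, mem_fixingSubgroup_iff] at h
      have h1 := h ⟨x, (le_sup_right : Ln ≤ E ⊔ Ln) hx⟩ hx
      have h2 := hres σ ⟨x, (le_sup_right : Ln ≤ E ⊔ Ln) hx⟩
      exact h2.symm.trans (congrArg Subtype.val h1)
    have hLV' : ∀ σ ∈ Ln.fixingSubgroup, σ ∈ V := fun σ h =>
      hLV σ ((IntermediateField.mem_fixingSubgroup_iff _ _).1 h)
    constructor
    · intro σ hσ τ hτ
      obtain ⟨σ, rfl⟩ := hsurj σ
      obtain ⟨τ, rfl⟩ := hsurj τ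
      have h1 := hSL σ hσ
      have h2 := hSL τ hτ
      have h3 : res ((τ * σ)⁻¹ * (σ * τ)) = 1 := by
        refine hres1 _ ?_ ?_
        · intro x hx
          have := hVc σ (hLV' σ h1) τ (hLV' τ h2) x (hEM hx)
          change (τ * σ).symm (σ (τ x)) = x
          rw [AlgEquiv.symm_apply_eq, this]
          rfl
        · exact (IntermediateField.mem_fixingSubgroup_iff _ _).1
            (mul_mem (inv_mem (mul_mem h2 h1)) (mul_mem h1 h2))
      rw [map_mul, map_inv, inv_mul_eq_one, map_mul, map_mul] at h3
      exact h3.symm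
    · intro σ hσ
      obtain ⟨σ, rfl⟩ := hsurj σ
      have h1 := hSL σ hσ
      rw [← map_pow]
      refine hres1 _ ?_ ?_
      · intro x hx
        exact hVp σ (hLV' σ h1) x (hEM hx)
      · exact (IntermediateField.mem_fixingSubgroup_iff _ _).1 (pow_mem h1 p)

end Aux2

/-- Let `K ⊆ Ω` be a finite extension of `ℚ_p`, `e_n = p ^ n - 1`, `K_n = K(ζ)` for a
primitive `e_n`-th root of unity `ζ`, and `L_n` the field generated over `K_n` by all
`x ∈ Ω` with `x ^ e_n ∈ K_n`.  If `E` is a primitive extension of `K` of degree `p ^ n`,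
then `E ⬝ L_n` is Galois over `K`, of degree `p ^ n` over `L_n`, and `Gal(E ⬝ L_n / L_n)`
(the subgroup of `Gal(E ⬝ L_n / K)` fixing `L_n` pointwise) is abelian with every element
of order dividing `p`. -/
theorem stmt_10 (p : ℕ) [hp : Fact p.Prime] (n : ℕ) (hn : 1 ≤ n)
    (Ω : Type) [Field Ω] [Algebra ℚ_[p] Ω] [IsAlgClosure ℚ_[p] Ω]
    (K : IntermediateField ℚ_[p] Ω) [FiniteDimensional ℚ_[p] ↥K]
    (ζ : Ω) (hζ : IsPrimitiveRoot ζ (p ^ n - 1))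
    (Kn : IntermediateField ↥K Ω) (hKn : Kn = IntermediateField.adjoin ↥K {ζ})
    (Ln : IntermediateField ↥K Ω)
    (hLn : Ln = Kn ⊔ IntermediateField.adjoin ↥K {x : Ω | x ^ (p ^ n - 1) ∈ Kn})
    (E : IntermediateField ↥K Ω) (hE : Module.finrank ↥K ↥E = p ^ n)
    (hprim : ∀ F : IntermediateField ↥K Ω, F ≤ E → F = ⊥ ∨ F = E)
    (S : Subgroup (↥(E ⊔ Ln) ≃ₐ[↥K] ↥(E ⊔ Ln)))
    (hS : S = fixingSubgroup (↥(E ⊔ Ln) ≃ₐ[↥K] ↥(E ⊔ Ln)) {x : ↥(E ⊔ Ln) | (x : Ω) ∈ Ln}) :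
    IsGalois ↥K ↥(E ⊔ Ln) ∧
      Module.finrank ↥Ln ↥(IntermediateField.extendScalars (le_sup_right : Ln ≤ E ⊔ Ln))
        = p ^ n ∧
      (∀ σ ∈ S, ∀ τ ∈ S, σ * τ = τ * σ) ∧ (∀ σ ∈ S, σ ^ p = 1) := by

  have _ : IsAlgClosed Ω := IsAlgClosure.isAlgClosed ℚ_[p]
  have _ : Algebra.IsAlgebraic ℚ_[p] Ω := IsAlgClosure.isAlgebraic
  have _ : Algebra.IsAlgebraic K Ω := inferInstance
  have _ : IsAlgClosure K Ω := ⟨inferInstance, inferInstance⟩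
  have _ : Normal K Ω := IsAlgClosure.normal K Ω
  have _ : CharZero K := charZero_of_injective_algebraMap (algebraMap ℚ_[p] K).injective
  have _ : Algebra.IsSeparable K Ω := inferInstance
  have _ : IsGalois K Ω := ⟨⟩
  exact aux_final p n hn K Ω ζ hζ Kn hKn Ln hLn E hE hprim S hS
end

section
/- Fix a prime p and an integer n ≥ 1, set e_n = p^n − 1, and fix an algebraic closure Ω of ℚ_p. Let K ⊆ Ω be a finite extension of ℚ_p, let K_n = K(ζ) where ζ ∈ Ω is a primitive e_n-th root of unity, and let L_n ⊆ Ω be the field generated over K_n by all x ∈ Ω with x^{e_n} ∈ K_n. Let E ⊆ Ω be a primitive extension of K with [E : K] = p^n, and let M = E·L_n be the compositum. Then every subgroup of Gal(M / L_n) that is a normal subgroup of Gal(M / K) is either the trivial subgroup or all of Gal(M / L_n); that is, Gal(M / L_n) is a simple module over Gal(L_n / K) for the conjugation action. -/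
/-- Group-theoretic heart: `L` is any field stable under the automorphisms of `Ω / K`. -/
theorem aux_main {K Ω : Type*} [Field K] [Field Ω] [Algebra K Ω] [IsGalois K Ω]
    (L E : IntermediateField K Ω) [FiniteDimensional K E]
    (hL : ∀ σ : Ω ≃ₐ[K] Ω, ∀ x ∈ L, σ x ∈ L)
    (hprim : ∀ F : IntermediateField K Ω, F ≤ E → F = ⊥ ∨ F = E)
    (S : Subgroup (↥(E ⊔ L) ≃ₐ[K] ↥(E ⊔ L)))
    (hS : ∀ s, s ∈ S ↔ ∀ x : ↥(E ⊔ L), (x : Ω) ∈ L → s x = x)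
    (H : Subgroup (↥(E ⊔ L) ≃ₐ[K] ↥(E ⊔ L))) (hHS : H ≤ S) (hN : H.Normal) :
    H = ⊥ ∨ H = S := by
  have lift : ∀ h : ↥(E ⊔ L) ≃ₐ[K] ↥(E ⊔ L), ∃ σ : Ω ≃ₐ[K] Ω,
      ∀ m : ↥(E ⊔ L), σ m = (h m : Ω) := fun h =>
    ⟨h.liftNormal Ω, fun m => h.liftNormal_commutes Ω m⟩
  -- an automorphism fixing `E` and `L` fixes `E ⊔ L`
  have fixM : ∀ σ : Ω ≃ₐ[K] Ω, (∀ x ∈ E, σ x = x) → (∀ x ∈ L, σ x = x) →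
      ∀ x ∈ E ⊔ L, σ x = x := by
    intro σ h1 h2 x hx
    have hmem : σ ∈ (E ⊔ L).fixingSubgroup := by
      rw [IntermediateField.fixingSubgroup_sup]
      exact ⟨(IntermediateField.mem_fixingSubgroup_iff E σ).2 h1,
        (IntermediateField.mem_fixingSubgroup_iff L σ).2 h2⟩
    exact (IntermediateField.mem_fixingSubgroup_iff _ σ).1 hmem x hx
  let Hl : Subgroup (Ω ≃ₐ[K] Ω) :=
    { carrier := {σ | ∃ h ∈ H, ∀ m : ↥(E ⊔ L), σ m = (h m : Ω)}
      one_mem' := ⟨1, H.one_mem, fun m => rfl⟩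
      mul_mem' := by
        rintro σ τ ⟨h, hh, h1⟩ ⟨k, hk, k1⟩
        refine ⟨h * k, H.mul_mem hh hk, fun m => ?_⟩
        rw [AlgEquiv.mul_apply, k1, h1]; rfl
      inv_mem' := by
        rintro σ ⟨h, hh, h1⟩
        refine ⟨h⁻¹, H.inv_mem hh, fun m => ?_⟩
        have h2 := h1 (h⁻¹ m)
        have h3 : h (h⁻¹ m) = m := by rw [← AlgEquiv.mul_apply]; simp
        rw [h3] at h2
        rw [← h2, ← AlgEquiv.mul_apply]; simp }
  have hEstab : ∀ a ∈ E.fixingSubgroup, ∀ x ∈ E ⊔ L, a x ∈ E ⊔ L := by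
    intro a ha x hx
    rw [IntermediateField.mem_fixingSubgroup_iff] at ha
    have hle : (E ⊔ L) ≤ (E ⊔ L).comap a.toAlgHom :=
      sup_le (fun z hz => by
          change a z ∈ E ⊔ L
          rw [ha z hz]; exact (le_sup_left : E ≤ E ⊔ L) hz)
        (fun z hz => (le_sup_right : L ≤ E ⊔ L) (hL a z hz))
    exact hle hx
  have hnorm1 : ∀ a ∈ E.fixingSubgroup, ∀ τ ∈ Hl, a * τ * a⁻¹ ∈ Hl := by
    rintro a ha τ ⟨h, hh, h1⟩
    let b : ↥(E ⊔ L) ≃ₐ[K] ↥(E ⊔ L) := AlgEquiv.ofAlgHom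
      ((a.toAlgHom.comp (E ⊔ L).val).codRestrict (E ⊔ L).toSubalgebra
        (fun x => hEstab a ha x x.2))
      (((a⁻¹).toAlgHom.comp (E ⊔ L).val).codRestrict (E ⊔ L).toSubalgebra
        (fun x => hEstab a⁻¹ (inv_mem ha) x x.2))
      (by
        ext x
        change (a * a⁻¹) (x : Ω) = x
        simp)
      (by
        ext x
        change (a⁻¹ * a) (x : Ω) = x
        simp)
    have hb : ∀ m, ((b m : ↥(E ⊔ L)) : Ω) = a m := fun m => rfl
    have hb' : ∀ m, ((b⁻¹ m : ↥(E ⊔ L)) : Ω) = a⁻¹ m := fun m => rfl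
    refine ⟨b * h * b⁻¹, hN.conj_mem h hh b, fun m => ?_⟩
    rw [AlgEquiv.mul_apply, AlgEquiv.mul_apply, AlgEquiv.mul_apply, AlgEquiv.mul_apply,
      hb, ← h1, hb']
  have hnorm : E.fixingSubgroup ≤ Subgroup.normalizer (Hl : Set (Ω ≃ₐ[K] Ω)) := by
    intro a ha
    rw [Subgroup.mem_normalizer_iff]
    intro τ
    refine ⟨hnorm1 a ha τ, fun h => ?_⟩
    have := hnorm1 a⁻¹ (inv_mem ha) _ h
    simpa [mul_assoc] using this
  have hopen : IsOpen ((E.fixingSubgroup ⊔ Hl : Subgroup (Ω ≃ₐ[K] Ω)) : Set (Ω ≃ₐ[K] Ω)) :=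
    Subgroup.isOpen_mono le_sup_left (IntermediateField.fixingSubgroup_isOpen E)
  have hclosed := Subgroup.isClosed_of_isOpen _ hopen
  have hFE : IntermediateField.fixedField (E.fixingSubgroup ⊔ Hl) ≤ E := by
    conv_rhs => rw [← InfiniteGalois.fixedField_fixingSubgroup E]
    intro x hx g
    exact hx ⟨g, (le_sup_left : E.fixingSubgroup ≤ E.fixingSubgroup ⊔ Hl) g.2⟩
  rcases hprim _ hFE with hF | hF
  · right
    refine le_antisymm hHS fun s hs => ?_
    have htop : E.fixingSubgroup ⊔ Hl = ⊤ := by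
      have := InfiniteGalois.fixingSubgroup_fixedField
        (⟨E.fixingSubgroup ⊔ Hl, hclosed⟩ : ClosedSubgroup (Ω ≃ₐ[K] Ω))
      change (IntermediateField.fixedField (E.fixingSubgroup ⊔ Hl)).fixingSubgroup
        = E.fixingSubgroup ⊔ Hl at this
      rw [← this, hF, IntermediateField.fixingSubgroup_bot]
    obtain ⟨σ, hσ⟩ := lift s
    have hmem : σ ∈ ((E.fixingSubgroup ⊔ Hl : Subgroup (Ω ≃ₐ[K] Ω)) : Set (Ω ≃ₐ[K] Ω)) := by
      rw [htop]; trivial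
    rw [Subgroup.coe_mul_of_left_le_normalizer_right _ _ hnorm] at hmem
    obtain ⟨a, ha, τ, ⟨h, hh, hτ⟩, rfl⟩ := Set.mem_mul.1 hmem
    have ha' := (IntermediateField.mem_fixingSubgroup_iff E a).1 ha
    have haL : ∀ x ∈ L, a x = x := by
      intro x hx
      have hxM : x ∈ E ⊔ L := (le_sup_right : L ≤ E ⊔ L) hx
      have e1 := hσ ⟨x, hxM⟩
      have e2 := hτ ⟨x, hxM⟩
      rw [(hS s).1 hs ⟨x, hxM⟩ hx] at e1
      rw [(hS h).1 (hHS hh) ⟨x, hxM⟩ hx] at e2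
      rw [AlgEquiv.mul_apply, e2] at e1
      exact e1
    have hsh : s = h := by
      ext m
      rw [← hσ, AlgEquiv.mul_apply, hτ]
      exact fixM a ha' haL _ (h m).2
    rw [hsh]; exact hh
  · left
    rw [eq_bot_iff]
    intro h hh
    rw [Subgroup.mem_bot]
    obtain ⟨σ, hσ⟩ := lift h
    have hσl : σ ∈ E.fixingSubgroup ⊔ Hl :=
      (le_sup_right : Hl ≤ E.fixingSubgroup ⊔ Hl) ⟨h, hh, hσ⟩
    ext m
    rw [← hσ]
    refine fixM σ (fun x hx => ?_) (fun x hx => ?_) m m.2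
    · rw [← hF] at hx
      exact hx ⟨σ, hσl⟩
    · have hxM : x ∈ E ⊔ L := (le_sup_right : L ≤ E ⊔ L) hx
      have e1 := hσ ⟨x, hxM⟩
      rw [(hS h).1 (hHS hh) ⟨x, hxM⟩ hx] at e1
      exact e1

/-- In the setting of the previous statement (`E` a primitive extension of `K` of degree
`p ^ n`, `M = E ⬝ L_n`), every subgroup of `Gal(M / L_n)` (realised as the subgroup `S` of
`Gal(M / K)` fixing `L_n` pointwise) which is normal in `Gal(M / K)` is either trivial or
all of `Gal(M / L_n)`; i.e. `Gal(M / L_n)` is a simple `Gal(L_n / K)`-module under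
conjugation. -/
theorem stmt_11 (p : ℕ) [hp : Fact p.Prime] (n : ℕ) (hn : 1 ≤ n)
    (Ω : Type) [Field Ω] [Algebra ℚ_[p] Ω] [IsAlgClosure ℚ_[p] Ω]
    (K : IntermediateField ℚ_[p] Ω) [FiniteDimensional ℚ_[p] ↥K]
    (ζ : Ω) (hζ : IsPrimitiveRoot ζ (p ^ n - 1))
    (Kn : IntermediateField ↥K Ω) (hKn : Kn = IntermediateField.adjoin ↥K {ζ})
    (Ln : IntermediateField ↥K Ω)
    (hLn : Ln = Kn ⊔ IntermediateField.adjoin ↥K {x : Ω | x ^ (p ^ n - 1) ∈ Kn})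
    (E : IntermediateField ↥K Ω) (hE : Module.finrank ↥K ↥E = p ^ n)
    (hprim : ∀ F : IntermediateField ↥K Ω, F ≤ E → F = ⊥ ∨ F = E)
    (S : Subgroup (↥(E ⊔ Ln) ≃ₐ[↥K] ↥(E ⊔ Ln)))
    (hS : S = fixingSubgroup (↥(E ⊔ Ln) ≃ₐ[↥K] ↥(E ⊔ Ln)) {x : ↥(E ⊔ Ln) | (x : Ω) ∈ Ln}) :
    ∀ H : Subgroup (↥(E ⊔ Ln) ≃ₐ[↥K] ↥(E ⊔ Ln)), H ≤ S → H.Normal → H = ⊥ ∨ H = S := by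
  intro H hHS hN
  have hpos : 0 < p ^ n - 1 := by
    have : 1 < p ^ n := Nat.one_lt_pow (by omega) hp.out.one_lt
    omega
  have : NeZero (p ^ n - 1) := ⟨hpos.ne'⟩
  have : IsAlgClosed Ω := IsAlgClosure.isAlgClosed ℚ_[p]
  have : Algebra.IsAlgebraic ℚ_[p] Ω := IsAlgClosure.isAlgebraic
  have : CharZero Ω := charZero_of_injective_algebraMap (algebraMap ℚ_[p] Ω).injective
  have : Algebra.IsAlgebraic ↥K Ω := Algebra.IsAlgebraic.tower_top (K := ℚ_[p]) ↥K
  have : IsAlgClosure ↥K Ω := ⟨inferInstance, inferInstance⟩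
  have : Normal ↥K Ω := IsAlgClosure.normal ↥K Ω
  have : IsGalois ↥K Ω := ⟨⟩
  have : FiniteDimensional ↥K ↥E := Module.finite_of_finrank_pos (by
    rw [hE]; exact pow_pos hp.out.pos n)
  have hKs : ∀ σ : Ω ≃ₐ[↥K] Ω, ∀ x ∈ Kn, σ x ∈ Kn := by
    intro σ x hx
    have hle : Kn ≤ Kn.comap σ.toAlgHom := by
      conv_lhs => rw [hKn]
      rw [IntermediateField.adjoin_le_iff, Set.singleton_subset_iff]
      change σ ζ ∈ Kn
      obtain ⟨i, -, hi⟩ := hζ.eq_pow_of_pow_eq_one (ξ := σ ζ) (by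
        rw [← map_pow, hζ.pow_eq_one, map_one])
      rw [← hi, hKn]
      exact pow_mem (IntermediateField.mem_adjoin_simple_self _ ζ) i
    exact hle hx
  have hLs : ∀ σ : Ω ≃ₐ[↥K] Ω, ∀ x ∈ Ln, σ x ∈ Ln := by
    intro σ x hx
    have hle : Ln ≤ Ln.comap σ.toAlgHom := by
      conv_lhs => rw [hLn]
      refine sup_le (fun y hy => ?_) ?_
      · change σ y ∈ Ln
        rw [hLn]
        exact (le_sup_left : Kn ≤ Kn ⊔ _) (hKs σ y hy)
      · rw [IntermediateField.adjoin_le_iff]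
        intro y hy
        change σ y ∈ Ln
        rw [hLn]
        refine (le_sup_right : _ ≤ Kn ⊔ IntermediateField.adjoin ↥K
          {x : Ω | x ^ (p ^ n - 1) ∈ Kn}) (IntermediateField.subset_adjoin _ _ ?_)
        change (σ y) ^ (p ^ n - 1) ∈ Kn
        rw [← map_pow]
        exact hKs σ _ hy
    exact hle hx
  refine aux_main Ln E hLs hprim S (fun s => ?_) H hHS hN
  rw [hS, mem_fixingSubgroup_iff]
  rfl
end
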